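/- arXiv:2212.07195 — 2 statements merged into one kernel-verified Lean document; each statement's English description precedes it below -/
import Mathlib

section
/- Inhomogeneous (retarded) Strichartz estimate in Lorentz spaces (Keel–Tao): let n ≥ 3 and let (q,r) and (q̃,r̃) be admissible pairs, i.e. 2 ≤ q, q̃ ≤ ∞, 2 ≤ r, r̃ ≤ 2n/(n−2), 2/q + n/r = n/2 and 2/q̃ + n/r̃ = n/2. Then there is a constant C such that for all suitable space–time functions F, ‖ ∫₀ᵗ e^{i(t−τ)Δ} F(·, τ) dτ ‖_{L^q_t(ℝ; L^{r,2}_x)} ≤ C ‖F‖_{L^{q̃′}_t(ℝ; L^{r̃′,2}_x)}, where q̃′, r̃′ are the Hölder conjugates of q̃, r̃. -/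
/-! The retarded Strichartz estimates follow from the dispersive decay `|t - s| ^ (-n/2)` and the
conservation of mass. The proof below uses an atomic form of the Keel-Tao argument.

**Regularisation.** The propagator from time `s` to time `t` is replaced by the one with symbol
`e^{-(ε + i(t - s))|ξ|²}`, whose kernel `ker ε` is a bounded function. Pairing two integrable sources
through `ker ε` is an inner product in `L²` of the Gaussian measure `gw` (`form_eq`), so
Cauchy-Schwarz bounds it by their energies `Nt` (`form_le`). The kernel satisfies the dispersive
estimate uniformly in `ε` (`norm_ker_le`), and the energy of one time slice is at most twice its mass
(`Nt_slice_le`). All constants below are independent of `ε`.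

**Atoms.** Write `1 / p = c0 = (n - 2) / (2n)`, so that `L²_t L^{p,2}_x` is the endpoint. An atom of
scale `k` (`IsAtom`) has time slices that behave like functions of constant modulus on sets of measure
`2 ^ k`, with a size `c t` that is measured in `L²_t`. The truncated Duhamel form `Bf` of two atoms
of scales `k` and `l` is split at a time difference `R`. Close times are treated with the energy
estimate (`IsAtom.energy`, `Bf_near`), distant times with dispersion (`Bf_far`). A choice of `R`
between the two critical times `2 ^ (2k/n)` and `2 ^ (2l/n)` gives the decay `2 ^ (-|k - l| / (4n))`
(`Bf_atoms`), and Schur's test sums the scales (`Bf_fam`). Since every bound takes absolute values in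
time, an arbitrary measurable time cut-off of modulus at most one is allowed throughout. The
restriction `0 ≤ τ ≤ t` therefore costs nothing, even when both pairs are endpoints.

**From atoms to norms.** By duality, pairings against atoms control `L²_t L^{p,2}_x`
(`exists_atom`, `dual_endpoint`). The atom is taken on the set where a function exceeds half of its
rearrangement at `2 ^ k`. Pairings against single time slices control `L^∞_t L²_x`
(`dual_slice`). The remaining admissible norms lie between these two by Hölder's inequality
(`mixN_interp`). This proves the estimates for superpositions of atoms (`fam_mixed`) and for the free
evolution (`hom_mixed`). Transposing both yields the inhomogeneous estimates for two arbitrary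
admissible pairs (`inhom_mixed`).

**Conclusion.** The source is restricted to bounded times at which it and its Fourier transform have
bounded `L¹` norms (`trunc`). Then `ε → 0` and the bound on times and norms tends to infinity, with
Fatou's lemma in the mixed Lorentz norms (`mixed_fatou`, `retarded_mixed`). Where the integrals
defining the propagator or the time integral diverge, their value is zero by convention, which can
only decrease the left-hand side. Similarly, the rearrangement `rearr` is compared with `decr`, which
takes the value `∞` where no level set is small enough: always `rearr ≤ decr`, which suffices on the
left, and equality holds for integrable functions, to which the right-hand side is reduced by the
truncation. -/

open MeasureTheory Real FourierTransform
open scoped ENNReal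

noncomputable section

variable {n : ℕ}

/-- The distribution function `|{x : |f x| > λ}|`. -/
def distFn (f : EuclideanSpace ℝ (Fin n) → ℂ) (l : ℝ) : ℝ≥0∞ :=
  volume {x | l < ‖f x‖}

/-- The decreasing rearrangement `f*`. -/
def rearr (f : EuclideanSpace ℝ (Fin n) → ℂ) (t : ℝ) : ℝ :=
  sInf {l : ℝ | 0 < l ∧ distFn f l ≤ ENNReal.ofReal t}

/-- The Lorentz quasinorm `‖f‖_{L^{p,q}}`; the second exponent may be `∞`. -/
def lorentz (p : ℝ) (q : ℝ≥0∞) (f : EuclideanSpace ℝ (Fin n) → ℂ) : ℝ≥0∞ :=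
  if q = ∞ then ⨆ t ∈ Set.Ioi (0:ℝ), ENNReal.ofReal (t ^ (1/p) * rearr f t)
  else (∫⁻ t in Set.Ioi (0:ℝ),
      ENNReal.ofReal (t ^ (1/p) * rearr f t) ^ q.toReal / ENNReal.ofReal t) ^ (1/q.toReal)

/-- The fractional Laplacian `(-Δ)^{s/2}`, the Fourier multiplier with symbol `|ξ|^s`. -/
def fracLap (s : ℝ) (f : EuclideanSpace ℝ (Fin n) → ℂ) : EuclideanSpace ℝ (Fin n) → ℂ :=
  𝓕⁻ (fun ξ => ((‖ξ‖ ^ s : ℝ) : ℂ) * 𝓕 f ξ)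

/-- The Bessel operator `(1-Δ)^{s/2}`, the Fourier multiplier with symbol `(1+|ξ|²)^{s/2}`. -/
def besselOp (s : ℝ) (f : EuclideanSpace ℝ (Fin n) → ℂ) : EuclideanSpace ℝ (Fin n) → ℂ :=
  𝓕⁻ (fun ξ => (((1 + ‖ξ‖ ^ 2) ^ (s/2) : ℝ) : ℂ) * 𝓕 f ξ)

/-- The free Schrödinger propagator `e^{itΔ}`, Fourier multiplier with symbol `e^{-it|ξ|²}`. -/
def schrod (t : ℝ) (f : EuclideanSpace ℝ (Fin n) → ℂ) : EuclideanSpace ℝ (Fin n) → ℂ :=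
  𝓕⁻ (fun ξ => Complex.exp (-Complex.I * t * (‖ξ‖ ^ 2 : ℝ)) * 𝓕 f ξ)

/-- The Riesz kernel `K_α`. -/
def rieszKernel (α : ℝ) (x : EuclideanSpace ℝ (Fin n)) : ℝ :=
  Real.Gamma ((n - α) / 2) /
    (Real.Gamma (α / 2) * Real.pi ^ ((n : ℝ) / 2) * 2 ^ α * ‖x‖ ^ ((n : ℝ) - α))

/-- The Riesz potential `I_α f = K_α ∗ f`. -/
def rieszPot (α : ℝ) (f : EuclideanSpace ℝ (Fin n) → ℂ) (x : EuclideanSpace ℝ (Fin n)) : ℂ :=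
  ∫ y, (rieszKernel α (x - y) : ℂ) * f y

/-- The nonlinearity `F(u) = λ (I_α ∗ |·|^{-b}|u|^p) |x|^{-b} |u|^{p-2} u`. -/
def Fnl (lam α b p : ℝ) (u : EuclideanSpace ℝ (Fin n) → ℂ)
    (x : EuclideanSpace ℝ (Fin n)) : ℂ :=
  lam * rieszPot α (fun y => ((‖y‖ ^ (-b) * ‖u y‖ ^ p : ℝ) : ℂ)) x *
    ((‖x‖ ^ (-b) : ℝ) : ℂ) * ((‖u x‖ ^ (p - 2) : ℝ) : ℂ) * u x

/-- Mixed-norm in time: `‖g‖_{L^q_t(I)}` for an `ℝ≥0∞`-valued `g`. -/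
def timeLp (q : ℝ≥0∞) (I : Set ℝ) (g : ℝ → ℝ≥0∞) : ℝ≥0∞ :=
  if q = ∞ then essSup g (volume.restrict I)
  else (∫⁻ t in I, g t ^ q.toReal) ^ (1/q.toReal)

/-- The `H^s = W^s_{2,2}` norm. -/
def hsNorm (s : ℝ) (f : EuclideanSpace ℝ (Fin n) → ℂ) : ℝ≥0∞ :=
  lorentz 2 2 (besselOp s f)

end

namespace Strich

noncomputable section

open Set Filter Topology

/-- Euclidean space `ℝⁿ`. -/
abbrev Sp (n : ℕ) := EuclideanSpace ℝ (Fin n)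

variable {n : ℕ}

/-! ### Decreasing rearrangements and Lorentz norms -/

/-- The heights `a > 0` at which the distribution function of `f` exceeds `t`: an interval with
left end point `0` whose length is `f*(t)`. -/
def level (f : Sp n → ℂ) (t : ℝ) : Set ℝ := {a | 0 < a ∧ ENNReal.ofReal t < distFn f a}

/-- The decreasing rearrangement with values in `[0, ∞]`. In contrast to `rearr` it takes the
value `∞`, instead of `0`, when no level set of `f` has measure at most `t`. -/
def decr (f : Sp n → ℂ) (t : ℝ) : ℝ≥0∞ := volume (level f t)

/-- The square of the `L^{p,2}` quasinorm, with `c = 1 / p`. -/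
def Lsq (c : ℝ) (f : Sp n → ℂ) : ℝ≥0∞ :=
  ∫⁻ t in Ioi (0 : ℝ), ENNReal.ofReal (t ^ (2 * c - 1)) * decr f t ^ 2

lemma distFn_anti (f : Sp n → ℂ) : Antitone (distFn f) := fun _ _ h =>
  measure_mono fun _ hx => lt_of_le_of_lt h hx

lemma decr_anti (f : Sp n → ℂ) : Antitone (decr f) := fun _ _ h =>
  measure_mono fun _ ha => ⟨ha.1, lt_of_le_of_lt (ENNReal.ofReal_le_ofReal h) ha.2⟩

lemma measurable_decr (f : Sp n → ℂ) : Measurable (decr f) := (decr_anti f).measurable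

lemma rearr_le_decr (f : Sp n → ℂ) (t : ℝ) : ENNReal.ofReal (rearr f t) ≤ decr f t := by
  unfold rearr
  have hsub : Ioo 0 (sInf {l : ℝ | 0 < l ∧ distFn f l ≤ ENNReal.ofReal t}) ⊆ level f t := by
    intro a ha
    refine ⟨ha.1, ?_⟩
    by_contra hcon
    have : sInf {l : ℝ | 0 < l ∧ distFn f l ≤ ENNReal.ofReal t} ≤ a :=
      csInf_le ⟨0, fun l hl => hl.1.le⟩ ⟨ha.1, not_lt.1 hcon⟩
    exact absurd ha.2 (not_lt.2 this)
  calc _ = volume (Ioo 0 (sInf {l : ℝ | 0 < l ∧ distFn f l ≤ ENNReal.ofReal t})) := by simp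
    _ ≤ _ := measure_mono hsub

lemma decr_le_rearr (f : Sp n → ℂ) (t : ℝ) (h : ∃ l > 0, distFn f l ≤ ENNReal.ofReal t) :
    decr f t ≤ ENNReal.ofReal (rearr f t) := by
  unfold rearr
  have hsub : level f t ⊆ Ioc 0 (sInf {l : ℝ | 0 < l ∧ distFn f l ≤ ENNReal.ofReal t}) := by
    intro a ha
    refine ⟨ha.1, ?_⟩
    by_contra hcon
    obtain ⟨l, hl, hla⟩ := exists_lt_of_csInf_lt h (not_le.1 hcon)
    exact absurd ha.2 (not_lt.2 ((distFn_anti f hla.le).trans hl.2))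
  calc decr f t ≤ volume (Ioc 0 (sInf {l : ℝ | 0 < l ∧ distFn f l ≤ ENNReal.ofReal t})) :=
        measure_mono hsub
    _ = _ := by simp

lemma lorentz_eq (p : ℝ) (f : Sp n → ℂ) : lorentz p 2 f =
    (∫⁻ t in Ioi (0 : ℝ), ENNReal.ofReal (t ^ (2 * (1 / p) - 1)) *
      ENNReal.ofReal (rearr f t) ^ 2) ^ (1 / 2 : ℝ) := by
  unfold lorentz
  rw [if_neg (by simp)]
  simp only [ENNReal.toReal_ofNat]
  congr 1
  refine setLIntegral_congr_fun measurableSet_Ioi fun t ht => ?_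
  have ht : 0 < t := ht
  have h1 : t ^ (2 * (1 / p) - 1) = (t ^ (1 / p)) ^ 2 / t := by
    rw [Real.rpow_sub_one ht.ne', mul_comm, Real.rpow_mul ht.le]; norm_num
  rw [h1, ENNReal.ofReal_mul (by positivity), ENNReal.ofReal_div_of_pos ht,
    ENNReal.mul_rpow_of_nonneg _ _ (by norm_num), ENNReal.ofReal_pow (by positivity)]
  simp only [ENNReal.rpow_ofNat]
  simp only [div_eq_mul_inv]
  ring

/-- This direction holds for every `f`: where no level set is small enough, `rearr` is `0` by
convention, while `decr` is `∞`. -/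
lemma lorentz_le (p : ℝ) (f : Sp n → ℂ) : lorentz p 2 f ≤ Lsq (1 / p) f ^ (1 / 2 : ℝ) := by
  rw [lorentz_eq]
  refine ENNReal.rpow_le_rpow (lintegral_mono fun t => ?_) (by norm_num)
  gcongr
  exact rearr_le_decr f t

/-- For integrable functions every level set has finite measure, so `rearr` is the true
rearrangement. -/
lemma le_lorentz (p : ℝ) (f : Sp n → ℂ) (hf : Integrable f) :
    Lsq (1 / p) f ^ (1 / 2 : ℝ) ≤ lorentz p 2 f := by
  rw [lorentz_eq]
  refine ENNReal.rpow_le_rpow (setLIntegral_mono' measurableSet_Ioi fun t ht => ?_) (by norm_num)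
  have ht : 0 < t := ht
  gcongr
  refine decr_le_rearr f t ?_
  -- Chebyshev's inequality at the height `‖f‖₁ / t`
  set I : ℝ := (∫⁻ x, ‖f x‖ₑ).toReal with hI
  have hfin : (∫⁻ x, ‖f x‖ₑ) ≠ ∞ := hf.2.ne
  have hpos : 0 < (I + 1) / t := by positivity
  refine ⟨(I + 1) / t, hpos, ?_⟩
  have hm := mul_meas_ge_le_lintegral₀ (μ := volume) hf.1.enorm (ENNReal.ofReal ((I + 1) / t))
  have h1 : distFn f ((I + 1) / t) ≤ volume {x | ENNReal.ofReal ((I + 1) / t) ≤ ‖f x‖ₑ} := by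
    refine measure_mono fun x hx => ?_
    have hx : (I + 1) / t < ‖f x‖ := hx
    rw [mem_ofPred_eq, ← ofReal_norm]
    exact ENNReal.ofReal_le_ofReal hx.le
  have h2 : ENNReal.ofReal ((I + 1) / t) * distFn f ((I + 1) / t) ≤ ENNReal.ofReal I := by
    refine (mul_le_mul_right h1 _).trans (hm.trans ?_)
    rw [hI, ENNReal.ofReal_toReal hfin]
  have h3 : distFn f ((I + 1) / t) ≤ ENNReal.ofReal I / ENNReal.ofReal ((I + 1) / t) := by
    rw [ENNReal.le_div_iff_mul_le (Or.inl (by simpa using hpos)) (Or.inl (by simp)), mul_comm]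
    exact h2
  refine h3.trans ?_
  rw [← ENNReal.ofReal_div_of_pos hpos]
  refine ENNReal.ofReal_le_ofReal ?_
  have hI0 : 0 ≤ I := ENNReal.toReal_nonneg
  rw [div_div_eq_mul_div, div_le_iff₀ (by positivity)]
  nlinarith

lemma Lsq_zero (c : ℝ) : Lsq c (fun _ : Sp n => 0) = 0 := by
  have : ∀ t, decr (fun _ : Sp n => 0) t = 0 := by
    intro t
    have : level (fun _ : Sp n => 0) t = ∅ := by
      ext a
      simp only [level, distFn, mem_ofPred_eq, norm_zero, mem_empty_iff_false, iff_false, not_and,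
        not_lt]
      intro ha
      simp [not_lt.2 ha.le]
    simp [decr, this]
  simp [Lsq, this]

lemma volume_pos_lt (m : ℝ≥0∞) : volume {t : ℝ | 0 < t ∧ ENNReal.ofReal t < m} = m := by
  rcases eq_or_ne m ∞ with rfl | hm
  · have : {t : ℝ | 0 < t ∧ ENNReal.ofReal t < ∞} = Ioi 0 := by ext; simp
    rw [this, Real.volume_Ioi]
  · have : {t : ℝ | 0 < t ∧ ENNReal.ofReal t < m} = Ioo 0 m.toReal := by
      ext t
      simp only [mem_ofPred_eq, mem_Ioo]
      refine and_congr_right fun ht => ?_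
      rw [ENNReal.ofReal_lt_iff_lt_toReal ht.le hm]
    rw [this, Real.volume_Ioo, sub_zero, ENNReal.ofReal_toReal hm]

lemma volume_pos_lt_norm (z : ℂ) : volume {a : ℝ | 0 < a ∧ a < ‖z‖} = ‖z‖ₑ := by
  have : {a : ℝ | 0 < a ∧ a < ‖z‖} = Ioo 0 ‖z‖ := rfl
  rw [this, Real.volume_Ioo, sub_zero, ofReal_norm]

lemma measurable_distFn (f : Sp n → ℂ) : Measurable (distFn f) := (distFn_anti f).measurable

/-- Layer-cake formula for `∫ f* g*`. -/
lemma lintegral_decr_mul (f g : Sp n → ℂ) :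
    ∫⁻ t in Ioi (0 : ℝ), decr f t * decr g t =
      ∫⁻ ab in (Ioi (0 : ℝ) ×ˢ Ioi (0 : ℝ)), min (distFn f ab.1) (distFn g ab.2) := by
  set W : Set (ℝ × ℝ × ℝ) := {p | 0 < p.1 ∧ (0 < p.2.1 ∧ ENNReal.ofReal p.1 < distFn f p.2.1) ∧
    (0 < p.2.2 ∧ ENNReal.ofReal p.1 < distFn g p.2.2)} with hW
  have mf := measurable_distFn f
  have mg := measurable_distFn g
  have hWm : MeasurableSet W := by measurability
  have h1 : (volume.prod volume) W = ∫⁻ t in Ioi (0 : ℝ), decr f t * decr g t := by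
    rw [Measure.prod_apply hWm, ← lintegral_indicator measurableSet_Ioi]
    refine lintegral_congr fun t => ?_
    by_cases ht : t ∈ Ioi (0 : ℝ)
    · rw [indicator_of_mem ht]
      have : Prod.mk t ⁻¹' W = level f t ×ˢ level g t := by
        ext ⟨a, b⟩
        simp only [hW, level, mem_preimage, mem_ofPred_eq, mem_prod]
        exact ⟨fun h => h.2, fun h => ⟨ht, h⟩⟩
      rw [this, Measure.volume_eq_prod, Measure.prod_prod]; rfl
    · rw [indicator_of_notMem ht]
      have : Prod.mk t ⁻¹' W = ∅ := by
        ext ⟨a, b⟩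
        simp only [hW, mem_preimage, mem_ofPred_eq, mem_empty_iff_false, iff_false]
        exact fun h => ht h.1
      simp [this]
  rw [← h1, Measure.prod_apply_symm hWm, ← lintegral_indicator
    (measurableSet_Ioi.prod measurableSet_Ioi)]
  refine lintegral_congr fun ab => ?_
  by_cases h : ab ∈ Ioi (0 : ℝ) ×ˢ Ioi (0 : ℝ)
  · rw [indicator_of_mem h]
    conv_rhs => rw [← volume_pos_lt (min (distFn f ab.1) (distFn g ab.2))]
    congr 1
    ext t
    simp only [hW, mem_preimage, mem_ofPred_eq, lt_min_iff]
    have h1 : 0 < ab.1 := h.1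
    have h2 : 0 < ab.2 := h.2
    tauto
  · rw [indicator_of_notMem h]
    convert! measure_empty (μ := (volume : Measure ℝ))
    ext t
    simp only [hW, mem_preimage, mem_ofPred_eq, mem_empty_iff_false, iff_false]
    exact fun hh => h ⟨hh.2.1.1, hh.2.2.1⟩

lemma lintegral_enorm_mul (f g : Sp n → ℂ) (hf : Measurable f) (hg : Measurable g) :
    ∫⁻ x, ‖f x‖ₑ * ‖g x‖ₑ =
      ∫⁻ ab in (Ioi (0 : ℝ) ×ˢ Ioi (0 : ℝ)), volume {x | ab.1 < ‖f x‖ ∧ ab.2 < ‖g x‖} := by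
  set W : Set (Sp n × ℝ × ℝ) := {p | (0 < p.2.1 ∧ p.2.1 < ‖f p.1‖) ∧
    (0 < p.2.2 ∧ p.2.2 < ‖g p.1‖)} with hW
  have hWm : MeasurableSet W := by measurability
  have h1 : (volume.prod volume) W = ∫⁻ x, ‖f x‖ₑ * ‖g x‖ₑ := by
    rw [Measure.prod_apply hWm]
    refine lintegral_congr fun x => ?_
    rw [← volume_pos_lt_norm (f x), ← volume_pos_lt_norm (g x), Measure.volume_eq_prod,
      ← Measure.prod_prod]
    rfl
  rw [← h1, Measure.prod_apply_symm hWm, ← lintegral_indicator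
    (measurableSet_Ioi.prod measurableSet_Ioi)]
  refine lintegral_congr fun ab => ?_
  by_cases h : ab ∈ Ioi (0 : ℝ) ×ˢ Ioi (0 : ℝ)
  · rw [indicator_of_mem h]
    congr 1
    ext x
    simp only [hW, mem_preimage, mem_ofPred_eq]
    have h1 : 0 < ab.1 := h.1
    have h2 : 0 < ab.2 := h.2
    tauto
  · rw [indicator_of_notMem h]
    convert! measure_empty (μ := (volume : Measure (Sp n)))
    ext t
    simp only [hW, mem_preimage, mem_ofPred_eq, mem_empty_iff_false, iff_false]
    exact fun hh => h ⟨hh.1.1, hh.2.1⟩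

/-- The Hardy–Littlewood rearrangement inequality. -/
lemma hardy_littlewood (f g : Sp n → ℂ) (hf : Measurable f) (hg : Measurable g) :
    ∫⁻ x, ‖f x‖ₑ * ‖g x‖ₑ ≤ ∫⁻ t in Ioi (0 : ℝ), decr f t * decr g t := by
  rw [lintegral_enorm_mul f g hf hg, lintegral_decr_mul]
  refine lintegral_mono fun ab => le_min ?_ ?_
  · exact measure_mono fun x hx => hx.1
  · exact measure_mono fun x hx => hx.2

/-- `L^{2,2} = L²`, isometrically. -/
lemma Lsq_half (f : Sp n → ℂ) (hf : Measurable f) : Lsq (1 / 2) f = ∫⁻ x, ‖f x‖ₑ ^ 2 := by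
  have h1 : Lsq (1 / 2) f = ∫⁻ t in Ioi (0 : ℝ), decr f t * decr f t := by
    refine lintegral_congr fun t => ?_
    norm_num [sq]
  simp_rw [h1, sq]
  rw [lintegral_enorm_mul f f hf hf, lintegral_decr_mul]
  refine lintegral_congr fun ab => ?_
  -- the superlevel sets of a single function are nested
  rcases le_total ab.1 ab.2 with h | h
  · rw [min_eq_right (distFn_anti f h)]
    refine congrArg volume (Set.ext fun x => ?_)
    simp only [mem_ofPred_eq]
    exact ⟨fun hx => ⟨lt_of_le_of_lt h hx, hx⟩, fun hx => hx.2⟩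
  · rw [min_eq_left (distFn_anti f h)]
    refine congrArg volume (Set.ext fun x => ?_)
    simp only [mem_ofPred_eq]
    exact ⟨fun hx => ⟨hx, lt_of_le_of_lt h hx⟩, fun hx => hx.1⟩

/-- Hölder's inequality for the dual pair `L^{p,2}`, `L^{p',2}`. -/
lemma lorentz_holder (c : ℝ) (f g : Sp n → ℂ) (hf : Measurable f) (hg : Measurable g) :
    ∫⁻ x, ‖f x‖ₑ * ‖g x‖ₑ ≤ Lsq c f ^ (1 / 2 : ℝ) * Lsq (1 - c) g ^ (1 / 2 : ℝ) := by
  refine (hardy_littlewood f g hf hg).trans ?_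
  have key : ∫⁻ t in Ioi (0 : ℝ), decr f t * decr g t = ∫⁻ t in Ioi (0 : ℝ),
      ((fun t : ℝ => ENNReal.ofReal (t ^ (c - 1 / 2)) * decr f t) *
        (fun t : ℝ => ENNReal.ofReal (t ^ (1 / 2 - c)) * decr g t)) t := by
    refine setLIntegral_congr_fun measurableSet_Ioi fun t ht => ?_
    have ht : 0 < t := ht
    have : ENNReal.ofReal (t ^ (c - 1 / 2)) * ENNReal.ofReal (t ^ (1 / 2 - c)) = 1 := by
      rw [← ENNReal.ofReal_mul (by positivity), ← Real.rpow_add ht]; simp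
    simp only [Pi.mul_apply]
    rw [mul_mul_mul_comm, this, one_mul]
  rw [key]
  have mf := measurable_decr f
  have mg := measurable_decr g
  refine (ENNReal.lintegral_mul_le_Lp_mul_Lq _ Real.HolderConjugate.two_two
    (by fun_prop) (by fun_prop)).trans (le_of_eq ?_)
  congr 2
  · refine setLIntegral_congr_fun measurableSet_Ioi fun t ht => ?_
    have ht : 0 < t := ht
    simp only [ENNReal.rpow_ofNat, mul_pow]
    rw [← ENNReal.ofReal_pow (by positivity), ← Real.rpow_natCast, ← Real.rpow_mul ht.le]
    congr 3; push_cast; ring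
  · refine setLIntegral_congr_fun measurableSet_Ioi fun t ht => ?_
    have ht : 0 < t := ht
    simp only [ENNReal.rpow_ofNat, mul_pow]
    rw [← ENNReal.ofReal_pow (by positivity), ← Real.rpow_natCast, ← Real.rpow_mul ht.le]
    congr 3; push_cast; ring

/-- Log-convexity of the Lorentz norms in the first exponent. -/
lemma Lsq_interp (c θ : ℝ) (h0 : 0 ≤ θ) (h1 : θ ≤ 1) (f : Sp n → ℂ) :
    Lsq (θ * c + (1 - θ) * (1 / 2)) f ≤ Lsq c f ^ θ * Lsq (1 / 2) f ^ (1 - θ) := by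
  have mf := measurable_decr f
  unfold Lsq
  refine le_trans (le_of_eq ?_) (ENNReal.lintegral_mul_norm_pow_le (p := θ) (q := 1 - θ)
    (f := fun t : ℝ => ENNReal.ofReal (t ^ (2 * c - 1)) * decr f t ^ 2)
    (g := fun t : ℝ => ENNReal.ofReal (t ^ (2 * (1 / 2 : ℝ) - 1)) * decr f t ^ 2)
    (by fun_prop) (by fun_prop) h0 (by linarith) (by ring))
  refine setLIntegral_congr_fun measurableSet_Ioi fun t ht => ?_
  have ht : 0 < t := ht
  rw [ENNReal.mul_rpow_of_nonneg _ _ h0, ENNReal.mul_rpow_of_nonneg _ _ (by linarith),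
    mul_mul_mul_comm, ← ENNReal.rpow_add_of_nonneg _ _ h0 (by linarith),
    add_sub_cancel, ENNReal.rpow_one, ENNReal.ofReal_rpow_of_nonneg (by positivity) h0,
    ENNReal.ofReal_rpow_of_nonneg (by positivity) (by linarith),
    ← ENNReal.ofReal_mul (by positivity), ← Real.rpow_mul ht.le, ← Real.rpow_mul ht.le,
    ← Real.rpow_add ht]
  congr 3; ring

/-- Fatou's lemma for sets. -/
lemma measure_le_liminf {X : Type*} [MeasurableSpace X] (μ : Measure X) (s : Set X)
    (sN : ℕ → Set X) (hN : ∀ N, MeasurableSet (sN N)) (h : ∀ x ∈ s, ∀ᶠ N in atTop, x ∈ sN N) :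
    μ s ≤ liminf (fun N => μ (sN N)) atTop := by
  have e : ∀ N, μ (sN N) = ∫⁻ x, (sN N).indicator 1 x ∂μ := fun N =>
    (lintegral_indicator_one (hN N)).symm
  simp_rw [e]
  refine le_trans ?_ (lintegral_liminf_le fun N => measurable_one.indicator (hN N))
  have hm : Measurable fun x => liminf (fun N => (sN N).indicator (1 : X → ℝ≥0∞) x) atTop :=
    Measurable.liminf fun N => measurable_one.indicator (hN N)
  have hs : s ⊆ {x | 1 ≤ liminf (fun N => (sN N).indicator (1 : X → ℝ≥0∞) x) atTop} := by
    intro x hx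
    rw [mem_ofPred_eq]
    refine le_liminf_of_le (by isBoundedDefault) ?_
    filter_upwards [h x hx] with N hxN
    simp [hxN]
  calc μ s ≤ 1 * μ {x | 1 ≤ liminf (fun N => (sN N).indicator (1 : X → ℝ≥0∞) x) atTop} := by
        rw [one_mul]; exact measure_mono hs
    _ ≤ _ := mul_meas_ge_le_lintegral hm 1

/-- Lower semicontinuity of the Lorentz norms under pointwise convergence. The hypothesis says
`‖f x‖ ≤ liminf ‖f_N x‖` for every `x`. -/
lemma Lsq_fatou (c : ℝ) (f : Sp n → ℂ) (fN : ℕ → Sp n → ℂ) (hN : ∀ N, Measurable (fN N))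
    (h : ∀ x, ∀ a, 0 < a → a < ‖f x‖ → ∀ᶠ N in atTop, a < ‖fN N x‖) :
    Lsq c f ≤ liminf (fun N => Lsq c (fN N)) atTop := by
  have hd : ∀ a, 0 < a → distFn f a ≤ liminf (fun N => distFn (fN N) a) atTop := fun a ha =>
    measure_le_liminf _ _ _ (fun N => measurableSet_lt measurable_const (hN N).norm)
      fun x hx => h x a ha hx
  have hr : ∀ t, decr f t ≤ liminf (fun N => decr (fN N) t) atTop := fun t => by
    refine measure_le_liminf _ _ _ (fun N => ?_) fun a ha => ?_
    · have := measurable_distFn (fN N)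
      unfold level
      measurability
    · have := eventually_lt_of_lt_liminf (ha.2.trans_le (hd a ha.1))
      filter_upwards [this] with N hh
      exact ⟨ha.1, hh⟩
  have hm := fun N => measurable_decr (fN N)
  refine le_trans (lintegral_mono fun t => ?_) (lintegral_liminf_le fun N => by fun_prop)
  have hmono : Monotone fun y : ℝ≥0∞ => ENNReal.ofReal (t ^ (2 * c - 1)) * y ^ 2 :=
    fun a b hab => by dsimp only; gcongr
  have hcont : Continuous fun y : ℝ≥0∞ => ENNReal.ofReal (t ^ (2 * c - 1)) * y ^ 2 :=
    (ENNReal.continuous_const_mul ENNReal.ofReal_ne_top).comp (ENNReal.continuous_pow 2)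
  refine (hmono (hr t)).trans (le_of_eq ?_)
  exact hmono.map_liminf_of_continuousAt _ hcont.continuousAt

lemma measurableSet_slab {u : ℝ → Sp n → ℂ} (hu : Measurable (Function.uncurry u)) :
    MeasurableSet {p : (ℝ × ℝ) × Sp n | p.1.2 < ‖u p.1.1 p.2‖} := by
  have : Measurable fun p : (ℝ × ℝ) × Sp n => u p.1.1 p.2 :=
    hu.comp (measurable_fst.fst.prodMk measurable_snd)
  exact measurableSet_lt (by fun_prop) this.norm

lemma measurable_distFn_time {u : ℝ → Sp n → ℂ} (hu : Measurable (Function.uncurry u)) :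
    Measurable fun p : ℝ × ℝ => distFn (u p.1) p.2 :=
  measurable_measure_prodMk_left (measurableSet_slab hu)

lemma measurable_decr_time {u : ℝ → Sp n → ℂ} (hu : Measurable (Function.uncurry u)) :
    Measurable fun p : ℝ × ℝ => decr (u p.1) p.2 := by
  have hm : Measurable fun q : (ℝ × ℝ) × ℝ => distFn (u q.1.1) q.2 :=
    (measurable_distFn_time hu).comp (measurable_fst.fst.prodMk measurable_snd)
  have : MeasurableSet {q : (ℝ × ℝ) × ℝ | 0 < q.2 ∧
      ENNReal.ofReal q.1.2 < distFn (u q.1.1) q.2} := by measurability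
  exact measurable_measure_prodMk_left this

lemma measurable_Lsq {u : ℝ → Sp n → ℂ} (hu : Measurable (Function.uncurry u)) (c : ℝ) :
    Measurable fun t => Lsq c (u t) := by
  have hd := measurable_decr_time hu
  have : Measurable fun p : ℝ × ℝ => ENNReal.ofReal (p.2 ^ (2 * c - 1)) * decr (u p.1) p.2 ^ 2 := by
    fun_prop
  exact this.lintegral_prod_right'

/-- Dyadic discretisation of the Lorentz norm, for `p ≥ 2`. -/
lemma Lsq_le_tsum (c : ℝ) (hc : 2 * c ≤ 1) (f : Sp n → ℂ) :
    Lsq c f ≤ ∑' k : ℤ, ENNReal.ofReal ((2 : ℝ) ^ (2 * c * k)) * decr f ((2 : ℝ) ^ k) ^ 2 := by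
  have hcov : Ioi (0 : ℝ) ⊆ ⋃ k : ℤ, Ico ((2 : ℝ) ^ k) ((2 : ℝ) ^ (k + 1)) := fun t ht =>
    mem_iUnion.2 (exists_mem_Ico_zpow ht one_lt_two)
  refine (lintegral_mono_set hcov).trans ((lintegral_iUnion_le _ _).trans ?_)
  refine ENNReal.tsum_le_tsum fun k => ?_
  have h2 : (0 : ℝ) < 2 ^ k := by positivity
  have e : (2 : ℝ) ^ (2 * c * k) = ((2 : ℝ) ^ k) ^ (2 * c - 1) * 2 ^ k := by
    rw [← Real.rpow_intCast, ← Real.rpow_mul (by norm_num), ← Real.rpow_add (by norm_num)]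
    congr 1; ring
  calc ∫⁻ t in Ico ((2 : ℝ) ^ k) ((2 : ℝ) ^ (k + 1)),
        ENNReal.ofReal (t ^ (2 * c - 1)) * decr f t ^ 2
      ≤ ∫⁻ _ in Ico ((2 : ℝ) ^ k) ((2 : ℝ) ^ (k + 1)),
        ENNReal.ofReal (((2 : ℝ) ^ k) ^ (2 * c - 1)) * decr f ((2 : ℝ) ^ k) ^ 2 := by
        refine setLIntegral_mono' measurableSet_Ico fun t ht => ?_
        gcongr ?_ * ?_ ^ 2
        · exact ENNReal.ofReal_le_ofReal
            (Real.rpow_le_rpow_of_nonpos h2 ht.1 (by linarith))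
        · exact decr_anti f ht.1
    _ = _ := by
        rw [setLIntegral_const, Real.volume_Ico, e, ENNReal.ofReal_mul (by positivity),
          zpow_add_one₀ (by norm_num)]
        rw [show (2 : ℝ) ^ k * 2 - 2 ^ k = 2 ^ k by ring]
        ring

end

end Strich

namespace Strich

noncomputable section

open Set Filter Topology
open scoped ComplexConjugate

set_option linter.unusedSectionVars false

/-! ### Positive definite forms given by oscillating exponentials -/

section Gram

variable {Ξ X X₁ X₂ : Type*} [MeasurableSpace Ξ] [MeasurableSpace X] [MeasurableSpace X₁]
  [MeasurableSpace X₂]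
  {ν : Measure Ξ} [IsFiniteMeasure ν] {μ : Measure X} [SFinite μ] {μ₁ : Measure X₁} [SFinite μ₁]
  {μ₂ : Measure X₂} [SFinite μ₂]

lemma gram_inner {Ψ : Ξ → X → ℂ} {h : X → ℝ} (m : Measurable (Function.uncurry Ψ))
    (b : ∀ ξ x, ‖Ψ ξ x‖ ≤ h x) (i : Integrable h μ) {φ : Ξ → ℂ} (mφ : Measurable φ)
    (C : ℝ) (bφ : ∀ ξ, ‖φ ξ‖ ≤ C) :
    ∫ x, ∫ ξ, Ψ ξ x * φ ξ ∂ν ∂μ = ∫ ξ, (∫ x, Ψ ξ x ∂μ) * φ ξ ∂ν := by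
  rw [integral_integral_swap]
  · simp_rw [integral_mul_const]
  · have hi : Integrable (fun z : X × Ξ => h z.1 * C) (μ.prod ν) :=
      i.mul_prod (integrable_const C)
    refine hi.mono' ?_ (Eventually.of_forall fun z => ?_)
    · have m' : Measurable fun z : X × Ξ => Ψ z.2 z.1 := m.comp measurable_swap
      exact (m'.mul (mφ.comp measurable_snd)).aestronglyMeasurable
    · rw [Function.uncurry, norm_mul]
      exact mul_le_mul (b _ _) (bφ _) (norm_nonneg _) ((norm_nonneg _).trans (b z.2 z.1))

lemma measurable_integral_left {Ψ : Ξ → X → ℂ} (m : Measurable (Function.uncurry Ψ)) :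
    Measurable fun ξ => ∫ x, Ψ ξ x ∂μ :=
  (StronglyMeasurable.integral_prod_right' (f := Function.uncurry Ψ)
    m.stronglyMeasurable).measurable

lemma norm_integral_le_of_bound {Ψ : Ξ → X → ℂ} {h : X → ℝ}
    (b : ∀ ξ x, ‖Ψ ξ x‖ ≤ h x) (i : Integrable h μ) (ξ : Ξ) :
    ‖∫ x, Ψ ξ x ∂μ‖ ≤ ∫ x, h x ∂μ :=
  norm_integral_le_of_norm_le i (Eventually.of_forall fun x => b ξ x)

/-- Fubini: the form with kernel `∫ Ψ₁(ξ,x) conj Ψ₂(ξ,y) dν(ξ)` is an `L²(ν)` inner product. -/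
lemma gram {Ψ₁ : Ξ → X₁ → ℂ} {h₁ : X₁ → ℝ} (m₁ : Measurable (Function.uncurry Ψ₁))
    (b₁ : ∀ ξ x, ‖Ψ₁ ξ x‖ ≤ h₁ x) (i₁ : Integrable h₁ μ₁)
    {Ψ₂ : Ξ → X₂ → ℂ} {h₂ : X₂ → ℝ} (m₂ : Measurable (Function.uncurry Ψ₂))
    (b₂ : ∀ ξ x, ‖Ψ₂ ξ x‖ ≤ h₂ x) (i₂ : Integrable h₂ μ₂) :
    ∫ y, ∫ x, ∫ ξ, Ψ₁ ξ x * conj (Ψ₂ ξ y) ∂ν ∂μ₁ ∂μ₂ =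
      ∫ ξ, (∫ x, Ψ₁ ξ x ∂μ₁) * conj (∫ y, Ψ₂ ξ y ∂μ₂) ∂ν := by
  have e1 : ∀ y, ∫ x, ∫ ξ, Ψ₁ ξ x * conj (Ψ₂ ξ y) ∂ν ∂μ₁ =
      ∫ ξ, conj (Ψ₂ ξ y) * (∫ x, Ψ₁ ξ x ∂μ₁) ∂ν := fun y => by
    rw [gram_inner m₁ b₁ i₁ (φ := fun ξ => conj (Ψ₂ ξ y)) (by
      have : Measurable fun ξ => Ψ₂ ξ y := m₂.comp measurable_prodMk_right
      exact Complex.continuous_conj.measurable.comp this) (h₂ y)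
      (fun ξ => by simpa using b₂ ξ y)]
    simp_rw [mul_comm]
  simp_rw [e1]
  rw [gram_inner (Ψ := fun ξ y => conj (Ψ₂ ξ y)) (h := h₂)
    (Complex.continuous_conj.measurable.comp m₂) (fun ξ y => by simpa using b₂ ξ y) i₂
    (measurable_integral_left m₁) (∫ x, h₁ x ∂μ₁) (norm_integral_le_of_bound b₁ i₁)]
  simp_rw [integral_conj, mul_comm]

lemma enorm_integral_mul_conj_le {V₁ V₂ : Ξ → ℂ} (m₁ : Measurable V₁) (m₂ : Measurable V₂) :
    ‖∫ ξ, V₁ ξ * conj (V₂ ξ) ∂ν‖ₑ ≤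
      (∫⁻ ξ, ‖V₁ ξ‖ₑ ^ 2 ∂ν) ^ (1 / 2 : ℝ) * (∫⁻ ξ, ‖V₂ ξ‖ₑ ^ 2 ∂ν) ^ (1 / 2 : ℝ) := by
  refine (enorm_integral_le_lintegral_enorm _).trans ?_
  have := ENNReal.lintegral_mul_le_Lp_mul_Lq ν Real.HolderConjugate.two_two
    (f := fun ξ => ‖V₁ ξ‖ₑ) (g := fun ξ => ‖V₂ ξ‖ₑ) (by fun_prop) (by fun_prop)
  simp only [ENNReal.rpow_ofNat, Pi.mul_apply] at this
  refine le_trans (le_of_eq (lintegral_congr fun ξ => ?_)) this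
  rw [enorm_mul]
  congr 1
  simp [enorm_eq_nnnorm]

lemma lintegral_enorm_sq_eq {V : Ξ → ℂ} (m : Measurable V) (C : ℝ) (b : ∀ ξ, ‖V ξ‖ ≤ C) :
    ∫⁻ ξ, ‖V ξ‖ₑ ^ 2 ∂ν = ‖∫ ξ, V ξ * conj (V ξ) ∂ν‖ₑ := by
  have e : ∀ ξ, V ξ * conj (V ξ) = ((‖V ξ‖ ^ 2 : ℝ) : ℂ) := fun ξ => by
    rw [Complex.mul_conj, Complex.normSq_eq_norm_sq]
  simp_rw [e]
  have i : Integrable (fun ξ => ‖V ξ‖ ^ 2) ν := by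
    refine (integrable_const (C ^ 2)).mono' (by fun_prop) (Eventually.of_forall fun ξ => ?_)
    rw [Real.norm_of_nonneg (by positivity)]
    have := b ξ
    gcongr
  have h0 : 0 ≤ ∫ ξ, ‖V ξ‖ ^ 2 ∂ν := integral_nonneg fun ξ => by positivity
  rw [integral_complex_ofReal, ← ofReal_norm, Complex.norm_real, Real.norm_of_nonneg h0,
    ofReal_integral_eq_lintegral_ofReal i (Eventually.of_forall fun ξ => by positivity)]
  refine lintegral_congr fun ξ => ?_
  rw [← ofReal_norm, ENNReal.ofReal_pow (norm_nonneg _)]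

end Gram

/-! ### The regularised Schrödinger kernel -/

variable {n : ℕ}

/-- The Gaussian frequency cut-off `e^{-ε|ξ|²} dξ`. -/
def gw (n : ℕ) (ε : ℝ) : Measure (Sp n) :=
  volume.withDensity fun ξ => ENNReal.ofReal (rexp (-ε * ‖ξ‖ ^ 2))

/-- The space-time exponential `exp(i(s|ξ|² - 2π⟨y,ξ⟩))`, at the point `p = (s, y)`. -/
def osc (ξ : Sp n) (p : ℝ × Sp n) : ℂ :=
  Complex.exp (((p.1 * ‖ξ‖ ^ 2 - 2 * π * inner ℝ p.2 ξ : ℝ) : ℂ) * Complex.I)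

/-- The kernel of `e^{(ε + i(t - s)) Δ}` (with symbol `e^{-(ε + i(t - s))|ξ|²}`) between the
space-time points `p = (s, y)` and `q = (t, x)`. -/
def ker (ε : ℝ) (p q : ℝ × Sp n) : ℂ := ∫ ξ, osc ξ p * conj (osc ξ q) ∂(gw n ε)

lemma norm_osc (ξ : Sp n) (p : ℝ × Sp n) : ‖osc ξ p‖ = 1 := Complex.norm_exp_ofReal_mul_I _

lemma continuous_osc : Continuous fun z : Sp n × (ℝ × Sp n) => osc z.1 z.2 := by
  unfold osc
  fun_prop

lemma measurable_osc : Measurable fun z : Sp n × (ℝ × Sp n) => osc z.1 z.2 :=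
  continuous_osc.measurable

lemma integral_gw (ε : ℝ) (f : Sp n → ℂ) :
    ∫ ξ, f ξ ∂(gw n ε) = ∫ ξ, (rexp (-ε * ‖ξ‖ ^ 2) : ℂ) * f ξ := by
  unfold gw
  rw [integral_withDensity_eq_integral_toReal_smul (by fun_prop) (by simp)]
  refine integral_congr_ae (Eventually.of_forall fun ξ => ?_)
  simp only [ENNReal.toReal_ofReal (Real.exp_pos _).le, Complex.real_smul]

lemma isFiniteMeasure_gw {ε : ℝ} (hε : 0 < ε) : IsFiniteMeasure (gw n ε) := by
  refine isFiniteMeasure_withDensity_ofReal ?_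
  have := (GaussianFourier.integrable_cexp_neg_mul_sq_norm_add (V := Sp n) (b := (ε : ℂ))
    (by simpa using hε) 0 0).norm
  refine (this.congr (Eventually.of_forall fun ξ => ?_)).2
  simp only [Complex.norm_exp]
  congr 1
  rw [zero_mul, add_zero, ← Complex.ofReal_neg, Complex.re_ofReal_mul, ← Complex.ofReal_pow,
    Complex.ofReal_re]

lemma ker_eq {ε : ℝ} (hε : 0 < ε) (p q : ℝ × Sp n) :
    ker ε p q = (π / (ε + (q.1 - p.1 : ℝ) * Complex.I)) ^ (((n : ℝ) / 2 : ℝ) : ℂ) *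
      Complex.exp (-(π ^ 2 * ‖q.2 - p.2‖ ^ 2) / (ε + (q.1 - p.1 : ℝ) * Complex.I)) := by
  have hb : 0 < (ε + (q.1 - p.1 : ℝ) * Complex.I : ℂ).re := by simpa using hε
  have := GaussianFourier.integral_cexp_neg_mul_sq_norm_add hb (2 * π * Complex.I) (q.2 - p.2)
  unfold ker
  rw [integral_gw]
  convert! this using 1
  · refine integral_congr_ae (Eventually.of_forall fun ξ => ?_)
    simp only [osc]
    rw [← Complex.exp_conj, ← Complex.exp_add, Complex.ofReal_exp, ← Complex.exp_add]
    congr 1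
    simp only [map_mul, Complex.conj_ofReal, Complex.conj_I, inner_sub_left]
    push_cast
    ring
  · congr 2
    · simp
    · rw [mul_pow, mul_pow, Complex.I_sq]
      field_simp
      ring

/-- The dispersive estimate, uniform in `ε`. -/
lemma norm_ker_le {ε : ℝ} (hε : 0 < ε) (p q : ℝ × Sp n) (h : p.1 ≠ q.1) :
    ‖ker ε p q‖ ≤ (π / |q.1 - p.1|) ^ ((n : ℝ) / 2) := by
  rw [ker_eq hε, norm_mul, Complex.norm_cpow_real, Complex.norm_exp]
  set b : ℂ := ε + (q.1 - p.1 : ℝ) * Complex.I with hb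
  have hre : b.re = ε := by simp [hb]
  have him : b.im = q.1 - p.1 := by simp [hb]
  have h1 : |q.1 - p.1| ≤ ‖b‖ := by rw [← him]; exact Complex.abs_im_le_norm b
  have h2 : 0 < |q.1 - p.1| := abs_pos.2 (sub_ne_zero.2 h.symm)
  have h3 : (-(π ^ 2 * ‖q.2 - p.2‖ ^ 2) / b : ℂ).re ≤ 0 := by
    have : (-(π ^ 2 * ‖q.2 - p.2‖ ^ 2) / b : ℂ) = ((-(π ^ 2 * ‖q.2 - p.2‖ ^ 2) : ℝ) : ℂ) * b⁻¹ := by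
      push_cast; rw [div_eq_mul_inv]
    rw [this, Complex.re_ofReal_mul, Complex.inv_re, hre]
    have : 0 ≤ ε / Complex.normSq b := div_nonneg hε.le (Complex.normSq_nonneg _)
    have h5 : 0 ≤ π ^ 2 * ‖q.2 - p.2‖ ^ 2 := by positivity
    nlinarith
  calc _ ≤ (π / |q.1 - p.1|) ^ ((n : ℝ) / 2) * 1 := by
        gcongr ?_ * ?_
        · refine Real.rpow_le_rpow (norm_nonneg _) ?_ (by positivity)
          rw [norm_div, Complex.norm_real, Real.norm_of_nonneg Real.pi_pos.le]
          gcongr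
        · exact Real.exp_le_one_iff.2 h3
    _ = _ := mul_one _

/-- At equal times the kernel is a Gaussian probability density. -/
lemma lintegral_ker_slice {ε : ℝ} (hε : 0 < ε) (t : ℝ) (x : Sp n) :
    ∫⁻ y, ‖ker ε (t, y) (t, x)‖ₑ = 1 := by
  have hb : 0 < π ^ 2 / ε := by positivity
  have e : ∀ y, ‖ker ε (t, y) (t, x)‖ₑ =
      ENNReal.ofReal ((π / ε) ^ ((n : ℝ) / 2) * rexp (-(π ^ 2 / ε) * ‖x - y‖ ^ 2)) := fun y => by
    rw [ker_eq hε, ← ofReal_norm, norm_mul]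
    simp only [sub_self, Complex.ofReal_zero, zero_mul, add_zero]
    congr 2
    · rw [Complex.norm_cpow_real, norm_div, Complex.norm_real, Complex.norm_real,
        Real.norm_of_nonneg Real.pi_pos.le, Real.norm_of_nonneg hε.le]
    · rw [Complex.norm_exp]
      congr 1
      have : (-(π ^ 2 * ‖x - y‖ ^ 2) / ε : ℂ) = ((-(π ^ 2 / ε) * ‖x - y‖ ^ 2 : ℝ) : ℂ) := by
        push_cast; ring
      rw [this, Complex.ofReal_re]
  simp_rw [e]
  rw [lintegral_sub_left_eq_self
    (fun z : Sp n => ENNReal.ofReal ((π / ε) ^ ((n : ℝ) / 2) * rexp (-(π ^ 2 / ε) * ‖z‖ ^ 2))) x]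
  have hi : Integrable fun z : Sp n => rexp (-(π ^ 2 / ε) * ‖z‖ ^ 2) := by
    have h := GaussianFourier.integral_rexp_neg_mul_sq_norm (V := Sp n) hb
    by_contra hcon
    rw [integral_undef hcon] at h
    have : 0 < (π / (π ^ 2 / ε)) ^ (Module.finrank ℝ (Sp n) / 2 : ℝ) := by positivity
    exact this.ne h
  rw [← ofReal_integral_eq_lintegral_ofReal (hi.const_mul _)
    (Eventually.of_forall fun z => by positivity), integral_const_mul,
    GaussianFourier.integral_rexp_neg_mul_sq_norm hb, finrank_euclideanSpace_fin,
    ← Real.mul_rpow (by positivity) (by positivity)]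
  have : π / ε * (π / (π ^ 2 / ε)) = 1 := by field_simp
  rw [this, Real.one_rpow, ENNReal.ofReal_one]

lemma ker_conj (ε : ℝ) (p q : ℝ × Sp n) : conj (ker ε p q) = ker ε q p := by
  unfold ker
  rw [← integral_conj]
  simp [mul_comm]

lemma norm_ker_le_mass {ε : ℝ} (hε : 0 < ε) (p q : ℝ × Sp n) :
    ‖ker ε p q‖ ≤ (gw n ε).real univ := by
  have := isFiniteMeasure_gw (n := n) hε
  refine (norm_integral_le_of_norm_le_const (C := 1) (Eventually.of_forall fun ξ => ?_)).trans
    (le_of_eq (one_mul _))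
  rw [norm_mul, RCLike.norm_conj, norm_osc, norm_osc, one_mul]

lemma measurable_ker {ε : ℝ} (hε : 0 < ε) :
    Measurable fun z : (ℝ × Sp n) × (ℝ × Sp n) => ker ε z.1 z.2 := by
  have := isFiniteMeasure_gw (n := n) hε
  refine (StronglyMeasurable.integral_prod_right' (ν := gw n ε)
    (f := fun z : ((ℝ × Sp n) × (ℝ × Sp n)) × Sp n => osc z.2 z.1.1 * conj (osc z.2 z.1.2))
    ?_).measurable
  refine (Continuous.mul ?_ (Complex.continuous_conj.comp ?_)).stronglyMeasurable
  · exact continuous_osc.comp (continuous_snd.prodMk continuous_fst.fst)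
  · exact continuous_osc.comp (continuous_snd.prodMk continuous_fst.snd)

end

end Strich

namespace Strich

noncomputable section

open Set Filter Topology
open scoped ComplexConjugate

set_option linter.unusedSectionVars false

/-! ### Energies, and the bounds on time slices -/

variable {n : ℕ} {X X₁ X₂ : Type*} [MeasurableSpace X] [MeasurableSpace X₁] [MeasurableSpace X₂]
  {μ : Measure X} [SFinite μ] {μ₁ : Measure X₁} [SFinite μ₁] {μ₂ : Measure X₂} [SFinite μ₂]

/-- The space-time Fourier transform on the paraboloid of the measure `F μ`, carried to space-time
by the map `pos`; taking for `pos` the identity or a time slice covers both kinds of data. -/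
def Vt (μ : Measure X) (pos : X → ℝ × Sp n) (F : X → ℂ) (ξ : Sp n) : ℂ :=
  ∫ x, osc ξ (pos x) * F x ∂μ

/-- The energy `‖∫ e^{-isΔ} F(s) ds‖²`, with the frequency cut-off `gw`. -/
def Nt (ε : ℝ) (μ : Measure X) (pos : X → ℝ × Sp n) (F : X → ℂ) : ℝ≥0∞ :=
  ∫⁻ ξ, ‖Vt μ pos F ξ‖ₑ ^ 2 ∂(gw n ε)

lemma measurable_osc_mul {pos : X → ℝ × Sp n} (hp : Measurable pos) {F : X → ℂ}
    (hF : Measurable F) : Measurable (Function.uncurry fun ξ x => osc ξ (pos x) * F x) :=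
  (measurable_osc.comp (measurable_fst.prodMk (hp.comp measurable_snd))).mul
    (hF.comp measurable_snd)

lemma norm_osc_mul (pos : X → ℝ × Sp n) (F : X → ℂ) (ξ : Sp n) (x : X) :
    ‖osc ξ (pos x) * F x‖ ≤ ‖F x‖ := by rw [norm_mul, norm_osc, one_mul]

lemma measurable_Vt {pos : X → ℝ × Sp n} (hp : Measurable pos) {F : X → ℂ} (hF : Measurable F) :
    Measurable (Vt μ pos F) := measurable_integral_left (measurable_osc_mul hp hF)

lemma norm_Vt_le (pos : X → ℝ × Sp n) (F : X → ℂ) (ξ : Sp n) :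
    ‖Vt μ pos F ξ‖ ≤ ∫ x, ‖F x‖ ∂μ := by
  refine (norm_integral_le_integral_norm _).trans (le_of_eq ?_)
  simp_rw [norm_mul, norm_osc, one_mul]

/-- The pairing of two sources through the kernel is an inner product in `L²(gw)`. -/
lemma form_eq {ε : ℝ} (hε : 0 < ε) {p₁ : X₁ → ℝ × Sp n} (hp₁ : Measurable p₁) {F : X₁ → ℂ}
    (hF : Measurable F) (iF : Integrable F μ₁) {p₂ : X₂ → ℝ × Sp n} (hp₂ : Measurable p₂)
    {G : X₂ → ℂ} (hG : Measurable G) (iG : Integrable G μ₂) :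
    ∫ y, conj (G y) * ∫ x, ker ε (p₁ x) (p₂ y) * F x ∂μ₁ ∂μ₂ =
      ∫ ξ, Vt μ₁ p₁ F ξ * conj (Vt μ₂ p₂ G ξ) ∂(gw n ε) := by
  have := isFiniteMeasure_gw (n := n) hε
  unfold Vt
  rw [← gram (measurable_osc_mul hp₁ hF) (norm_osc_mul p₁ F) iF.norm (measurable_osc_mul hp₂ hG)
    (norm_osc_mul p₂ G) iG.norm]
  refine integral_congr_ae (Eventually.of_forall fun y => ?_)
  simp only
  rw [← integral_const_mul]
  refine integral_congr_ae (Eventually.of_forall fun x => ?_)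
  simp only [ker]
  rw [← integral_mul_const, ← integral_const_mul]
  refine integral_congr_ae (Eventually.of_forall fun ξ => ?_)
  simp only [map_mul]
  ring

/-- The pairing of two sources is bounded by their energies `Nt`, by Cauchy-Schwarz in the Fourier
variable. -/
lemma form_le {ε : ℝ} (hε : 0 < ε) {p₁ : X₁ → ℝ × Sp n} (hp₁ : Measurable p₁) {F : X₁ → ℂ}
    (hF : Measurable F) (iF : Integrable F μ₁) {p₂ : X₂ → ℝ × Sp n} (hp₂ : Measurable p₂)
    {G : X₂ → ℂ} (hG : Measurable G) (iG : Integrable G μ₂) :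
    ‖∫ y, conj (G y) * ∫ x, ker ε (p₁ x) (p₂ y) * F x ∂μ₁ ∂μ₂‖ₑ ≤
      Nt ε μ₁ p₁ F ^ (1 / 2 : ℝ) * Nt ε μ₂ p₂ G ^ (1 / 2 : ℝ) := by
  have := isFiniteMeasure_gw (n := n) hε
  rw [form_eq hε hp₁ hF iF hp₂ hG iG]
  exact enorm_integral_mul_conj_le (measurable_Vt hp₁ hF) (measurable_Vt hp₂ hG)

lemma Nt_eq {ε : ℝ} (hε : 0 < ε) {p₁ : X → ℝ × Sp n} (hp₁ : Measurable p₁) {F : X → ℂ}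
    (hF : Measurable F) (iF : Integrable F μ) :
    Nt ε μ p₁ F = ‖∫ y, conj (F y) * ∫ x, ker ε (p₁ x) (p₁ y) * F x ∂μ ∂μ‖ₑ := by
  have := isFiniteMeasure_gw (n := n) hε
  rw [form_eq hε hp₁ hF iF hp₁ hF iF]
  exact lintegral_enorm_sq_eq (measurable_Vt hp₁ hF) _ (norm_Vt_le p₁ F)

lemma enorm_form_le {k : X₁ → X₂ → ℂ} (F : X₁ → ℂ) (G : X₂ → ℂ) :
    ‖∫ y, conj (G y) * ∫ x, k x y * F x ∂μ₁ ∂μ₂‖ₑ ≤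
      ∫⁻ y, ‖G y‖ₑ * ∫⁻ x, ‖k x y‖ₑ * ‖F x‖ₑ ∂μ₁ ∂μ₂ := by
  refine (enorm_integral_le_lintegral_enorm _).trans (lintegral_mono fun y => ?_)
  rw [enorm_mul, RCLike.enorm_conj]
  gcongr
  refine (enorm_integral_le_lintegral_enorm _).trans (le_of_eq ?_)
  simp_rw [enorm_mul]

lemma mul_le_sq_add_sq (a b : ℝ≥0∞) : a * b ≤ a ^ 2 + b ^ 2 := by
  rcases le_total a b with h | h
  · exact (mul_le_mul_left h b).trans ((sq b).symm.le.trans le_add_self)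
  · exact (mul_le_mul_right h a).trans ((sq a).symm.le.trans le_self_add)

lemma measurable_slice (t : ℝ) : Measurable fun y : Sp n => (t, y) := measurable_prodMk_left

/-- Conservation of mass, up to a constant. -/
lemma Nt_slice_le {ε : ℝ} (hε : 0 < ε) (t : ℝ) {g : Sp n → ℂ} (hg : Measurable g)
    (ig : Integrable g) : Nt ε volume (fun y => (t, y)) g ≤ 2 * ∫⁻ x, ‖g x‖ₑ ^ 2 := by
  have hk := measurable_ker (n := n) hε
  have m1 : Measurable fun z : Sp n × Sp n => ‖ker ε (t, z.2) (t, z.1)‖ₑ := by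
    have := hk.comp ((measurable_const (a := t)).prodMk measurable_snd |>.prodMk
      ((measurable_const (a := t)).prodMk (measurable_fst (α := Sp n) (β := Sp n))))
    exact this.enorm
  have hsym : ∀ x y : Sp n, ‖ker ε (t, y) (t, x)‖ₑ = ‖ker ε (t, x) (t, y)‖ₑ := fun x y => by
    rw [← ker_conj, RCLike.enorm_conj]
  rw [Nt_eq hε (measurable_slice t) hg ig]
  refine (enorm_form_le _ _).trans ?_
  calc _ ≤ ∫⁻ y, ((∫⁻ x, ‖ker ε (t, x) (t, y)‖ₑ * ‖g y‖ₑ ^ 2) +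
        ∫⁻ x, ‖ker ε (t, x) (t, y)‖ₑ * ‖g x‖ₑ ^ 2) := by
        refine lintegral_mono fun y => ?_
        rw [← lintegral_const_mul' _ _ (by simp), ← lintegral_add_left]
        · refine lintegral_mono fun x => ?_
          rw [← mul_add, mul_left_comm]
          gcongr
          exact mul_le_sq_add_sq _ _
        · exact (m1.comp (measurable_const.prodMk measurable_id)).mul_const _
    _ = 2 * ∫⁻ x, ‖g x‖ₑ ^ 2 := by
        have m2 : Measurable fun z : Sp n × Sp n => ‖ker ε (t, z.2) (t, z.1)‖ₑ * ‖g z.1‖ₑ ^ 2 :=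
          m1.mul (by fun_prop)
        have m3 : Measurable fun z : Sp n × Sp n => ‖ker ε (t, z.2) (t, z.1)‖ₑ * ‖g z.2‖ₑ ^ 2 :=
          m1.mul (by fun_prop)
        rw [lintegral_add_left m2.lintegral_prod_right', two_mul]
        congr 1
        · refine lintegral_congr fun y => ?_
          simp only
          rw [lintegral_mul_const' _ _ (by simp), lintegral_ker_slice hε, one_mul]
        · rw [lintegral_lintegral_swap m3.aemeasurable]
          refine lintegral_congr fun x => ?_
          rw [lintegral_mul_const' _ _ (by simp)]
          simp_rw [fun y => hsym y x]
          rw [lintegral_ker_slice hε, one_mul]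

/-- The dispersive bound on the kernel between times at distance `τ`. -/
def disp (n : ℕ) (τ : ℝ) : ℝ≥0∞ := ENNReal.ofReal ((π / |τ|) ^ ((n : ℝ) / 2))

lemma enorm_ker_le {ε : ℝ} (hε : 0 < ε) (p q : ℝ × Sp n) (h : p.1 ≠ q.1) :
    ‖ker ε p q‖ₑ ≤ disp n (q.1 - p.1) := by
  rw [← ofReal_norm]
  exact ENNReal.ofReal_le_ofReal (norm_ker_le hε p q h)

lemma measurable_disp : Measurable (disp n) := by
  unfold disp
  fun_prop

/-- The `L¹ → L^∞` dispersive estimate. -/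
lemma form_slice_le {ε : ℝ} (hε : 0 < ε) {s t : ℝ} (h : s ≠ t) (f : Sp n → ℂ)
    {g : Sp n → ℂ} (hg : Measurable g) :
    ‖∫ x, conj (g x) * ∫ y, ker ε (s, y) (t, x) * f y‖ₑ ≤
      disp n (t - s) * (∫⁻ y, ‖f y‖ₑ) * ∫⁻ x, ‖g x‖ₑ := by
  refine (enorm_form_le _ _).trans ?_
  calc _ ≤ ∫⁻ x, ‖g x‖ₑ * (disp n (t - s) * ∫⁻ y, ‖f y‖ₑ) := by
        gcongr with x
        rw [← lintegral_const_mul' _ _ (by simp [disp])]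
        gcongr with y
        exact enorm_ker_le hε _ _ h
    _ = _ := by rw [lintegral_mul_const _ hg.enorm, mul_comm]

lemma two_mul_sqrt (a b : ℝ≥0∞) : 2 * a ^ (1 / 2 : ℝ) * b ^ (1 / 2 : ℝ) =
    (2 * a) ^ (1 / 2 : ℝ) * (2 * b) ^ (1 / 2 : ℝ) := by
  have e2 : (2 : ℝ≥0∞) ^ (1 / 2 : ℝ) * 2 ^ (1 / 2 : ℝ) = 2 := by
    rw [← ENNReal.rpow_add _ _ (by norm_num) (by norm_num)]; norm_num
  rw [ENNReal.mul_rpow_of_nonneg _ _ (by norm_num), ENNReal.mul_rpow_of_nonneg _ _ (by norm_num),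
    mul_mul_mul_comm, e2, mul_assoc]

/-- Integrating first over the time slices, energies are controlled by the interactions between
pairs of times. -/
lemma Nt_le_slices {ε : ℝ} (hε : 0 < ε) {F : ℝ × Sp n → ℂ} (hF : Measurable F)
    (iF : Integrable F) (h1 : ∀ s, Integrable fun y => F (s, y)) :
    Nt ε volume id F ≤ ∫⁻ t, ∫⁻ s, min
      (disp n (t - s) * (∫⁻ y, ‖F (s, y)‖ₑ) * ∫⁻ x, ‖F (t, x)‖ₑ)
      (2 * (∫⁻ y, ‖F (s, y)‖ₑ ^ 2) ^ (1 / 2 : ℝ) * (∫⁻ x, ‖F (t, x)‖ₑ ^ 2) ^ (1 / 2 : ℝ)) := by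
  have := isFiniteMeasure_gw (n := n) hε
  have hFs : ∀ s, Measurable fun y => F (s, y) := fun s => hF.comp measurable_prodMk_left
  set Ψ : Sp n → ℝ → ℂ := fun ξ s => Vt volume (fun y : Sp n => (s, y)) (fun y => F (s, y)) ξ
    with hΨ
  have mΨ : Measurable (Function.uncurry Ψ) := by
    refine (StronglyMeasurable.integral_prod_right' (ν := (volume : Measure (Sp n)))
      (f := fun z : (Sp n × ℝ) × Sp n => osc z.1.1 (z.1.2, z.2) * F (z.1.2, z.2)) ?_).measurable
    refine (Measurable.mul ?_ ?_).stronglyMeasurable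
    · exact measurable_osc.comp (measurable_fst.fst.prodMk (measurable_fst.snd.prodMk
        measurable_snd))
    · exact hF.comp (measurable_fst.snd.prodMk measurable_snd)
  have bΨ : ∀ ξ s, ‖Ψ ξ s‖ ≤ ∫ y, ‖F (s, y)‖ := fun ξ s => norm_Vt_le _ _ _
  have iΨ : Integrable fun s => ∫ y, ‖F (s, y)‖ := Integrable.integral_norm_prod_left iF
  have hV : ∀ ξ, Vt volume id F ξ = ∫ s, Ψ ξ s := fun ξ => by
    unfold Vt
    simp only [id]
    have : Integrable fun p => osc ξ p * F p := by
      refine iF.norm.mono' ?_ (Eventually.of_forall fun p => norm_osc_mul id F ξ p)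
      exact ((measurable_osc_mul measurable_id hF).comp measurable_prodMk_left).aestronglyMeasurable
    rw [Measure.volume_eq_prod] at this ⊢
    exact integral_prod _ this
  unfold Nt
  rw [lintegral_enorm_sq_eq (measurable_Vt measurable_id hF) _ (norm_Vt_le id F)]
  simp_rw [hV]
  rw [← gram mΨ bΨ iΨ mΨ bΨ iΨ]
  refine (enorm_integral_le_lintegral_enorm _).trans (lintegral_mono fun t => ?_)
  refine (enorm_integral_le_lintegral_enorm _).trans (lintegral_mono_ae ?_)
  filter_upwards [compl_mem_ae_iff.2 (measure_singleton t)] with s hs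
  refine le_min ?_ ?_
  · simp only [hΨ]
    rw [← form_eq hε (measurable_slice s) (hFs s) (h1 s) (measurable_slice t) (hFs t) (h1 t)]
    exact form_slice_le hε hs _ (hFs t)
  · have m : ∀ s, Measurable fun ξ => Ψ ξ s := fun s => measurable_Vt (measurable_slice s) (hFs s)
    have e : ∀ s : ℝ, (∫⁻ ξ, ‖Ψ ξ s‖ₑ ^ 2 ∂(gw n ε)) ≤
        2 * ∫⁻ y : Sp n, ‖F (s, y)‖ₑ ^ 2 := fun s => Nt_slice_le hε s (hFs s) (h1 s)
    refine (enorm_integral_mul_conj_le (m s) (m t)).trans ?_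
    rw [two_mul_sqrt]
    exact mul_le_mul' (ENNReal.rpow_le_rpow (e s) (by norm_num))
      (ENNReal.rpow_le_rpow (e t) (by norm_num))

/-- Young's inequality on the line. -/
lemma young {c d κ : ℝ → ℝ≥0∞} (hc : Measurable c) (hd : Measurable d) (hκ : Measurable κ) :
    ∫⁻ t, ∫⁻ s, κ (t - s) * c s * d t ≤
      (∫⁻ τ, κ τ) * (∫⁻ s, c s ^ 2) ^ (1 / 2 : ℝ) * (∫⁻ t, d t ^ 2) ^ (1 / 2 : ℝ) := by
  have e1 : ∀ t, ∫⁻ s, κ (t - s) * c s * d t = ∫⁻ τ, κ τ * (c (t - τ) * d t) := fun t => by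
    rw [← lintegral_sub_left_eq_self (fun τ => κ τ * (c (t - τ) * d t)) t]
    simp only [sub_sub_cancel, mul_assoc]
  simp_rw [e1]
  rw [lintegral_lintegral_swap (by fun_prop), mul_assoc, ← lintegral_mul_const _ hκ]
  refine lintegral_mono fun τ => ?_
  rw [lintegral_const_mul _ (by fun_prop)]
  gcongr
  have := ENNReal.lintegral_mul_le_Lp_mul_Lq volume Real.HolderConjugate.two_two
    (f := fun t => c (t - τ)) (g := d) (by fun_prop) (by fun_prop)
  simp only [ENNReal.rpow_ofNat, Pi.mul_apply] at this
  rwa [lintegral_sub_right_eq_self (fun t => c t ^ 2) τ] at this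

end

end Strich

namespace Strich

noncomputable section

open Set Filter Topology
open scoped ComplexConjugate

set_option linter.unusedSectionVars false

variable {n : ℕ}

/-! ### Atoms at a dyadic scale, and their interactions -/

/-- `‖c‖_{L²(ℝ)}`. -/
def nrm (c : ℝ → ℝ≥0∞) : ℝ≥0∞ := (∫⁻ s, c s ^ 2) ^ (1 / 2 : ℝ)

/-- The reciprocal of the endpoint exponent `2n/(n-2)`. -/
def c0 (n : ℕ) : ℝ := 1 / 2 - 1 / n

/-- The dyadic weight `2^x`. -/
def two (x : ℝ) : ℝ≥0∞ := ENNReal.ofReal ((2 : ℝ) ^ x)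

lemma two_add (x y : ℝ) : two (x + y) = two x * two y := by
  unfold two
  rw [Real.rpow_add two_pos, ENNReal.ofReal_mul (by positivity)]

lemma two_zero : two 0 = 1 := by simp [two]

lemma two_ne_top (x : ℝ) : two x ≠ ∞ := ENNReal.ofReal_ne_top

lemma two_mono {x y : ℝ} (h : x ≤ y) : two x ≤ two y :=
  ENNReal.ofReal_le_ofReal (Real.rpow_le_rpow_of_exponent_le one_le_two h)

lemma two_rpow (x y : ℝ) : two x ^ y = two (x * y) := by
  unfold two
  rw [ENNReal.ofReal_rpow_of_pos (by positivity), ← Real.rpow_mul two_pos.le]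

lemma two_pow (x : ℝ) (m : ℕ) : two x ^ m = two (x * m) := by
  rw [← two_rpow, ENNReal.rpow_natCast]

/-- A space-time function that on every time slice obeys, with the size `c s`, the `L¹` and `L²`
bounds of a function of height `c s * 2^{(c₀-1)k}` on a set of measure `2^k`. The `L^{p,2}` norm of
such a slice, where `1 / p = 1 - c₀`, is at most a constant multiple of `c s`. -/
structure IsAtom (k : ℤ) (c : ℝ → ℝ≥0∞) (F : ℝ × Sp n → ℂ) : Prop where
  meas : Measurable F
  int : Integrable F
  measc : Measurable c
  fin : ∀ s, c s ≠ ∞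
  l1 : ∀ s, ∫⁻ y, ‖F (s, y)‖ₑ ≤ c s * two (c0 n * k)
  l2 : ∀ s, ∫⁻ y, ‖F (s, y)‖ₑ ^ 2 ≤ (c s * two (-k / n)) ^ 2

lemma IsAtom.slice {k : ℤ} {c : ℝ → ℝ≥0∞} {F : ℝ × Sp n → ℂ} (h : IsAtom k c F) (s : ℝ) :
    Integrable fun y => F (s, y) :=
  ⟨(h.meas.comp measurable_prodMk_left).aestronglyMeasurable,
    (h.l1 s).trans_lt (ENNReal.mul_lt_top (h.fin s).lt_top (two_ne_top _).lt_top)⟩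

lemma IsAtom.restrict {k : ℤ} {c : ℝ → ℝ≥0∞} {F : ℝ × Sp n → ℂ} (h : IsAtom k c F) {φ : ℝ → ℝ}
    (mφ : Measurable φ) (bφ : ∀ s, |φ s| ≤ 1) {S : Set ℝ} (hS : MeasurableSet S)
    (hφ : ∀ s, s ∉ S → φ s = 0) :
    IsAtom k (S.indicator c) fun p => (φ p.1 : ℂ) * F p := by
  have hφ' : ∀ s, ‖(φ s : ℂ)‖ₑ ≤ S.indicator 1 s := fun s => by
    by_cases hs : s ∈ S
    · rw [indicator_of_mem hs, ← ofReal_norm, Complex.norm_real]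
      exact ENNReal.ofReal_le_one.2 (bφ s)
    · simp [hφ s hs]
  have hle1 : ∀ s, ‖(φ s : ℂ)‖ₑ ≤ 1 := fun s =>
    (hφ' s).trans (indicator_le_self' (by simp) s)
  have m : Measurable fun p : ℝ × Sp n => (φ p.1 : ℂ) * F p :=
    (Complex.measurable_ofReal.comp (mφ.comp measurable_fst)).mul h.meas
  refine ⟨m, h.int.norm.mono' m.aestronglyMeasurable (Eventually.of_forall fun p => ?_),
    h.measc.indicator hS, fun s => ?_, fun s => ?_, fun s => ?_⟩
  · rw [norm_mul, Complex.norm_real]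
    exact mul_le_of_le_one_left (norm_nonneg _) (bφ _)
  · exact ((indicator_le_self' (by simp) s).trans_lt (h.fin s).lt_top).ne
  · simp only [enorm_mul]
    by_cases hs : s ∈ S
    · rw [indicator_of_mem hs]
      exact (lintegral_mono fun y => mul_le_of_le_one_left' (hle1 s)).trans (h.l1 s)
    · simp [hφ s hs, indicator_of_notMem hs]
  · simp only [enorm_mul]
    by_cases hs : s ∈ S
    · rw [indicator_of_mem hs]
      refine (lintegral_mono fun y => ?_).trans (h.l2 s)
      gcongr
      exact mul_le_of_le_one_left' (hle1 s)
    · simp [hφ s hs, indicator_of_notMem hs]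

/-- The constant in `disp_tail`. -/
def Dc (n : ℕ) : ℝ := 2 * π ^ ((n : ℝ) / 2) / ((n : ℝ) / 2 - 1)

lemma disp_tail (hn : 3 ≤ n) {R : ℝ} (hR : 0 < R) :
    ∫⁻ τ, {τ : ℝ | R ≤ |τ|}.indicator (disp n) τ ≤
      ENNReal.ofReal (Dc n) * ENNReal.ofReal (R ^ (1 - (n : ℝ) / 2)) := by
  have hn' : (3 : ℝ) ≤ n := by exact_mod_cast hn
  have hS : MeasurableSet {τ : ℝ | R ≤ |τ|} := measurableSet_le measurable_const (by fun_prop)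
  have hI : ∫⁻ τ in Ioi R, disp n τ =
      ENNReal.ofReal (π ^ ((n : ℝ) / 2) / ((n : ℝ) / 2 - 1) * R ^ (1 - (n : ℝ) / 2)) := by
    have e : ∀ τ ∈ Ioi R, disp n τ = ENNReal.ofReal (π ^ ((n : ℝ) / 2) * τ ^ (-(n : ℝ) / 2)) := by
      intro τ hτ
      have : 0 < τ := hR.trans hτ
      unfold disp
      rw [abs_of_pos this, Real.div_rpow Real.pi_pos.le this.le, neg_div, Real.rpow_neg this.le,
        div_eq_mul_inv]
    rw [setLIntegral_congr_fun measurableSet_Ioi e, ← ofReal_integral_eq_lintegral_ofReal,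
      integral_const_mul, integral_Ioi_rpow_of_lt (by linarith) hR]
    · congr 1
      have h1 : -(n : ℝ) / 2 + 1 = 1 - n / 2 := by ring
      have h2 : (n : ℝ) / 2 - 1 ≠ 0 := by linarith
      have h3 : 1 - (n : ℝ) / 2 ≠ 0 := by linarith
      have h4 : -R ^ (1 - (n : ℝ) / 2) / (1 - n / 2) = R ^ (1 - (n : ℝ) / 2) / (n / 2 - 1) := by
        rw [div_eq_div_iff h3 h2]; ring
      rw [h1, h4]
      ring
    · exact (integrableOn_Ioi_rpow_of_lt (by linarith) hR).const_mul _
    · refine (ae_restrict_mem measurableSet_Ioi).mono fun τ hτ => ?_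
      have : 0 < τ := hR.trans hτ
      positivity
  have hJ : ∫⁻ τ in Iio (-R), disp n τ = ∫⁻ τ in Ioi R, disp n τ := by
    rw [← lintegral_indicator measurableSet_Iio, ← lintegral_indicator measurableSet_Ioi,
      ← lintegral_neg_eq_self]
    refine lintegral_congr fun τ => ?_
    have : -τ ∈ Iio (-R) ↔ τ ∈ Ioi R := by simp
    by_cases h : τ ∈ Ioi R
    · rw [indicator_of_mem h, indicator_of_mem (this.2 h)]
      simp [disp]
    · rw [indicator_of_notMem h, indicator_of_notMem (fun h' => h (this.1 h'))]
  rw [lintegral_indicator hS]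
  have hsub : {τ : ℝ | R ≤ |τ|} ⊆ Ici R ∪ Iic (-R) := fun τ hτ => by
    rcases le_abs.1 (show R ≤ |τ| from hτ) with h | h
    · exact Or.inl h
    · exact Or.inr (by simp only [mem_Iic]; linarith)
  refine (lintegral_mono_set hsub).trans ((lintegral_union_le _ _ _).trans ?_)
  rw [setLIntegral_congr Ioi_ae_eq_Ici.symm, setLIntegral_congr Iio_ae_eq_Iic.symm, hJ, hI,
    ← ENNReal.ofReal_add (by have : 0 < (n : ℝ) / 2 - 1 := by linarith
                             positivity)
      (by have : 0 < (n : ℝ) / 2 - 1 := by linarith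
          positivity), ← ENNReal.ofReal_mul]
  · refine le_of_eq (congrArg _ ?_)
    unfold Dc
    ring
  · have : 0 < (n : ℝ) / 2 - 1 := by linarith
    unfold Dc
    positivity

lemma two_tail (x : ℝ) : ENNReal.ofReal (((2 : ℝ) ^ (2 * x / n)) ^ (1 - (n : ℝ) / 2)) =
    two (2 * x / n * (1 - n / 2)) := by
  unfold two
  rw [← Real.rpow_mul two_pos.le]

/-- The constant in the energy estimate for atoms. -/
def C1 (n : ℕ) : ℝ≥0∞ := 4 + ENNReal.ofReal (Dc n)

lemma nrm_sq (c : ℝ → ℝ≥0∞) : nrm c ^ 2 = ∫⁻ s, c s ^ 2 := by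
  unfold nrm
  rw [← ENNReal.rpow_natCast, ← ENNReal.rpow_mul]
  norm_num

/-- The energy estimate for atoms: interpolating between dispersion and mass conservation makes the
interaction of two time slices integrable in the time difference. -/
lemma IsAtom.energy (hn : 3 ≤ n) {ε : ℝ} (hε : 0 < ε) {k : ℤ} {c : ℝ → ℝ≥0∞}
    {F : ℝ × Sp n → ℂ} (h : IsAtom k c F) : Nt ε volume id F ≤ C1 n * ∫⁻ s, c s ^ 2 := by
  have hn0 : (n : ℝ) ≠ 0 := by positivity
  set κ : ℝ → ℝ≥0∞ := fun τ => min (disp n τ * two (2 * (c0 n * k))) (2 * two (2 * (-k / n)))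
    with hκ
  have mκ : Measurable κ := by
    have := measurable_disp (n := n)
    fun_prop
  have hκi : ∫⁻ τ, κ τ ≤ C1 n := by
    have hR : (0 : ℝ) < 2 ^ (2 * (k : ℝ) / n) := by positivity
    -- at `|τ| = 2 ^ (2k/n)` the dispersive bound and the mass bound have the same size in `k`
    set S : Set ℝ := {τ : ℝ | (2 : ℝ) ^ (2 * (k : ℝ) / n) ≤ |τ|} with hS
    have mS : MeasurableSet S := measurableSet_le measurable_const (by fun_prop)
    rw [← lintegral_add_compl _ mS, add_comm, C1]
    refine add_le_add ?_ ?_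
    · refine (lintegral_mono fun τ => min_le_right _ _).trans (le_of_eq ?_)
      rw [setLIntegral_const]
      have : Sᶜ = Ioo (-(2 : ℝ) ^ (2 * (k : ℝ) / n)) (2 ^ (2 * (k : ℝ) / n)) := by
        ext τ
        simp only [hS, mem_compl_iff, mem_ofPred_eq, not_le, mem_Ioo, abs_lt]
      rw [this, Real.volume_Ioo, sub_neg_eq_add, ← two_mul, ENNReal.ofReal_mul two_pos.le]
      change 2 * two (2 * (-k / n)) * (ENNReal.ofReal 2 * two (2 * k / n)) = 4
      rw [mul_mul_mul_comm, ← two_add, ENNReal.ofReal_ofNat]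
      have : 2 * (-(k : ℝ) / n) + 2 * k / n = 0 := by ring
      rw [this, two_zero]
      norm_num
    · calc ∫⁻ τ in S, κ τ ≤ ∫⁻ τ in S, disp n τ * two (2 * (c0 n * k)) :=
            lintegral_mono fun τ => min_le_left _ _
        _ = (∫⁻ τ, S.indicator (disp n) τ) * two (2 * (c0 n * k)) := by
            rw [lintegral_mul_const _ measurable_disp, lintegral_indicator mS]
        _ ≤ ENNReal.ofReal (Dc n) * two (2 * k / n * (1 - n / 2)) * two (2 * (c0 n * k)) := by
            rw [← two_tail]
            gcongr
            exact disp_tail hn hR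
        _ = ENNReal.ofReal (Dc n) := by
            rw [mul_assoc, ← two_add]
            have : 2 * (k : ℝ) / n * (1 - n / 2) + 2 * (c0 n * k) = 0 := by
              unfold c0; field_simp; ring
            rw [this, two_zero, mul_one]
  calc Nt ε volume id F ≤ _ := Nt_le_slices hε h.meas h.int h.slice
    _ ≤ ∫⁻ t, ∫⁻ s, κ (t - s) * c s * c t := by
        refine lintegral_mono fun t => lintegral_mono fun s => ?_
        have hm : κ (t - s) * c s * c t = min
            (disp n (t - s) * (c s * two (c0 n * k)) * (c t * two (c0 n * k)))
            (2 * ((c s * two (-k / n)) ^ 2) ^ (1 / 2 : ℝ) *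
              ((c t * two (-k / n)) ^ 2) ^ (1 / 2 : ℝ)) := by
          have e : ∀ a : ℝ≥0∞, (a ^ 2) ^ (1 / 2 : ℝ) = a := fun a => by
            rw [← ENNReal.rpow_natCast, ← ENNReal.rpow_mul]; norm_num
          have e2 : ∀ x : ℝ, two (2 * x) = two x * two x := fun x => by rw [two_mul, two_add]
          have e3 : ∀ a b x : ℝ≥0∞, min a b * x = min (a * x) (b * x) := fun a b x =>
            (monotone_id.mul_const' x).map_min
          rw [mul_assoc, e3, e, e, e2, e2]
          congr 1 <;> ring
        rw [hm]
        refine min_le_min ?_ ?_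
        · gcongr
          exacts [h.l1 s, h.l1 t]
        · exact mul_le_mul' (mul_le_mul' le_rfl (ENNReal.rpow_le_rpow (h.l2 s) (by norm_num)))
            (ENNReal.rpow_le_rpow (h.l2 t) (by norm_num))
    _ ≤ _ := young h.measc h.measc mκ
    _ ≤ _ := by
        rw [mul_assoc, ← sq]
        change _ * nrm c ^ 2 ≤ _
        rw [nrm_sq]
        gcongr

end

end Strich

namespace Strich

noncomputable section

open Set Filter Topology
open scoped ComplexConjugate

set_option linter.unusedSectionVars false

variable {n : ℕ}

/-! ### Truncated Duhamel operators -/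

/-- A measurable truncation `χ(s,t)` of the time variables. -/
structure IsCut (χ : ℝ → ℝ → ℝ) : Prop where
  meas : Measurable (Function.uncurry χ)
  le_one : ∀ s t, |χ s t| ≤ 1

lemma IsCut.swap {χ : ℝ → ℝ → ℝ} (h : IsCut χ) : IsCut fun s t => χ t s :=
  ⟨h.meas.comp measurable_swap, fun s t => h.le_one t s⟩

lemma isCut_one : IsCut fun _ _ => 1 := ⟨measurable_const, fun _ _ => by simp⟩

lemma IsCut.left {χ : ℝ → ℝ → ℝ} (h : IsCut χ) (t : ℝ) : Measurable fun s => χ s t :=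
  h.meas.comp (measurable_id.prodMk measurable_const)

lemma IsCut.restrict {χ : ℝ → ℝ → ℝ} (h : IsCut χ) {S : Set (ℝ × ℝ)} (hS : MeasurableSet S) :
    IsCut fun s t => S.indicator (Function.uncurry χ) (s, t) := by
  refine ⟨h.meas.indicator hS, fun s t => ?_⟩
  by_cases hs : (s, t) ∈ S
  · rw [indicator_of_mem hs]; exact h.le_one s t
  · rw [indicator_of_notMem hs]; simp

/-- The Duhamel operator `F ↦ ∫ χ(s,t) e^{(ε+i(t-s))Δ} F(s) ds`. -/
def U (ε : ℝ) (χ : ℝ → ℝ → ℝ) (F : ℝ × Sp n → ℂ) (q : ℝ × Sp n) : ℂ :=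
  ∫ p, ker ε p q * ((χ p.1 q.1 : ℂ) * F p)

/-- The bilinear form of the Duhamel operator. -/
def Bf (ε : ℝ) (χ : ℝ → ℝ → ℝ) (F G : ℝ × Sp n → ℂ) : ℂ := ∫ q, conj (G q) * U ε χ F q

section

variable {ε : ℝ} {χ : ℝ → ℝ → ℝ} {F G : ℝ × Sp n → ℂ}

lemma IsCut.meas_left (hχ : IsCut χ) (t : ℝ) : Measurable fun p : ℝ × Sp n => (χ p.1 t : ℂ) :=
  Complex.measurable_ofReal.comp ((hχ.left t).comp measurable_fst)

lemma IsCut.mul_meas (hχ : IsCut χ) (hF : Measurable F) (t : ℝ) :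
    Measurable fun p => (χ p.1 t : ℂ) * F p := (hχ.meas_left t).mul hF

lemma IsCut.norm_mul_le (hχ : IsCut χ) (t : ℝ) (p : ℝ × Sp n) :
    ‖(χ p.1 t : ℂ) * F p‖ ≤ ‖F p‖ := by
  rw [norm_mul, Complex.norm_real]
  exact mul_le_of_le_one_left (norm_nonneg _) (hχ.le_one _ _)

lemma IsCut.mul_int (hχ : IsCut χ) (hF : Measurable F) (iF : Integrable F) (t : ℝ) :
    Integrable fun p => (χ p.1 t : ℂ) * F p :=
  iF.norm.mono' (hχ.mul_meas hF t).aestronglyMeasurable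
    (Eventually.of_forall (hχ.norm_mul_le t))

lemma meas_U_integrand (hε : 0 < ε) (hχ : IsCut χ) (hF : Measurable F) :
    Measurable fun z : (ℝ × Sp n) × (ℝ × Sp n) =>
      ker ε z.2 z.1 * ((χ z.2.1 z.1.1 : ℂ) * F z.2) := by
  refine ((measurable_ker hε).comp measurable_swap).mul (Measurable.mul ?_ ?_)
  · exact Complex.measurable_ofReal.comp (hχ.meas.comp (measurable_snd.fst.prodMk
      measurable_fst.fst))
  · exact hF.comp measurable_snd

lemma measurable_U (hε : 0 < ε) (hχ : IsCut χ) (hF : Measurable F) : Measurable (U ε χ F) :=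
  (StronglyMeasurable.integral_prod_right'
    (meas_U_integrand hε hχ hF).stronglyMeasurable).measurable

lemma norm_U_integrand (hε : 0 < ε) (hχ : IsCut χ) (p q : ℝ × Sp n) :
    ‖ker ε p q * ((χ p.1 q.1 : ℂ) * F p)‖ ≤ (gw n ε).real univ * ‖F p‖ := by
  rw [norm_mul]
  exact mul_le_mul (norm_ker_le_mass hε p q) (hχ.norm_mul_le _ _) (norm_nonneg _)
    measureReal_nonneg

lemma int_U_integrand (hε : 0 < ε) (hχ : IsCut χ) (hF : Measurable F) (iF : Integrable F)
    (q : ℝ × Sp n) : Integrable fun p => ker ε p q * ((χ p.1 q.1 : ℂ) * F p) :=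
  (iF.norm.const_mul _).mono'
    ((meas_U_integrand hε hχ hF).comp measurable_prodMk_left).aestronglyMeasurable
    (Eventually.of_forall fun p => norm_U_integrand hε hχ p q)

lemma norm_U_le (hε : 0 < ε) (hχ : IsCut χ) (iF : Integrable F) (q : ℝ × Sp n) :
    ‖U ε χ F q‖ ≤ (gw n ε).real univ * ∫ p, ‖F p‖ := by
  rw [← integral_const_mul]
  exact norm_integral_le_of_norm_le (iF.norm.const_mul _)
    (Eventually.of_forall fun p => norm_U_integrand hε hχ p q)

lemma int_Bf_integrand (hε : 0 < ε) (hχ : IsCut χ) (hF : Measurable F) (iF : Integrable F)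
    (hG : Measurable G) (iG : Integrable G) : Integrable fun q => conj (G q) * U ε χ F q := by
  refine (iG.norm.mul_const ((gw n ε).real univ * ∫ p, ‖F p‖)).mono'
    ((Complex.continuous_conj.measurable.comp hG).mul
      (measurable_U hε hχ hF)).aestronglyMeasurable (Eventually.of_forall fun q => ?_)
  rw [norm_mul, RCLike.norm_conj]
  gcongr
  exact norm_U_le hε hχ iF q

lemma Bf_swap (hε : 0 < ε) (hχ : IsCut χ) (hF : Measurable F) (iF : Integrable F)
    (hG : Measurable G) (iG : Integrable G) :
    Bf ε χ F G = conj (Bf ε (fun s t => χ t s) G F) := by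
  unfold Bf U
  rw [← integral_conj]
  simp_rw [map_mul, Complex.conj_conj, ← integral_conj, ← integral_const_mul]
  rw [integral_integral_swap]
  · refine integral_congr_ae (Eventually.of_forall fun p => integral_congr_ae
      (Eventually.of_forall fun q => ?_))
    simp only [map_mul, Complex.conj_ofReal, ker_conj]
    ring
  · have m : Measurable fun z : (ℝ × Sp n) × (ℝ × Sp n) =>
        conj (G z.1) * (ker ε z.2 z.1 * ((χ z.2.1 z.1.1 : ℂ) * F z.2)) :=
      (Complex.continuous_conj.measurable.comp (hG.comp measurable_fst)).mul
        (meas_U_integrand hε hχ hF)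
    refine (iG.norm.mul_prod (iF.norm.const_mul ((gw n ε).real univ))).mono'
      m.aestronglyMeasurable (Eventually.of_forall fun z => ?_)
    simp only [Function.uncurry]
    rw [norm_mul, RCLike.norm_conj]
    gcongr
    exact norm_U_integrand hε hχ _ _

lemma Bf_add_cut {χ₁ χ₂ : ℝ → ℝ → ℝ} (hε : 0 < ε) (h₁ : IsCut χ₁) (h₂ : IsCut χ₂)
    (h : ∀ s t, χ s t = χ₁ s t + χ₂ s t) (hF : Measurable F) (iF : Integrable F)
    (hG : Measurable G) (iG : Integrable G) :
    Bf ε χ F G = Bf ε χ₁ F G + Bf ε χ₂ F G := by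
  unfold Bf
  rw [← integral_add (int_Bf_integrand hε h₁ hF iF hG iG) (int_Bf_integrand hε h₂ hF iF hG iG)]
  refine integral_congr_ae (Eventually.of_forall fun q => ?_)
  simp only
  rw [← mul_add]
  congr 1
  unfold U
  rw [← integral_add (int_U_integrand hε h₁ hF iF q) (int_U_integrand hε h₂ hF iF q)]
  refine integral_congr_ae (Eventually.of_forall fun p => ?_)
  simp only [h]
  push_cast
  ring

lemma U_sum (hε : 0 < ε) (hχ : IsCut χ) {ι : Type*} (K : Finset ι) (Fs : ι → ℝ × Sp n → ℂ)
    (hF : ∀ k ∈ K, Measurable (Fs k)) (iF : ∀ k ∈ K, Integrable (Fs k)) (q : ℝ × Sp n) :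
    U ε χ (fun p => ∑ k ∈ K, Fs k p) q = ∑ k ∈ K, U ε χ (Fs k) q := by
  unfold U
  simp_rw [Finset.mul_sum]
  exact integral_finsetSum _ fun k hk => int_U_integrand hε hχ (hF k hk) (iF k hk) q

lemma Bf_sum (hε : 0 < ε) (hχ : IsCut χ) {ι κ : Type*} (K : Finset ι) (Fs : ι → ℝ × Sp n → ℂ)
    (hF : ∀ k ∈ K, Measurable (Fs k)) (iF : ∀ k ∈ K, Integrable (Fs k))
    (L : Finset κ) (Gs : κ → ℝ × Sp n → ℂ)
    (hG : ∀ k ∈ L, Measurable (Gs k)) (iG : ∀ k ∈ L, Integrable (Gs k)) :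
    Bf ε χ (fun p => ∑ k ∈ K, Fs k p) (fun p => ∑ l ∈ L, Gs l p) =
      ∑ k ∈ K, ∑ l ∈ L, Bf ε χ (Fs k) (Gs l) := by
  unfold Bf
  simp_rw [U_sum hε hχ K Fs hF iF, map_sum, Finset.mul_sum, Finset.sum_mul]
  rw [integral_finsetSum _ fun k hk => integrable_finsetSum _ fun l hl =>
    int_Bf_integrand hε hχ (hF k hk) (iF k hk) (hG l hl) (iG l hl)]
  refine Finset.sum_congr rfl fun k hk => ?_
  exact integral_finsetSum _ fun l hl =>
    int_Bf_integrand hε hχ (hF k hk) (iF k hk) (hG l hl) (iG l hl)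

/-- Pairing with a single time slice. -/
lemma slice_form_le (hε : 0 < ε) (hχ : IsCut χ) (hF : Measurable F) (iF : Integrable F) (t : ℝ)
    {g : Sp n → ℂ} (hg : Measurable g) (ig : Integrable g) :
    ‖∫ x, conj (g x) * U ε χ F (t, x)‖ₑ ≤
      Nt ε volume id (fun p => (χ p.1 t : ℂ) * F p) ^ (1 / 2 : ℝ) *
        (2 * ∫⁻ x, ‖g x‖ₑ ^ 2) ^ (1 / 2 : ℝ) :=
  (form_le hε measurable_id (hχ.mul_meas hF t) (hχ.mul_int hF iF t) (measurable_slice t) hg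
    ig).trans (mul_le_mul' le_rfl (ENNReal.rpow_le_rpow (Nt_slice_le hε t hg ig) (by norm_num)))

lemma enorm_Bf_le_time (hε : 0 < ε) (hχ : IsCut χ) (hF : Measurable F) (iF : Integrable F)
    (hG : Measurable G) (iG : Integrable G) :
    ‖Bf ε χ F G‖ₑ ≤ ∫⁻ t, ‖∫ x, conj (G (t, x)) * U ε χ F (t, x)‖ₑ := by
  unfold Bf
  have := int_Bf_integrand hε hχ hF iF hG iG
  rw [Measure.volume_eq_prod] at this ⊢
  rw [integral_prod _ this]
  exact enorm_integral_le_lintegral_enorm _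

/-- Interactions between times at distance less than `R`: conservation of mass and the energy
estimate on time intervals of length `2R`. -/
lemma Bf_near (hn : 3 ≤ n) (hε : 0 < ε) (hχ : IsCut χ) {R : ℝ}
    (hR : ∀ s t, R ≤ |t - s| → χ s t = 0) {k l : ℤ} {c d : ℝ → ℝ≥0∞}
    (hF : IsAtom k c F) (hG : IsAtom l d G) :
    ‖Bf ε χ F G‖ₑ ≤ (4 * C1 n) ^ (1 / 2 : ℝ) *
      (ENNReal.ofReal R ^ (1 / 2 : ℝ) * two (-l / n)) * nrm c * nrm d := by
  set S : ℝ → Set ℝ := fun t => {s | |t - s| < R} with hS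
  have mS : ∀ t, MeasurableSet (S t) := fun t => measurableSet_lt (by fun_prop) measurable_const
  have mS' : MeasurableSet {z : ℝ × ℝ | z.2 ∈ S z.1} :=
    measurableSet_lt (f := fun z : ℝ × ℝ => |z.1 - z.2|) (by fun_prop) measurable_const
  have mc := hF.measc
  have mI : Measurable (Function.uncurry fun t s => (S t).indicator c s ^ 2) := by
    refine Measurable.pow_const ?_ 2
    exact (mc.comp measurable_snd).indicator mS'
  set f : ℝ → ℝ≥0∞ := fun t => (C1 n * ∫⁻ s, (S t).indicator c s ^ 2) ^ (1 / 2 : ℝ) with hf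
  set g : ℝ → ℝ≥0∞ := fun t => (2 * (d t * two (-l / n)) ^ 2) ^ (1 / 2 : ℝ) with hg
  have mf : Measurable f := by
    have : Measurable fun t => ∫⁻ s, (S t).indicator c s ^ 2 := mI.lintegral_prod_right
    exact (this.const_mul _).pow_const _
  have mg : Measurable g := by have := hG.measc; fun_prop
  have e : ∀ a : ℝ≥0∞, (a ^ (1 / 2 : ℝ)) ^ 2 = a := fun a => by
    rw [← ENNReal.rpow_natCast, ← ENNReal.rpow_mul]; norm_num
  have e' : ∀ a : ℝ≥0∞, (a ^ 2) ^ (1 / 2 : ℝ) = a := fun a => by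
    rw [← ENNReal.rpow_natCast, ← ENNReal.rpow_mul]; norm_num
  -- for each `t`, Cauchy-Schwarz against the part of `F` at times in `S t`, which is again an atom
  have h1 : ‖Bf ε χ F G‖ₑ ≤ ∫⁻ t, f t * g t := by
    refine (enorm_Bf_le_time hε hχ hF.meas hF.int hG.meas hG.int).trans
      (lintegral_mono fun t => ?_)
    refine (slice_form_le hε hχ hF.meas hF.int t (hG.meas.comp measurable_prodMk_left)
      (hG.slice t)).trans ?_
    refine mul_le_mul' (ENNReal.rpow_le_rpow ?_ (by norm_num))
      (ENNReal.rpow_le_rpow (mul_le_mul' le_rfl (hG.l2 t)) (by norm_num))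
    exact (hF.restrict (hχ.left t) (fun s => hχ.le_one s t) (mS t)
      (fun s hs => hR s t (not_lt.1 hs))).energy hn hε
  have hh := ENNReal.lintegral_mul_le_Lp_mul_Lq volume Real.HolderConjugate.two_two
    mf.aemeasurable mg.aemeasurable
  simp only [ENNReal.rpow_ofNat, Pi.mul_apply] at hh
  refine h1.trans (hh.trans (le_of_eq ?_))
  simp only [hf, hg, e]
  have i1 : ∫⁻ t, C1 n * ∫⁻ s, (S t).indicator c s ^ 2 =
      C1 n * (2 * ENNReal.ofReal R * ∫⁻ s, c s ^ 2) := by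
    rw [lintegral_const_mul _ mI.lintegral_prod_right, lintegral_lintegral_swap mI.aemeasurable,
      ← lintegral_const_mul _ (mc.pow_const 2)]
    refine congrArg _ (lintegral_congr fun s => ?_)
    have : ∀ t, (S t).indicator c s ^ 2 = (Ioo (s - R) (s + R)).indicator (fun _ => c s ^ 2) t := by
      intro t
      have hmem : s ∈ S t ↔ t ∈ Ioo (s - R) (s + R) := by
        simp only [hS, mem_ofPred_eq, abs_lt, mem_Ioo]
        constructor <;> rintro ⟨h1, h2⟩ <;> constructor <;> linarith
      by_cases h : s ∈ S t
      · rw [indicator_of_mem h, indicator_of_mem (hmem.1 h)]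
      · rw [indicator_of_notMem h, indicator_of_notMem (fun h' => h (hmem.2 h'))]
        simp
    simp_rw [this]
    rw [lintegral_indicator measurableSet_Ioo, setLIntegral_const, Real.volume_Ioo, mul_comm]
    congr 1
    rw [← ENNReal.ofReal_ofNat, ← ENNReal.ofReal_mul (by norm_num)]
    congr 1
    ring
  have i2 : ∫⁻ t, 2 * (d t * two (-l / n)) ^ 2 = 2 * two (-l / n) ^ 2 * ∫⁻ t, d t ^ 2 := by
    have := hG.measc
    rw [← lintegral_const_mul _ (by fun_prop)]
    refine lintegral_congr fun t => ?_
    ring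
  rw [i1, i2, ← nrm_sq, ← nrm_sq]
  have e4 : (4 * C1 n : ℝ≥0∞) = 2 * (2 * C1 n) := by ring
  rw [e4]
  simp only [ENNReal.mul_rpow_of_nonneg _ _ (show (0 : ℝ) ≤ 1 / 2 by norm_num), e']
  ring

/-- Interactions between times at distance at least `R`: the dispersive estimate. -/
lemma Bf_far (hn : 3 ≤ n) (hε : 0 < ε) (hχ : IsCut χ) {R : ℝ} (hR0 : 0 < R)
    (hR : ∀ s t, |t - s| < R → χ s t = 0) {k l : ℤ} {c d : ℝ → ℝ≥0∞}
    (hF : IsAtom k c F) (hG : IsAtom l d G) :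
    ‖Bf ε χ F G‖ₑ ≤ ENNReal.ofReal (Dc n) * (ENNReal.ofReal (R ^ (1 - (n : ℝ) / 2)) *
      (two (c0 n * k) * two (c0 n * l))) * nrm c * nrm d := by
  set κ : ℝ → ℝ≥0∞ := {τ : ℝ | R ≤ |τ|}.indicator (disp n) with hκ
  have mκ : Measurable κ :=
    measurable_disp.indicator (measurableSet_le measurable_const (by fun_prop))
  have mF := hF.meas
  have mG := hG.meas
  have mc := hF.measc
  have md := hG.measc
  have hpt : ∀ q p : ℝ × Sp n, ‖ker ε p q * ((χ p.1 q.1 : ℂ) * F p)‖ₑ ≤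
      κ (q.1 - p.1) * ‖F p‖ₑ := fun q p => by
    by_cases h : |q.1 - p.1| < R
    · simp [hR _ _ h]
    · rw [hκ, indicator_of_mem (show q.1 - p.1 ∈ {τ : ℝ | R ≤ |τ|} from not_lt.1 h), enorm_mul]
      refine mul_le_mul' (enorm_ker_le hε p q ?_) ?_
      · intro he
        rw [he, sub_self, abs_zero] at h
        exact h hR0
      · rw [← ofReal_norm, ← ofReal_norm]
        exact ENNReal.ofReal_le_ofReal (hχ.norm_mul_le _ _)
  have hU : ∀ q, ‖U ε χ F q‖ₑ ≤ ∫⁻ s, κ (q.1 - s) * (c s * two (c0 n * k)) := fun q => by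
    refine (enorm_integral_le_lintegral_enorm _).trans ((lintegral_mono (hpt q)).trans ?_)
    rw [Measure.volume_eq_prod, lintegral_prod _ (by fun_prop)]
    refine lintegral_mono fun s => ?_
    simp only
    rw [lintegral_const_mul _ (by fun_prop)]
    exact mul_le_mul' le_rfl (hF.l1 s)
  have mH : Measurable fun t => ∫⁻ s, κ (t - s) * (c s * two (c0 n * k)) := by
    refine Measurable.lintegral_prod_right' (f := fun z : ℝ × ℝ =>
      κ (z.1 - z.2) * (c z.2 * two (c0 n * k))) ?_
    fun_prop
  calc ‖Bf ε χ F G‖ₑ ≤ ∫⁻ q : ℝ × Sp n, ‖G q‖ₑ * ∫⁻ s, κ (q.1 - s) * (c s * two (c0 n * k)) := by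
        refine (enorm_integral_le_lintegral_enorm _).trans (lintegral_mono fun q => ?_)
        rw [enorm_mul, RCLike.enorm_conj]
        exact mul_le_mul' le_rfl (hU q)
    _ = ∫⁻ t, (∫⁻ x, ‖G (t, x)‖ₑ) * ∫⁻ s, κ (t - s) * (c s * two (c0 n * k)) := by
        rw [Measure.volume_eq_prod, lintegral_prod _ (by fun_prop)]
        refine lintegral_congr fun t => ?_
        simp only
        rw [lintegral_mul_const _ (by fun_prop)]
    _ ≤ ∫⁻ t, (d t * two (c0 n * l)) * ∫⁻ s, κ (t - s) * (c s * two (c0 n * k)) := by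
        refine lintegral_mono fun t => mul_le_mul' (hG.l1 t) le_rfl
    _ = two (c0 n * k) * two (c0 n * l) * ∫⁻ t, ∫⁻ s, κ (t - s) * c s * d t := by
        have m2 : Measurable fun t => ∫⁻ s, κ (t - s) * c s * d t := by
          refine Measurable.lintegral_prod_right' (f := fun z : ℝ × ℝ =>
            κ (z.1 - z.2) * c z.2 * d z.1) ?_
          fun_prop
        rw [← lintegral_const_mul _ m2]
        refine lintegral_congr fun t => ?_
        rw [← lintegral_const_mul _ (by fun_prop), ← lintegral_const_mul _ (by fun_prop)]
        refine lintegral_congr fun s => ?_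
        ring
    _ ≤ two (c0 n * k) * two (c0 n * l) * ((∫⁻ τ, κ τ) * nrm c * nrm d) :=
        mul_le_mul' le_rfl (young mc md mκ)
    _ ≤ two (c0 n * k) * two (c0 n * l) * (ENNReal.ofReal (Dc n) *
          ENNReal.ofReal (R ^ (1 - (n : ℝ) / 2)) * nrm c * nrm d) := by
        refine mul_le_mul' le_rfl ?_
        gcongr
        exact disp_tail hn hR0
    _ = _ := by ring

/-- The constant in the interaction estimate. -/
def C2 (n : ℕ) : ℝ≥0∞ := (4 * C1 n) ^ (1 / 2 : ℝ) + ENNReal.ofReal (Dc n)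

/-- The case `k ≤ l`; the other one follows by exchanging the two atoms. -/
lemma Bf_atoms_aux (hn : 3 ≤ n) (hε : 0 < ε) (hχ : IsCut χ) {k l : ℤ} (hkl : k ≤ l)
    {c d : ℝ → ℝ≥0∞} (hF : IsAtom k c F) (hG : IsAtom l d G) :
    ‖Bf ε χ F G‖ₑ ≤ C2 n * two (-|(l - k : ℝ)| / (4 * n)) * nrm c * nrm d := by
  have hn' : (3 : ℝ) ≤ n := by exact_mod_cast hn
  have hn0 : (n : ℝ) ≠ 0 := by positivity
  have hkl' : (k : ℝ) ≤ l := by exact_mod_cast hkl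
  -- the splitting distance at which the near and the far contributions both decay
  set R : ℝ := 2 ^ (2 * ((3 * l + k) / 4 : ℝ) / n) with hR
  have hR0 : 0 < R := by positivity
  have mS : MeasurableSet {z : ℝ × ℝ | |z.2 - z.1| < R} :=
    measurableSet_lt (by fun_prop) measurable_const
  rw [abs_of_nonneg (sub_nonneg.2 hkl')]
  rw [Bf_add_cut (χ := χ) hε (hχ.restrict mS) (hχ.restrict mS.compl) (fun s t =>
    (indicator_self_add_compl_apply _ (Function.uncurry χ) (s, t)).symm) hF.meas hF.int hG.meas hG.int]
  refine (enorm_add_le _ _).trans ?_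
  have h1 := Bf_near hn hε (hχ.restrict mS) (R := R) (fun s t h => indicator_of_notMem
    (by simpa using h) _) hF hG
  have h2 := Bf_far hn hε (hχ.restrict mS.compl) hR0 (fun s t h => indicator_of_notMem
    (by simpa using h) _) hF hG
  refine (add_le_add h1 h2).trans ?_
  rw [C2, add_mul, add_mul, add_mul]
  have e1 : ENNReal.ofReal R ^ (1 / 2 : ℝ) * two (-l / n) ≤ two (-(l - k : ℝ) / (4 * n)) := by
    change two _ ^ (1 / 2 : ℝ) * _ ≤ _
    rw [two_rpow, ← two_add]
    refine two_mono (le_of_eq ?_)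
    field_simp
    ring
  have e2 : ENNReal.ofReal (R ^ (1 - (n : ℝ) / 2)) * (two (c0 n * k) * two (c0 n * l)) ≤
      two (-(l - k : ℝ) / (4 * n)) := by
    rw [hR, two_tail, ← two_add, ← two_add]
    refine two_mono ?_
    have e3 : 2 * ((3 * l + k) / 4 : ℝ) / n * (1 - n / 2) + (c0 n * k + c0 n * l) =
        -((l - k : ℝ) * ((n - 2) / (4 * n))) := by
      unfold c0
      field_simp
      ring
    rw [e3, neg_div, neg_le_neg_iff, div_eq_mul_inv]
    refine mul_le_mul_of_nonneg_left ?_ (sub_nonneg.2 hkl')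
    rw [← one_div]
    gcongr
    linarith
  gcongr

/-- Atoms at different scales are almost orthogonal. -/
lemma Bf_atoms (hn : 3 ≤ n) (hε : 0 < ε) (hχ : IsCut χ) {k l : ℤ}
    {c d : ℝ → ℝ≥0∞} (hF : IsAtom k c F) (hG : IsAtom l d G) :
    ‖Bf ε χ F G‖ₑ ≤ C2 n * two (-|(l - k : ℝ)| / (4 * n)) * nrm c * nrm d := by
  rcases le_total k l with h | h
  · exact Bf_atoms_aux hn hε hχ h hF hG
  · rw [Bf_swap hε hχ hF.meas hF.int hG.meas hG.int, RCLike.enorm_conj]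
    refine (Bf_atoms_aux hn hε hχ.swap h hG hF).trans (le_of_eq ?_)
    rw [abs_sub_comm, mul_right_comm]

end

end

end Strich

namespace Strich

noncomputable section

open Set Filter Topology
open scoped ComplexConjugate

set_option linter.unusedSectionVars false

variable {n : ℕ}

/-! ### Superpositions of atoms -/

/-- `∑ 2^{-|m|/(4n)}` over the integers. -/
def Wc (n : ℕ) : ℝ≥0∞ := ∑' m : ℤ, two (-|(m : ℝ)| / (4 * n))

lemma Wc_ne_top (hn : 3 ≤ n) : Wc n ≠ ∞ := by
  have hn' : (0 : ℝ) < n := by exact_mod_cast (by omega : 0 < n)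
  set r : ℝ := 2 ^ (-1 / (4 * n) : ℝ) with hr
  have hr0 : 0 ≤ r := by positivity
  have hr1 : r < 1 := Real.rpow_lt_one_of_one_lt_of_neg one_lt_two
    (div_neg_of_neg_of_pos (by norm_num) (by positivity))
  have e : ∀ m : ℤ, two (-|(m : ℝ)| / (4 * n)) = ENNReal.ofReal (r ^ m.natAbs) := fun m => by
    unfold two
    rw [hr, ← Real.rpow_natCast, ← Real.rpow_mul two_pos.le, Nat.cast_natAbs]
    congr 2
    push_cast
    ring
  have hs : Summable fun m : ℤ => r ^ m.natAbs := by
    refine Summable.of_nat_of_neg ?_ ?_ <;>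
      simpa using summable_geometric_of_lt_one hr0 hr1
  unfold Wc
  simp_rw [e]
  exact hs.tsum_ofReal_ne_top

/-- Schur's test for the off-diagonal decay. -/
lemma schur (K L : Finset ℤ) (x y : ℤ → ℝ≥0∞) :
    ∑ k ∈ K, ∑ l ∈ L, two (-|(l - k : ℝ)| / (4 * n)) * x k * y l ≤
      Wc n * (∑ k ∈ K, x k ^ 2) ^ (1 / 2 : ℝ) * (∑ l ∈ L, y l ^ 2) ^ (1 / 2 : ℝ) := by
  set w : ℤ → ℝ≥0∞ := fun m => two (-|(m : ℝ)| / (4 * n)) with hw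
  have e2 : ∀ a : ℝ≥0∞, a ^ (1 / 2 : ℝ) * a ^ (1 / 2 : ℝ) = a := fun a => by
    rw [← ENNReal.rpow_add_of_nonneg _ _ (by norm_num) (by norm_num)]; norm_num
  have e3 : ∀ a : ℝ≥0∞, (a ^ (1 / 2 : ℝ)) ^ 2 = a := fun a => by rw [sq, e2]
  have hsum1 : ∀ k, ∑ l ∈ L, w (l - k) ≤ Wc n := fun k => by
    refine (ENNReal.sum_le_tsum (f := fun l => w (l - k)) L).trans (le_of_eq ?_)
    exact (Equiv.subRight k).tsum_eq w
  have hsum2 : ∀ l, ∑ k ∈ K, w (l - k) ≤ Wc n := fun l => by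
    refine (ENNReal.sum_le_tsum (f := fun k => w (l - k)) K).trans (le_of_eq ?_)
    exact (Equiv.subLeft l).tsum_eq w
  have hh := ENNReal.inner_le_Lp_mul_Lq (K ×ˢ L) (fun z => w (z.2 - z.1) ^ (1 / 2 : ℝ) * x z.1)
    (fun z => w (z.2 - z.1) ^ (1 / 2 : ℝ) * y z.2) Real.HolderConjugate.two_two
  simp only [ENNReal.rpow_ofNat, mul_pow, e3] at hh
  calc _ = ∑ z ∈ K ×ˢ L, w (z.2 - z.1) ^ (1 / 2 : ℝ) * x z.1 *
        (w (z.2 - z.1) ^ (1 / 2 : ℝ) * y z.2) := by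
        rw [Finset.sum_product]
        refine Finset.sum_congr rfl fun k _ => Finset.sum_congr rfl fun l _ => ?_
        rw [mul_mul_mul_comm, e2, hw]
        simp only
        push_cast
        rw [mul_assoc]
    _ ≤ _ := hh
    _ ≤ (Wc n * ∑ k ∈ K, x k ^ 2) ^ (1 / 2 : ℝ) * (Wc n * ∑ l ∈ L, y l ^ 2) ^ (1 / 2 : ℝ) := by
        refine mul_le_mul' (ENNReal.rpow_le_rpow ?_ (by norm_num))
          (ENNReal.rpow_le_rpow ?_ (by norm_num))
        · rw [Finset.sum_product, Finset.mul_sum]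
          refine Finset.sum_le_sum fun k _ => ?_
          simp only
          rw [← Finset.sum_mul]
          exact mul_le_mul' (hsum1 k) le_rfl
        · rw [Finset.sum_product_right, Finset.mul_sum]
          refine Finset.sum_le_sum fun l _ => ?_
          simp only
          rw [← Finset.sum_mul]
          exact mul_le_mul' (hsum2 l) le_rfl
    _ = _ := by
        rw [ENNReal.mul_rpow_of_nonneg _ _ (by norm_num),
          ENNReal.mul_rpow_of_nonneg _ _ (by norm_num), mul_mul_mul_comm, e2, mul_assoc]

/-- A finite family of atoms, one for each scale. -/
def IsFam (K : Finset ℤ) (c : ℤ → ℝ → ℝ≥0∞) (Fs : ℤ → ℝ × Sp n → ℂ) : Prop :=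
  ∀ k ∈ K, IsAtom k (c k) (Fs k)

/-- The square of the atomic norm of a family. -/
def Es (K : Finset ℤ) (c : ℤ → ℝ → ℝ≥0∞) : ℝ≥0∞ := ∑ k ∈ K, ∫⁻ s, c k s ^ 2

/-- The superposition of a family. -/
def Sm (K : Finset ℤ) (Fs : ℤ → ℝ × Sp n → ℂ) (p : ℝ × Sp n) : ℂ := ∑ k ∈ K, Fs k p

/-- The constant in the bilinear estimate for superpositions of atoms. -/
def C3 (n : ℕ) : ℝ≥0∞ := C2 n * Wc n

lemma C3_ne_top (hn : 3 ≤ n) : C3 n ≠ ∞ := by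
  refine ENNReal.mul_ne_top ?_ (Wc_ne_top hn)
  unfold C2 C1
  refine ENNReal.add_ne_top.2 ⟨ENNReal.rpow_ne_top_of_nonneg (by norm_num) ?_,
    ENNReal.ofReal_ne_top⟩
  exact ENNReal.mul_ne_top (by simp) (by simp)

section

variable {ε : ℝ} {χ : ℝ → ℝ → ℝ} {K L : Finset ℤ} {c d : ℤ → ℝ → ℝ≥0∞}
  {Fs Gs : ℤ → ℝ × Sp n → ℂ}

lemma IsFam.meas (h : IsFam K c Fs) : Measurable (Sm K Fs) :=
  Finset.measurable_fun_sum K fun k hk => (h k hk).meas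

lemma IsFam.int (h : IsFam K c Fs) : Integrable (Sm K Fs) :=
  integrable_finsetSum K fun k hk => (h k hk).int

lemma IsFam.slice (h : IsFam K c Fs) (t : ℝ) : Integrable fun x => Sm K Fs (t, x) :=
  integrable_finsetSum K fun k hk => (h k hk).slice t

lemma IsFam.restrict (h : IsFam K c Fs) (hχ : IsCut χ) (t : ℝ) :
    IsFam K c fun k p => (χ p.1 t : ℂ) * Fs k p := fun k hk => by
  have := (h k hk).restrict (hχ.left t) (fun s => hχ.le_one s t) MeasurableSet.univ
    (fun s hs => absurd (mem_univ s) hs)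
  rwa [indicator_univ] at this

/-- The bilinear endpoint estimate. -/
lemma Bf_fam (hn : 3 ≤ n) (hε : 0 < ε) (hχ : IsCut χ) (hF : IsFam K c Fs) (hG : IsFam L d Gs) :
    ‖Bf ε χ (Sm K Fs) (Sm L Gs)‖ₑ ≤ C3 n * Es K c ^ (1 / 2 : ℝ) * Es L d ^ (1 / 2 : ℝ) := by
  have e := Bf_sum hε hχ K Fs (fun k hk => (hF k hk).meas) (fun k hk => (hF k hk).int)
    L Gs (fun k hk => (hG k hk).meas) (fun k hk => (hG k hk).int)
  change ‖Bf ε χ (fun p => ∑ k ∈ K, Fs k p) (fun p => ∑ l ∈ L, Gs l p)‖ₑ ≤ _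
  rw [e]
  calc _ ≤ ∑ k ∈ K, ∑ l ∈ L, ‖Bf ε χ (Fs k) (Gs l)‖ₑ :=
        (enorm_sum_le _ _).trans (Finset.sum_le_sum fun k _ => enorm_sum_le _ _)
    _ ≤ ∑ k ∈ K, ∑ l ∈ L, C2 n * (two (-|(l - k : ℝ)| / (4 * n)) * nrm (c k) * nrm (d l)) := by
        refine Finset.sum_le_sum fun k hk => Finset.sum_le_sum fun l hl => ?_
        refine (Bf_atoms hn hε hχ (hF k hk) (hG l hl)).trans (le_of_eq ?_)
        simp only [mul_assoc]
    _ = C2 n * ∑ k ∈ K, ∑ l ∈ L, two (-|(l - k : ℝ)| / (4 * n)) * nrm (c k) * nrm (d l) := by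
        simp_rw [Finset.mul_sum]
    _ ≤ _ := by
        refine (mul_le_mul' le_rfl (schur K L _ _)).trans (le_of_eq ?_)
        simp_rw [nrm_sq]
        simp only [C3, Es, mul_assoc]

/-- The dual homogeneous endpoint estimate. -/
lemma Nt_fam (hn : 3 ≤ n) (hε : 0 < ε) (hF : IsFam K c Fs) :
    Nt ε volume id (Sm K Fs) ≤ C3 n * Es K c := by
  rw [Nt_eq hε measurable_id hF.meas hF.int]
  have h := Bf_fam hn hε isCut_one hF hF
  simp only [Bf, U, Complex.ofReal_one, one_mul] at h
  refine h.trans (le_of_eq ?_)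
  rw [mul_assoc, ← ENNReal.rpow_add_of_nonneg _ _ (by norm_num) (by norm_num)]
  norm_num

end

end

end Strich

namespace Strich

noncomputable section

open Set Filter Topology
open scoped ComplexConjugate

set_option linter.unusedSectionVars false

variable {n : ℕ}

/-! ### Duality between atoms and `L²_t L^{p,2}_x` -/

lemma decr_le_of_bound (f : Sp n → ℂ) (N : ℝ) (h : ∀ x, ‖f x‖ ≤ N) (t : ℝ) :
    decr f t ≤ ENNReal.ofReal N := by
  have : level f t ⊆ Ioc 0 N := fun a ha => by
    refine ⟨ha.1, not_lt.1 fun hN => ?_⟩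
    have : distFn f a = 0 := by
      have : {x | a < ‖f x‖} = ∅ := by
        ext x
        simp only [mem_ofPred_eq, mem_empty_iff_false, iff_false, not_lt]
        exact (h x).trans hN.le
      rw [distFn, this, measure_empty]
    exact not_lt_zero (this ▸ ha.2)
  refine (measure_mono this).trans ?_
  rw [Real.volume_Ioc, sub_zero]

/-- Below the value of the rearrangement at `t`, level sets have measure more than `t`. -/
lemma lt_measure_of_lt_decr (f : Sp n → ℂ) (t : ℝ) (b : ℝ≥0∞) (h : b < decr f t) :
    ENNReal.ofReal t < volume {x | b < ‖f x‖ₑ} := by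
  have hb : b ≠ ∞ := h.ne_top
  have : ∃ a ∈ level f t, b.toReal < a := by
    by_contra! hcon
    have hs : level f t ⊆ Ioc 0 b.toReal := fun a ha => ⟨ha.1, hcon a ha⟩
    have := measure_mono (μ := volume) hs
    rw [Real.volume_Ioc, sub_zero, ENNReal.ofReal_toReal hb] at this
    exact absurd h (not_lt.2 this)
  obtain ⟨a, ha, hba⟩ := this
  refine ha.2.trans_le (measure_mono fun x hx => ?_)
  have hx : a < ‖f x‖ := hx
  have := hba.trans hx
  change b < ‖f x‖ₑ
  rwa [← ofReal_norm, ENNReal.lt_ofReal_iff_toReal_lt hb]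

/-- For bounded `v` of bounded support and every scale there is an atom that is aligned with `v`
and norms the corresponding dyadic piece of the rearrangement. -/
lemma exists_atom (v : ℝ × Sp n → ℂ) (hv : Measurable v) (N : ℝ)
    (hb : ∀ p, ‖v p‖ ≤ N) (hs : ∀ p, v p ≠ 0 → |p.1| ≤ N ∧ ‖p.2‖ ≤ N) (k : ℤ) :
    ∃ G : ℝ × Sp n → ℂ,
      IsAtom k (fun t => two (c0 n * k) * decr (fun x => v (t, x)) ((2 : ℝ) ^ k)) G ∧
      (∀ p, conj (G p) * v p = ((‖G p‖ * ‖v p‖ : ℝ) : ℂ)) ∧ (∀ p, v p = 0 → G p = 0) ∧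
      (∀ t, (two (c0 n * k) * decr (fun x => v (t, x)) ((2 : ℝ) ^ k)) ^ 2 ≤
        2 * ∫⁻ x, ‖G (t, x)‖ₑ * ‖v (t, x)‖ₑ) ∧
      ∫⁻ t, (two (c0 n * k) * decr (fun x => v (t, x)) ((2 : ℝ) ^ k)) ^ 2 ≠ ∞ := by
  set d : ℝ → ℝ≥0∞ := fun t => decr (fun x => v (t, x)) ((2 : ℝ) ^ k) with hd
  have md : Measurable d := by
    have := measurable_decr_time (u := fun t x => v (t, x)) hv
    exact this.comp (measurable_id.prodMk measurable_const)
  have hdN : ∀ t, d t ≤ (Icc (-N) N).indicator (fun _ => ENNReal.ofReal N) t := fun t => by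
    by_cases ht : t ∈ Icc (-N) N
    · rw [indicator_of_mem ht]
      exact decr_le_of_bound _ N (fun x => hb _) _
    · rw [indicator_of_notMem ht]
      have : ∀ x, ‖v (t, x)‖ ≤ 0 := fun x => by
        rw [norm_le_zero_iff]
        by_contra h0
        exact ht (abs_le.1 (hs _ h0).1)
      simpa using decr_le_of_bound _ 0 this ((2 : ℝ) ^ k)
  have dfin : ∀ t, d t ≠ ∞ := fun t =>
    ((decr_le_of_bound _ N (fun x => hb _) _).trans_lt ENNReal.ofReal_lt_top).ne
  have d1 : ∫⁻ t, d t ≠ ∞ := by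
    refine ((lintegral_mono hdN).trans_lt ?_).ne
    rw [lintegral_indicator_const measurableSet_Icc, Real.volume_Icc]
    exact ENNReal.mul_lt_top ENNReal.ofReal_lt_top ENNReal.ofReal_lt_top
  have d2 : ∫⁻ t, d t ^ 2 ≠ ∞ := by
    have : ∫⁻ t, d t ^ 2 ≤ ENNReal.ofReal N * ∫⁻ t, d t := by
      rw [← lintegral_const_mul _ md]
      refine lintegral_mono fun t => ?_
      rw [sq]
      exact mul_le_mul' (decr_le_of_bound _ N (fun x => hb _) _) le_rfl
    exact (this.trans_lt (ENNReal.mul_lt_top ENNReal.ofReal_lt_top d1.lt_top)).ne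
  -- the set where `v` exceeds half of its rearrangement at `2 ^ k`; its slices have measure larger
  -- than `2 ^ k` unless `d t = 0`
  set A : Set (ℝ × Sp n) := {p | d p.1 < 2 * ‖v p‖ₑ} with hA
  have mA : MeasurableSet A :=
    measurableSet_lt (md.comp measurable_fst) (hv.enorm.const_mul 2)
  set m : ℝ → ℝ≥0∞ := fun t => volume {x | (t, x) ∈ A} with hm
  have mm : Measurable m := measurable_measure_prodMk_left mA
  have mAs : ∀ t, MeasurableSet {x | (t, x) ∈ A} := fun t => measurable_prodMk_left mA
  have v0 : ∀ p ∈ A, v p ≠ 0 := fun p hp h0 => by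
    have hp : d p.1 < 2 * ‖v p‖ₑ := hp
    simp [h0] at hp
  have mfin : ∀ t, m t ≠ ∞ := fun t => by
    have : {x | (t, x) ∈ A} ⊆ Metric.closedBall 0 N := fun x hx => by
      rw [mem_closedBall_zero_iff]
      exact (hs _ (v0 _ hx)).2
    exact ((measure_mono this).trans_lt measure_closedBall_lt_top).ne
  have h2 : ENNReal.ofReal ((2 : ℝ) ^ k) = two k := by
    unfold two; rw [Real.rpow_intCast]
  have hmk : ∀ t, d t ≠ 0 → two k < m t := fun t ht => by
    have := lt_measure_of_lt_decr (fun x => v (t, x)) ((2 : ℝ) ^ k) (d t / 2)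
      (ENNReal.half_lt_self ht (dfin t))
    rw [h2] at this
    refine this.trans_le (measure_mono fun x hx => ?_)
    have hx : d t / 2 < ‖v (t, x)‖ₑ := hx
    change d t < 2 * ‖v (t, x)‖ₑ
    rw [ENNReal.div_lt_iff (by simp) (by simp)] at hx
    rwa [mul_comm]
  have m0 : ∀ t, d t ≠ 0 → m t ≠ 0 := fun t ht => (lt_of_le_of_lt zero_le (hmk t ht)).ne'
  -- the weight for which the slice at time `t` has the `L¹` norm required of an atom, with equality
  set W : ℝ → ℝ≥0∞ := fun t => two (2 * c0 n * k) * d t / m t with hW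
  have mW : Measurable W := (md.const_mul _).div mm
  have Wfin : ∀ t, W t ≠ ∞ := fun t => by
    by_cases ht : d t = 0
    · simp [hW, ht]
    · exact ENNReal.div_ne_top (ENNReal.mul_ne_top (two_ne_top _) (dfin t)) (m0 t ht)
  have Wm : ∀ t, W t * m t = two (2 * c0 n * k) * d t := fun t => by
    by_cases ht : d t = 0
    · simp [hW, ht]
    · exact ENNReal.div_mul_cancel (m0 t ht) (mfin t)
  set G : ℝ × Sp n → ℂ := fun p =>
    ((W p.1).toReal : ℂ) * A.indicator (fun p => v p / ‖v p‖) p with hG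
  have mG : Measurable G :=
    (Complex.measurable_ofReal.comp (mW.comp measurable_fst).ennreal_toReal).mul
      ((hv.div (Complex.measurable_ofReal.comp hv.norm)).indicator mA)
  have nG : ∀ p, ‖G p‖ = A.indicator (fun p => (W p.1).toReal) p := fun p => by
    simp only [hG, norm_mul, Complex.norm_real, norm_of_nonneg ENNReal.toReal_nonneg]
    by_cases hp : p ∈ A
    · have := norm_ne_zero_iff.2 (v0 p hp)
      rw [indicator_of_mem hp, indicator_of_mem hp, norm_div, Complex.norm_real, norm_norm,
        div_self this, mul_one]
    · simp [indicator_of_notMem hp]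
  have eG : ∀ p, ‖G p‖ₑ = A.indicator (fun p => W p.1) p := fun p => by
    rw [← ofReal_norm, nG]
    by_cases hp : p ∈ A
    · rw [indicator_of_mem hp, indicator_of_mem hp, ENNReal.ofReal_toReal (Wfin _)]
    · simp [indicator_of_notMem hp]
  have eGs : ∀ t x, ‖G (t, x)‖ₑ = {x | (t, x) ∈ A}.indicator (fun _ => W t) x := fun t x => eG _
  have l1 : ∀ t, ∫⁻ x, ‖G (t, x)‖ₑ = two (2 * c0 n * k) * d t := fun t => by
    simp_rw [eGs]
    rw [lintegral_indicator_const (mAs t)]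
    exact Wm t
  have l2 : ∀ t, ∫⁻ x, ‖G (t, x)‖ₑ ^ 2 ≤ (two (c0 n * k) * d t * two (-k / n)) ^ 2 := fun t => by
    have e : ∀ x, ‖G (t, x)‖ₑ ^ 2 = {x | (t, x) ∈ A}.indicator (fun _ => W t ^ 2) x := fun x => by
      rw [eGs]
      by_cases hx : x ∈ {x | (t, x) ∈ A}
      · rw [indicator_of_mem hx, indicator_of_mem hx]
      · rw [indicator_of_notMem hx, indicator_of_notMem hx, zero_pow two_ne_zero]
    simp_rw [e]
    rw [lintegral_indicator_const (mAs t)]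
    change W t ^ 2 * m t ≤ _
    by_cases ht : d t = 0
    · simp [hW, ht]
    calc W t ^ 2 * m t = two (2 * c0 n * k) * d t * W t := by rw [← Wm]; ring
      _ ≤ two (2 * c0 n * k) * d t * (two (2 * c0 n * k) * d t / two k) := by
          refine mul_le_mul' le_rfl ?_
          exact ENNReal.div_le_div_left (hmk t ht).le _
      _ = (two (c0 n * k) * d t * two (-k / n)) ^ 2 := by
          have e1 : (two (k : ℝ))⁻¹ = two (-k) := by
            refine (ENNReal.eq_inv_of_mul_eq_one_left ?_).symm
            rw [← two_add, neg_add_cancel, two_zero]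
          rw [div_eq_mul_inv, e1]
          have e2 : two (2 * c0 n * k) * two (2 * c0 n * k) * two (-k) =
              two (c0 n * k) ^ 2 * two (-k / n) ^ 2 := by
            rw [two_pow, two_pow, ← two_add, ← two_add, ← two_add]
            congr 1
            unfold c0
            push_cast
            ring
          calc _ = (two (2 * c0 n * k) * two (2 * c0 n * k) * two (-k)) * d t ^ 2 := by ring
            _ = _ := by rw [e2]; ring
  have ecc : two (2 * c0 n * k) = two (c0 n * k) * two (c0 n * k) := by
    rw [← two_add]; congr 1; ring
  refine ⟨G, ⟨mG, ⟨mG.aestronglyMeasurable, ?_⟩, md.const_mul _,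
    fun t => ENNReal.mul_ne_top (two_ne_top _) (dfin t), fun t => ?_, l2⟩, fun p => ?_,
    fun p hp => ?_, fun t => ?_, ?_⟩
  · change ∫⁻ p, ‖G p‖ₑ ∂(volume.prod volume) < ∞
    rw [lintegral_prod _ mG.enorm.aemeasurable]
    simp_rw [l1]
    rw [lintegral_const_mul _ md]
    exact ENNReal.mul_lt_top (two_ne_top _).lt_top d1.lt_top
  · rw [l1, ecc]
    exact le_of_eq (by ring)
  · rw [nG]
    simp only [hG]
    by_cases hp : p ∈ A
    · have h0 : (‖v p‖ : ℂ) ≠ 0 := Complex.ofReal_ne_zero.2 (norm_ne_zero_iff.2 (v0 p hp))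
      rw [indicator_of_mem hp, indicator_of_mem hp]
      simp only [map_mul, map_div₀, Complex.conj_ofReal]
      push_cast
      have : conj (v p) * v p = (‖v p‖ : ℂ) * ‖v p‖ := by
        rw [Complex.conj_mul', sq]
      calc _ = ((W p.1).toReal : ℂ) * ((conj (v p) * v p) / ‖v p‖) := by ring
        _ = _ := by rw [this, mul_div_assoc, div_self h0, mul_one]
    · simp [indicator_of_notMem hp]
  · have : p ∉ A := fun h => v0 p h hp
    simp [hG, indicator_of_notMem this]
  · -- on the support of the atom `2‖v‖` exceeds `d`
    calc (two (c0 n * k) * d t) ^ 2 = (W t * m t) * d t := by rw [Wm, ecc]; ring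
      _ = ∫⁻ x, ‖G (t, x)‖ₑ * d t := by
          rw [lintegral_mul_const _ (show Measurable fun x => ‖G (t, x)‖ₑ from
            (mG.comp measurable_prodMk_left).enorm), l1, Wm]
      _ ≤ ∫⁻ x, 2 * (‖G (t, x)‖ₑ * ‖v (t, x)‖ₑ) := by
          refine lintegral_mono fun x => ?_
          simp only
          by_cases hx : (t, x) ∈ A
          · have hx : d t < 2 * ‖v (t, x)‖ₑ := hx
            calc _ ≤ ‖G (t, x)‖ₑ * (2 * ‖v (t, x)‖ₑ) := mul_le_mul' le_rfl hx.le
              _ = _ := by ring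
          · rw [eG, indicator_of_notMem hx]; simp
      _ = _ := lintegral_const_mul _
          ((mG.enorm.mul hv.enorm).comp measurable_prodMk_left)
  · simp_rw [mul_pow]
    rw [lintegral_const_mul _ (md.pow_const 2)]
    exact ENNReal.mul_ne_top (ENNReal.pow_ne_top (two_ne_top _)) d2

lemma le_of_le_mul_sqrt {a M : ℝ≥0∞} (ha : a ≠ ∞) (h : a ≤ M * a ^ (1 / 2 : ℝ)) : a ≤ M ^ 2 := by
  rcases eq_or_ne a 0 with rfl | h0
  · exact zero_le
  have e2 : a = a ^ (1 / 2 : ℝ) * a ^ (1 / 2 : ℝ) := by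
    rw [← ENNReal.rpow_add_of_nonneg _ _ (by norm_num) (by norm_num)]; norm_num
  have hs0 : a ^ (1 / 2 : ℝ) ≠ 0 := by simp [h0]
  have hst : a ^ (1 / 2 : ℝ) ≠ ∞ := by simp [ha]
  have h3 : a ^ (1 / 2 : ℝ) ≤ M := by
    refine (ENNReal.mul_le_mul_iff_left hs0 hst).1 ?_
    rw [← e2]; exact h
  rw [e2, sq]
  exact mul_le_mul' h3 h3

/-- Testing against superpositions of atoms controls the dyadic pieces of the rearrangement of a
truncation. -/
lemma dual_sum (u : ℝ × Sp n → ℂ) (hu : Measurable u) (M : ℝ≥0∞)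
    (h : ∀ (K : Finset ℤ) (c : ℤ → ℝ → ℝ≥0∞) (Gs : ℤ → ℝ × Sp n → ℂ), IsFam K c Gs →
      ‖∫ q, conj (Sm K Gs q) * u q‖ₑ ≤ M * Es K c ^ (1 / 2 : ℝ))
    (S : Set (ℝ × Sp n)) (hS : MeasurableSet S) (N : ℝ) (hN : 0 ≤ N)
    (hSN : ∀ p ∈ S, |p.1| ≤ N ∧ ‖p.2‖ ≤ N ∧ ‖u p‖ ≤ N) (K : Finset ℤ) :
    ∑ k ∈ K, ∫⁻ t, (two (c0 n * k) *
      decr (fun x => S.indicator u (t, x)) ((2 : ℝ) ^ k)) ^ 2 ≤ 4 * M ^ 2 := by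
  set v := S.indicator u with hvdef
  have hv : Measurable v := hu.indicator hS
  have hb : ∀ p, ‖v p‖ ≤ N := fun p => by
    by_cases hp : p ∈ S
    · rw [hvdef, indicator_of_mem hp]; exact (hSN p hp).2.2
    · rw [hvdef, indicator_of_notMem hp]; simpa
  have hs : ∀ p, v p ≠ 0 → |p.1| ≤ N ∧ ‖p.2‖ ≤ N := fun p hp => by
    have := hSN p (mem_of_indicator_ne_zero hp)
    exact ⟨this.1, this.2.1⟩
  choose Gs hat hal hz hlow hfin using exists_atom v hv N hb hs
  set c : ℤ → ℝ → ℝ≥0∞ := fun k t =>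
    two (c0 n * k) * decr (fun x => v (t, x)) ((2 : ℝ) ^ k) with hc
  have hK : IsFam K c Gs := fun k _ => hat k
  have h1 := h K c Gs hK
  have hi : ∀ k, Integrable fun q => ‖Gs k q‖ * ‖v q‖ := fun k =>
    ((hat k).int.norm.mul_const N).mono'
      ((hat k).meas.norm.mul hv.norm).aestronglyMeasurable (Eventually.of_forall fun q => by
        rw [norm_mul, norm_norm, norm_norm]
        exact mul_le_mul_of_nonneg_left (hb q) (norm_nonneg _))
  have e1 : ∀ q, conj (Sm K Gs q) * u q = ((∑ k ∈ K, ‖Gs k q‖ * ‖v q‖ : ℝ) : ℂ) := fun q => by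
    have e0 : ∀ k, conj (Gs k q) * u q = conj (Gs k q) * v q := fun k => by
      by_cases hq : q ∈ S
      · rw [hvdef, indicator_of_mem hq]
      · have : v q = 0 := indicator_of_notMem hq _
        rw [this, hz k q this]; simp
    simp only [Sm, map_sum, Finset.sum_mul, Complex.ofReal_sum]
    exact Finset.sum_congr rfl fun k _ => by rw [e0, hal]
  have e2 : ‖∫ q, conj (Sm K Gs q) * u q‖ₑ = ∑ k ∈ K, ∫⁻ q, ‖Gs k q‖ₑ * ‖v q‖ₑ := by
    simp_rw [e1]
    rw [integral_complex_ofReal, ← ofReal_norm, Complex.norm_real, norm_of_nonneg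
      (integral_nonneg fun q => Finset.sum_nonneg fun k _ => by positivity),
      integral_finsetSum K fun k _ => hi k, ENNReal.ofReal_sum_of_nonneg
        fun k _ => integral_nonneg fun q => by positivity]
    refine Finset.sum_congr rfl fun k _ => ?_
    rw [ofReal_integral_eq_lintegral_ofReal (hi k) (Eventually.of_forall fun q => by positivity)]
    refine lintegral_congr fun q => ?_
    rw [ENNReal.ofReal_mul (norm_nonneg _), ofReal_norm, ofReal_norm]
  have e3 : Es K c ≤ 2 * ∑ k ∈ K, ∫⁻ q, ‖Gs k q‖ₑ * ‖v q‖ₑ := by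
    rw [Finset.mul_sum]
    refine Finset.sum_le_sum fun k _ => ?_
    have mm : Measurable fun q => ‖Gs k q‖ₑ * ‖v q‖ₑ := (hat k).meas.enorm.mul hv.enorm
    change _ ≤ 2 * ∫⁻ q, ‖Gs k q‖ₑ * ‖v q‖ₑ ∂(volume.prod volume)
    rw [lintegral_prod _ mm.aemeasurable, ← lintegral_const_mul _ mm.lintegral_prod_right']
    exact lintegral_mono fun t => hlow k t
  have hEfin : Es K c ≠ ∞ := (ENNReal.sum_lt_top.2 fun k _ => (hfin k).lt_top).ne
  -- the sum to be bounded is `Es K c`; being finite, it can be absorbed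
  have h4 : Es K c ≤ 2 * M * Es K c ^ (1 / 2 : ℝ) := by
    refine e3.trans ?_
    rw [← e2, mul_assoc]
    exact mul_le_mul' le_rfl h1
  refine (le_of_le_mul_sqrt hEfin h4).trans (le_of_eq ?_)
  rw [mul_pow]
  norm_num

/-- Functions with bounded pairings against superpositions of atoms belong to `L²_t L^{p,2}_x`,
where `p = 2n/(n-2)`. -/
lemma dual_endpoint (u : ℝ × Sp n → ℂ) (hu : Measurable u) (M : ℝ≥0∞)
    (h : ∀ (K : Finset ℤ) (c : ℤ → ℝ → ℝ≥0∞) (Gs : ℤ → ℝ × Sp n → ℂ), IsFam K c Gs →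
      ‖∫ q, conj (Sm K Gs q) * u q‖ₑ ≤ M * Es K c ^ (1 / 2 : ℝ)) :
    ∫⁻ t, Lsq (c0 n) (fun x => u (t, x)) ≤ 4 * M ^ 2 := by
  set S : ℕ → Set (ℝ × Sp n) := fun N => {p | |p.1| ≤ N ∧ ‖p.2‖ ≤ N ∧ ‖u p‖ ≤ N} with hS
  have mS : ∀ N, MeasurableSet (S N) := fun N =>
    (measurableSet_le measurable_fst.norm measurable_const).inter
      ((measurableSet_le measurable_snd.norm measurable_const).inter
        (measurableSet_le hu.norm measurable_const))
  have mv : ∀ N, Measurable (Function.uncurry fun t x => (S N).indicator u (t, x)) := fun N =>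
    hu.indicator (mS N)
  have hc : 2 * c0 n ≤ 1 := by
    unfold c0
    have : (0 : ℝ) ≤ 1 / n := by positivity
    linarith
  have step : ∀ N : ℕ, ∫⁻ t, Lsq (c0 n) (fun x => (S N).indicator u (t, x)) ≤ 4 * M ^ 2 :=
      fun N => by
    calc _ ≤ ∫⁻ t, ∑' k : ℤ, (two (c0 n * k) *
          decr (fun x => (S N).indicator u (t, x)) ((2 : ℝ) ^ k)) ^ 2 := by
          refine lintegral_mono fun t => (Lsq_le_tsum _ hc _).trans (le_of_eq ?_)
          refine tsum_congr fun k => ?_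
          rw [mul_pow, two_pow]
          congr 2
          push_cast
          ring_nf
      _ = ∑' k : ℤ, ∫⁻ t, (two (c0 n * k) *
          decr (fun x => (S N).indicator u (t, x)) ((2 : ℝ) ^ k)) ^ 2 := by
          refine lintegral_tsum fun k => ?_
          have := (measurable_decr_time (mv N)).comp
            (measurable_id.prodMk (measurable_const (a := (2 : ℝ) ^ k)))
          exact ((this.const_mul _).pow_const 2).aemeasurable
      _ ≤ _ := by
          rw [ENNReal.tsum_eq_iSup_sum]
          exact iSup_le fun K => dual_sum u hu M h (S N) (mS N) N (Nat.cast_nonneg N)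
            (fun p hp => hp) K
  calc _ ≤ ∫⁻ t, liminf (fun N => Lsq (c0 n) (fun x => (S N).indicator u (t, x))) atTop := by
        refine lintegral_mono fun t => Lsq_fatou _ _ _
          (fun N => (mv N).comp measurable_prodMk_left) fun x a _ hx => ?_
        filter_upwards [eventually_ge_atTop ⌈max |t| (max ‖x‖ ‖u (t, x)‖)⌉₊] with N hN
        have h3 := Nat.ceil_le.1 hN
        rw [max_le_iff, max_le_iff] at h3
        rwa [indicator_of_mem (show (t, x) ∈ S N from h3)]
    _ ≤ liminf (fun N => ∫⁻ t, Lsq (c0 n) (fun x => (S N).indicator u (t, x))) atTop :=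
        lintegral_liminf_le fun N => measurable_Lsq (mv N) _
    _ ≤ _ := liminf_le_of_le (by isBoundedDefault) fun b hb => by
        obtain ⟨N, hN⟩ := hb.exists
        exact hN.trans (step N)

/-- Functions on `ℝⁿ` with bounded pairings against integrable functions of finite `L²` norm
belong to `L²`. -/
lemma dual_slice (w : Sp n → ℂ) (hw : Measurable w) (M : ℝ≥0∞)
    (h : ∀ g : Sp n → ℂ, Measurable g → Integrable g → ∫⁻ x, ‖g x‖ₑ ^ 2 ≠ ∞ →
      ‖∫ x, conj (g x) * w x‖ₑ ≤ M * (∫⁻ x, ‖g x‖ₑ ^ 2) ^ (1 / 2 : ℝ)) :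
    ∫⁻ x, ‖w x‖ₑ ^ 2 ≤ M ^ 2 := by
  set S : ℕ → Set (Sp n) := fun N => {x | ‖x‖ ≤ N ∧ ‖w x‖ ≤ N} with hS
  have mS : ∀ N, MeasurableSet (S N) := fun N =>
    (measurableSet_le measurable_norm measurable_const).inter
      (measurableSet_le hw.norm measurable_const)
  have mw : ∀ N, Measurable ((S N).indicator w) := fun N => hw.indicator (mS N)
  have step : ∀ N : ℕ, ∫⁻ x, ‖(S N).indicator w x‖ₑ ^ 2 ≤ M ^ 2 := fun N => by
    set g := (S N).indicator w with hg
    have gb : ∀ x, ‖g x‖ ≤ (Metric.closedBall (0 : Sp n) N).indicator (fun _ => (N : ℝ)) x :=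
        fun x => by
      by_cases hx : x ∈ S N
      · rw [hg, indicator_of_mem hx, indicator_of_mem (by simpa using hx.1)]
        exact hx.2
      · rw [hg, indicator_of_notMem hx, norm_zero]
        exact indicator_nonneg (fun _ _ => Nat.cast_nonneg N) x
    have ib : Integrable fun x =>
        (Metric.closedBall (0 : Sp n) N).indicator (fun _ => (N : ℝ)) x :=
      (integrable_indicator_iff measurableSet_closedBall).2
        (integrableOn_const measure_closedBall_lt_top.ne)
    have ig : Integrable g := ib.mono' (mw N).aestronglyMeasurable (Eventually.of_forall gb)
    have gN : ∀ x, ‖g x‖ ≤ N := fun x => (gb x).trans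
      (indicator_le_self' (fun _ _ => Nat.cast_nonneg N) x)
    have ig2 : Integrable fun x => ‖g x‖ ^ 2 :=
      (ig.norm.const_mul N).mono' ((mw N).norm.pow_const 2).aestronglyMeasurable
        (Eventually.of_forall fun x => by
          rw [norm_pow, norm_norm, sq]
          exact mul_le_mul_of_nonneg_right (gN x) (norm_nonneg _))
    have e1 : ∀ x, conj (g x) * w x = ((‖g x‖ ^ 2 : ℝ) : ℂ) := fun x => by
      have : conj (g x) * w x = conj (g x) * g x := by
        by_cases hx : x ∈ S N
        · rw [hg, indicator_of_mem hx]
        · rw [hg, indicator_of_notMem hx]; simp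
      rw [this, Complex.conj_mul']
      push_cast
      rfl
    have e2 : ‖∫ x, conj (g x) * w x‖ₑ = ∫⁻ x, ‖g x‖ₑ ^ 2 := by
      simp_rw [e1]
      rw [integral_complex_ofReal, ← ofReal_norm, Complex.norm_real, norm_of_nonneg
        (integral_nonneg fun q => by positivity),
        ofReal_integral_eq_lintegral_ofReal ig2 (Eventually.of_forall fun q => by positivity)]
      refine lintegral_congr fun q => ?_
      rw [ENNReal.ofReal_pow (norm_nonneg _), ofReal_norm]
    have hf : ∫⁻ x, ‖g x‖ₑ ^ 2 ≠ ∞ := by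
      rw [← e2]; exact enorm_ne_top
    have := h g (mw N) ig hf
    rw [e2] at this
    exact le_of_le_mul_sqrt hf this
  calc _ ≤ ∫⁻ x, liminf (fun N => ‖(S N).indicator w x‖ₑ ^ 2) atTop := by
        refine lintegral_mono fun x => ?_
        refine le_of_eq (Tendsto.liminf_eq ?_).symm
        refine tendsto_const_nhds.congr' ?_
        filter_upwards [eventually_ge_atTop ⌈max ‖x‖ ‖w x‖⌉₊] with N hN
        have h3 := Nat.ceil_le.1 hN
        rw [max_le_iff] at h3
        rw [indicator_of_mem (show x ∈ S N from h3)]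
    _ ≤ liminf (fun N => ∫⁻ x, ‖(S N).indicator w x‖ₑ ^ 2) atTop :=
        lintegral_liminf_le fun N => (mw N).enorm.pow_const 2
    _ ≤ _ := liminf_le_of_le (by isBoundedDefault) fun b hb => by
        obtain ⟨N, hN⟩ := hb.exists
        exact hN.trans (step N)

end

end Strich

namespace Strich

noncomputable section

open Set Filter Topology
open scoped ComplexConjugate

set_option linter.unusedSectionVars false

variable {n : ℕ}

/-! ### The Strichartz estimates for the regularised flow -/

/-- The reciprocal of the space exponent `r` of the admissible pair with `1 / q = θ / 2`. -/
def cc (n : ℕ) (θ : ℝ) : ℝ := θ * c0 n + (1 - θ) * (1 / 2)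

/-- The square of the norm of `g^{1/2}` in `L^q(ℝ)`, where `1 / q = θ / 2`. -/
def mixN (θ : ℝ) (g : ℝ → ℝ≥0∞) : ℝ≥0∞ :=
  if θ = 0 then essSup g volume else (∫⁻ t, g t ^ (1 / θ)) ^ θ

lemma half_half (a : ℝ≥0∞) : a ^ (1 / 2 : ℝ) * a ^ (1 / 2 : ℝ) = a := by
  rw [← ENNReal.rpow_add_of_nonneg _ _ (by norm_num) (by norm_num)]; norm_num

/-- The two endpoints imply the bounds for all admissible pairs. -/
lemma mixN_interp {θ : ℝ} (h0 : 0 ≤ θ) (h1 : θ ≤ 1) (u : ℝ → Sp n → ℂ)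
    (hu : Measurable (Function.uncurry u)) (A : ℝ≥0∞) (hs : ∀ t, Lsq (1 / 2) (u t) ≤ A)
    (he : ∫⁻ t, Lsq (c0 n) (u t) ≤ A) : mixN θ (fun t => Lsq (cc n θ) (u t)) ≤ A := by
  unfold mixN
  split_ifs with h
  · subst h
    refine essSup_le_of_ae_le _ (Eventually.of_forall fun t => ?_)
    have : cc n 0 = 1 / 2 := by unfold cc; ring
    rw [this]
    exact hs t
  · have hpos : 0 < θ := lt_of_le_of_ne h0 (Ne.symm h)
    have step : ∫⁻ t, Lsq (cc n θ) (u t) ^ (1 / θ) ≤ A ^ (1 / θ) := by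
      calc _ ≤ ∫⁻ t, Lsq (c0 n) (u t) * A ^ ((1 - θ) / θ) := by
            refine lintegral_mono fun t => ?_
            refine (ENNReal.rpow_le_rpow (Lsq_interp (c0 n) θ h0 h1 (u t))
              (by positivity)).trans ?_
            rw [ENNReal.mul_rpow_of_nonneg _ _ (by positivity), ← ENNReal.rpow_mul,
              ← ENNReal.rpow_mul, mul_one_div_cancel h, ENNReal.rpow_one, mul_one_div]
            exact mul_le_mul' le_rfl (ENNReal.rpow_le_rpow (hs t)
              (div_nonneg (by linarith) h0))
        _ ≤ A * A ^ ((1 - θ) / θ) := by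
            rw [lintegral_mul_const _ (measurable_Lsq hu _)]
            exact mul_le_mul' he le_rfl
        _ = A ^ (1 / θ) := by
            nth_rewrite 1 [← ENNReal.rpow_one A]
            rw [← ENNReal.rpow_add_of_nonneg _ _ zero_le_one (div_nonneg (by linarith) h0)]
            congr 1
            field_simp
            ring
    refine (ENNReal.rpow_le_rpow step h0).trans (le_of_eq ?_)
    rw [← ENNReal.rpow_mul, one_div_mul_cancel h, ENNReal.rpow_one]

/-- Hölder's inequality in time. -/
lemma time_holder {θ : ℝ} (h0 : 0 ≤ θ) (h1 : θ ≤ 1) (a b : ℝ → ℝ≥0∞) (ha : Measurable a)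
    (hb : Measurable b) : ∫⁻ t, a t ^ (1 / 2 : ℝ) * b t ^ (1 / 2 : ℝ) ≤
      mixN (2 - θ) a ^ (1 / 2 : ℝ) * mixN θ b ^ (1 / 2 : ℝ) := by
  have h2 : 2 - θ ≠ 0 := by linarith
  unfold mixN
  rw [if_neg h2]
  split_ifs with h
  · subst h
    have e : ∀ᵐ t, a t ^ (1 / 2 : ℝ) * b t ^ (1 / 2 : ℝ) ≤
        a t ^ (1 / 2 : ℝ) * essSup b volume ^ (1 / 2 : ℝ) := by
      filter_upwards [ae_le_essSup (f := b)] with t ht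
      exact mul_le_mul' le_rfl (ENNReal.rpow_le_rpow ht (by norm_num))
    refine (lintegral_mono_ae e).trans ?_
    rw [lintegral_mul_const _ (ha.pow_const _), ← ENNReal.rpow_mul]
    norm_num
  · have := ENNReal.lintegral_mul_norm_pow_le (μ := volume) (f := fun t => a t ^ (1 / (2 - θ)))
      (g := fun t => b t ^ (1 / θ)) (ha.pow_const _).aemeasurable (hb.pow_const _).aemeasurable
      (p := (2 - θ) / 2) (q := θ / 2) (by linarith) (by linarith) (by ring)
    simp_rw [← ENNReal.rpow_mul] at this ⊢
    have e1 : 1 / (2 - θ) * ((2 - θ) / 2) = 1 / 2 := by field_simp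
    have e2 : 1 / θ * (θ / 2) = 1 / 2 := by field_simp
    rw [e1, e2] at this
    rw [show (2 - θ) * (1 / 2) = (2 - θ) / 2 by ring, show θ * (1 / 2) = θ / 2 by ring]
    exact this

/-- Hölder's inequality for space-time Lorentz norms. -/
lemma pair_holder {θ : ℝ} (h0 : 0 ≤ θ) (h1 : θ ≤ 1) {F u : ℝ × Sp n → ℂ} (hF : Measurable F)
    (hu : Measurable u) : ∫⁻ p, ‖F p‖ₑ * ‖u p‖ₑ ≤
      mixN (2 - θ) (fun t => Lsq (1 - cc n θ) fun x => F (t, x)) ^ (1 / 2 : ℝ) *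
        mixN θ (fun t => Lsq (cc n θ) fun x => u (t, x)) ^ (1 / 2 : ℝ) := by
  have m : Measurable fun p => ‖F p‖ₑ * ‖u p‖ₑ := hF.enorm.mul hu.enorm
  change ∫⁻ p, ‖F p‖ₑ * ‖u p‖ₑ ∂(volume.prod volume) ≤ _
  rw [lintegral_prod _ m.aemeasurable]
  refine le_trans (lintegral_mono fun t => ?_) (time_holder h0 h1 _ _
    (measurable_Lsq (u := fun t x => F (t, x)) hF _)
    (measurable_Lsq (u := fun t x => u (t, x)) hu _))
  have := lorentz_holder (cc n θ) (fun x => u (t, x)) (fun x => F (t, x))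
    (hu.comp measurable_prodMk_left) (hF.comp measurable_prodMk_left)
  rw [mul_comm] at this
  refine le_trans (le_of_eq (lintegral_congr fun x => ?_)) this
  exact mul_comm _ _

/-- The constant in the estimates for superpositions of atoms. -/
def C4 (n : ℕ) : ℝ≥0∞ := 4 * C3 n ^ 2 + 2 * C3 n

/-- The constant in the homogeneous estimates. -/
def C5 (n : ℕ) : ℝ≥0∞ := 8 * C3 n + 4

/-- The constant in the inhomogeneous estimates. -/
def C6 (n : ℕ) : ℝ≥0∞ := C5 n + 4 * C4 n

lemma C6_ne_top (hn : 3 ≤ n) : C6 n ≠ ∞ := by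
  have := C3_ne_top hn
  unfold C6 C5 C4
  finiteness

section

variable {ε θ : ℝ} {χ : ℝ → ℝ → ℝ} {K : Finset ℤ} {c : ℤ → ℝ → ℝ≥0∞} {Gs : ℤ → ℝ × Sp n → ℂ}
  {F : ℝ × Sp n → ℂ}

/-- The estimates for superpositions of atoms at all admissible exponents. The time cut-off keeps
each atom an atom, so it does not affect the constant. -/
lemma fam_mixed (hn : 3 ≤ n) (hε : 0 < ε) (hχ : IsCut χ) (hG : IsFam K c Gs) (h0 : 0 ≤ θ)
    (h1 : θ ≤ 1) :
    mixN θ (fun t => Lsq (cc n θ) fun x => U ε χ (Sm K Gs) (t, x)) ≤ C4 n * Es K c := by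
  have mU := measurable_U hε hχ hG.meas
  refine mixN_interp h0 h1 (fun t x => U ε χ (Sm K Gs) (t, x)) mU _ (fun t => ?_) ?_
  · have mt : Measurable fun x => U ε χ (Sm K Gs) (t, x) := mU.comp measurable_prodMk_left
    rw [Lsq_half _ mt]
    refine (dual_slice _ mt ((2 * (C3 n * Es K c)) ^ (1 / 2 : ℝ)) fun g mg ig _ => ?_).trans ?_
    · refine (slice_form_le hε hχ hG.meas hG.int t mg ig).trans ?_
      have h3 : Nt ε volume id (fun p => (χ p.1 t : ℂ) * Sm K Gs p) ≤ C3 n * Es K c := by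
        have e : (fun p => (χ p.1 t : ℂ) * Sm K Gs p) = Sm K fun k p => (χ p.1 t : ℂ) * Gs k p :=
          funext fun p => Finset.mul_sum _ _ _
        rw [e]
        exact Nt_fam hn hε (hG.restrict hχ t)
      calc _ ≤ (C3 n * Es K c) ^ (1 / 2 : ℝ) * (2 * ∫⁻ x, ‖g x‖ₑ ^ 2) ^ (1 / 2 : ℝ) :=
            mul_le_mul' (ENNReal.rpow_le_rpow h3 (by norm_num)) le_rfl
        _ = _ := by
            rw [← ENNReal.mul_rpow_of_nonneg _ _ (by norm_num),
              ← ENNReal.mul_rpow_of_nonneg _ _ (by norm_num)]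
            congr 1
            ring
    · rw [sq, half_half, C4, add_mul]
      refine le_trans (le_of_eq ?_) le_add_self
      ring
  · refine (dual_endpoint _ mU (C3 n * Es K c ^ (1 / 2 : ℝ)) fun L d Fs hF =>
      Bf_fam hn hε hχ hG hF).trans ?_
    rw [mul_pow, sq (Es K c ^ (1 / 2 : ℝ)), half_half, C4, add_mul]
    refine le_trans (le_of_eq ?_) le_self_add
    ring

/-- The regularised free evolution with datum `g` at time `t₀`. -/
def Hg (ε t₀ : ℝ) (g : Sp n → ℂ) (q : ℝ × Sp n) : ℂ := ∫ y, ker ε (t₀, y) q * g y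

lemma measurable_Hg (hε : 0 < ε) (t₀ : ℝ) {g : Sp n → ℂ} (hg : Measurable g) :
    Measurable (Hg ε t₀ g) := by
  have m : Measurable fun z : (ℝ × Sp n) × Sp n => ker ε (t₀, z.2) z.1 * g z.2 :=
    ((measurable_ker hε).comp (((measurable_slice t₀).comp measurable_snd).prodMk
      measurable_fst)).mul (hg.comp measurable_snd)
  exact (StronglyMeasurable.integral_prod_right' m.stronglyMeasurable).measurable

/-- The homogeneous estimates, including the endpoint. -/
lemma hom_mixed (hn : 3 ≤ n) (hε : 0 < ε) (t₀ : ℝ) {g : Sp n → ℂ} (hg : Measurable g)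
    (ig : Integrable g) (h0 : 0 ≤ θ) (h1 : θ ≤ 1) :
    mixN θ (fun t => Lsq (cc n θ) fun x => Hg ε t₀ g (t, x)) ≤ C5 n * ∫⁻ x, ‖g x‖ₑ ^ 2 := by
  have mH := measurable_Hg hε t₀ hg
  have hN := Nt_slice_le hε t₀ hg ig
  refine mixN_interp h0 h1 (fun t x => Hg ε t₀ g (t, x)) mH _ (fun t => ?_) ?_
  · have mt : Measurable fun x => Hg ε t₀ g (t, x) := mH.comp measurable_prodMk_left
    rw [Lsq_half _ mt]
    refine (dual_slice _ mt ((4 * ∫⁻ x, ‖g x‖ₑ ^ 2) ^ (1 / 2 : ℝ)) fun f mf jf _ => ?_).trans ?_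
    · have := form_le hε (measurable_slice t₀) hg ig (measurable_slice t) mf jf
      refine this.trans ?_
      calc _ ≤ (2 * ∫⁻ x, ‖g x‖ₑ ^ 2) ^ (1 / 2 : ℝ) * (2 * ∫⁻ x, ‖f x‖ₑ ^ 2) ^ (1 / 2 : ℝ) :=
            mul_le_mul' (ENNReal.rpow_le_rpow hN (by norm_num))
              (ENNReal.rpow_le_rpow (Nt_slice_le hε t mf jf) (by norm_num))
        _ = _ := by
            rw [← ENNReal.mul_rpow_of_nonneg _ _ (by norm_num),
              ← ENNReal.mul_rpow_of_nonneg _ _ (by norm_num)]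
            congr 1
            ring
    · rw [sq, half_half, C5, add_mul]
      exact le_add_self
  · refine (dual_endpoint _ mH ((2 * C3 n * ∫⁻ x, ‖g x‖ₑ ^ 2) ^ (1 / 2 : ℝ))
      fun L d Fs hF => ?_).trans ?_
    · have := form_le hε (measurable_slice t₀) hg ig measurable_id hF.meas hF.int
      refine this.trans ?_
      calc _ ≤ (2 * ∫⁻ x, ‖g x‖ₑ ^ 2) ^ (1 / 2 : ℝ) * (C3 n * Es L d) ^ (1 / 2 : ℝ) :=
            mul_le_mul' (ENNReal.rpow_le_rpow hN (by norm_num))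
              (ENNReal.rpow_le_rpow (Nt_fam hn hε hF) (by norm_num))
        _ = _ := by
            rw [← ENNReal.mul_rpow_of_nonneg _ _ (by norm_num),
              ← ENNReal.mul_rpow_of_nonneg _ _ (by norm_num)]
            congr 1
            ring
    · rw [sq, half_half, C5, add_mul]
      refine le_trans (le_of_eq ?_) le_self_add
      ring

/-- The pairing of two sources is Hermitian. -/
lemma form_swap (hε : 0 < ε) {X₁ X₂ : Type*} [MeasurableSpace X₁] [MeasurableSpace X₂]
    {μ₁ : Measure X₁} {μ₂ : Measure X₂} [SFinite μ₁] [SFinite μ₂]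
    {p₁ : X₁ → ℝ × Sp n} (hp₁ : Measurable p₁) {F : X₁ → ℂ}
    (hF : Measurable F) (iF : Integrable F μ₁) {p₂ : X₂ → ℝ × Sp n} (hp₂ : Measurable p₂)
    {G : X₂ → ℂ} (hG : Measurable G) (iG : Integrable G μ₂) :
    ∫ y, conj (G y) * ∫ x, ker ε (p₁ x) (p₂ y) * F x ∂μ₁ ∂μ₂ =
      conj (∫ x, conj (F x) * ∫ y, ker ε (p₂ y) (p₁ x) * G y ∂μ₂ ∂μ₁) := by
  rw [form_eq hε hp₁ hF iF hp₂ hG iG, form_eq hε hp₂ hG iG hp₁ hF iF, ← integral_conj]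
  refine integral_congr_ae (Eventually.of_forall fun ξ => ?_)
  simp only [map_mul, Complex.conj_conj]
  ring

lemma enorm_conj_pair_le {X : Type*} [MeasurableSpace X] (μ : Measure X) (F u : X → ℂ) :
    ‖∫ p, conj (F p) * u p ∂μ‖ₑ ≤ ∫⁻ p, ‖F p‖ₑ * ‖u p‖ₑ ∂μ := by
  refine (enorm_integral_le_lintegral_enorm _).trans (le_of_eq (lintegral_congr fun p => ?_))
  rw [enorm_mul, RCLike.enorm_conj]

/-- The inhomogeneous estimates for the regularised flow with a time cut-off. -/
lemma inhom_mixed (hn : 3 ≤ n) (hε : 0 < ε) (hχ : IsCut χ) (hF : Measurable F)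
    (iF : Integrable F) (h0 : 0 ≤ θ) (h1 : θ ≤ 1) {θ' : ℝ} (h0' : 0 ≤ θ') (h1' : θ' ≤ 1) :
    mixN θ (fun t => Lsq (cc n θ) fun x => U ε χ F (t, x)) ≤
      C6 n * mixN (2 - θ') (fun t => Lsq (1 - cc n θ') fun x => F (t, x)) := by
  have mU := measurable_U hε hχ hF
  set B := mixN (2 - θ') (fun t => Lsq (1 - cc n θ') fun x => F (t, x)) with hB
  refine mixN_interp h0 h1 (fun t x => U ε χ F (t, x)) mU _ (fun t => ?_) ?_
  · have mt : Measurable fun x => U ε χ F (t, x) := mU.comp measurable_prodMk_left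
    rw [Lsq_half _ mt]
    refine (dual_slice _ mt ((C5 n * B) ^ (1 / 2 : ℝ)) fun g mg ig _ => ?_).trans ?_
    · have e := form_swap hε measurable_id (hχ.mul_meas hF t) (hχ.mul_int hF iF t)
        (measurable_slice t) mg ig
      change ‖∫ x, conj (g x) * ∫ p, ker ε (id p) (t, x) * ((χ p.1 t : ℂ) * F p)‖ₑ ≤ _
      rw [e, RCLike.enorm_conj]
      calc _ ≤ ∫⁻ p, ‖(χ p.1 t : ℂ) * F p‖ₑ * ‖Hg ε t g p‖ₑ := enorm_conj_pair_le _ _ _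
        _ ≤ ∫⁻ p, ‖F p‖ₑ * ‖Hg ε t g p‖ₑ := lintegral_mono fun p =>
            mul_le_mul' (enorm_le_iff_norm_le.2 (hχ.norm_mul_le t p)) le_rfl
        _ ≤ B ^ (1 / 2 : ℝ) * (C5 n * ∫⁻ x, ‖g x‖ₑ ^ 2) ^ (1 / 2 : ℝ) :=
            (pair_holder h0' h1' hF (measurable_Hg hε t mg)).trans (mul_le_mul' le_rfl
              (ENNReal.rpow_le_rpow (hom_mixed hn hε t mg ig h0' h1') (by norm_num)))
        _ = _ := by
            rw [← ENNReal.mul_rpow_of_nonneg _ _ (by norm_num),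
              ← ENNReal.mul_rpow_of_nonneg _ _ (by norm_num)]
            congr 1
            ring
    · rw [sq, half_half, C6, add_mul]
      exact le_self_add
  · refine (dual_endpoint _ mU ((C4 n * B) ^ (1 / 2 : ℝ)) fun L d Gs hG => ?_).trans ?_
    · change ‖Bf ε χ F (Sm L Gs)‖ₑ ≤ _
      rw [Bf_swap hε hχ hF iF hG.meas hG.int, RCLike.enorm_conj]
      calc _ ≤ ∫⁻ p, ‖F p‖ₑ * ‖U ε (fun s t => χ t s) (Sm L Gs) p‖ₑ := enorm_conj_pair_le _ _ _
        _ ≤ B ^ (1 / 2 : ℝ) * (C4 n * Es L d) ^ (1 / 2 : ℝ) :=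
            (pair_holder h0' h1' hF (measurable_U hε hχ.swap hG.meas)).trans (mul_le_mul' le_rfl
              (ENNReal.rpow_le_rpow (fam_mixed hn hε hχ.swap hG h0' h1') (by norm_num)))
        _ = _ := by
            rw [← ENNReal.mul_rpow_of_nonneg _ _ (by norm_num),
              ← ENNReal.mul_rpow_of_nonneg _ _ (by norm_num)]
            congr 1
            ring
    · rw [sq, half_half, C6, add_mul]
      refine le_trans (le_of_eq ?_) le_add_self
      ring

end

end

end Strich

namespace Strich

noncomputable section

open Set Filter Topology
open scoped ComplexConjugate

set_option linter.unusedSectionVars false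

variable {n : ℕ}

/-! ### Passage to the limit -/

lemma liminf_rpow {c : ℝ} (hc : 0 < c) (a : ℕ → ℝ≥0∞) :
    (liminf a atTop) ^ c = liminf (fun N => a N ^ c) atTop := by
  have := OrderIso.liminf_apply (ENNReal.orderIsoRpow c hc) (u := a) (f := atTop)
  simpa using this

/-- Fatou's lemma for the mixed functional, including the essential supremum at `θ = 0`. -/
lemma mixN_fatou {θ : ℝ} (h0 : 0 ≤ θ) {A : ℝ≥0∞} (gN : ℕ → ℝ → ℝ≥0∞)
    (mg : ∀ N, Measurable (gN N)) (hA : ∀ N, mixN θ (gN N) ≤ A) (g : ℝ → ℝ≥0∞)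
    (h : ∀ t, g t ≤ liminf (fun N => gN N t) atTop) : mixN θ g ≤ A := by
  unfold mixN at *
  by_cases e : θ = 0
  · simp only [e, if_true] at *
    have hb : ∀ᵐ t, ∀ N, gN N t ≤ A := ae_all_iff.2 fun N => by
      filter_upwards [ae_le_essSup (f := gN N) (μ := volume)] with t ht
      exact ht.trans (hA N)
    refine essSup_le_of_ae_le _ ?_
    filter_upwards [hb] with t ht
    exact (h t).trans (liminf_le_of_le (by isBoundedDefault) fun b hb => by
      obtain ⟨N, hN⟩ := hb.exists
      exact hN.trans (ht N))
  · have hθ : 0 < θ := lt_of_le_of_ne h0 (Ne.symm e)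
    have h1 : 0 < 1 / θ := by positivity
    simp only [e, if_false] at *
    have hA' : ∀ N, ∫⁻ t, gN N t ^ (1 / θ) ≤ A ^ (1 / θ) := fun N => by
      rw [one_div, ENNReal.le_rpow_inv_iff hθ]
      simpa using hA N
    have : ∫⁻ t, g t ^ (1 / θ) ≤ A ^ (1 / θ) := by
      calc _ ≤ ∫⁻ t, liminf (fun N => gN N t ^ (1 / θ)) atTop := lintegral_mono fun t => by
            rw [← liminf_rpow h1]
            exact ENNReal.rpow_le_rpow (h t) h1.le
        _ ≤ liminf (fun N => ∫⁻ t, gN N t ^ (1 / θ)) atTop :=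
            lintegral_liminf_le fun N => (mg N).pow_const _
        _ ≤ A ^ (1 / θ) := liminf_le_of_le (by isBoundedDefault) fun b hb => by
            obtain ⟨N, hN⟩ := hb.exists
            exact hN.trans (hA' N)
    calc _ ≤ (A ^ (1 / θ)) ^ θ := ENNReal.rpow_le_rpow this h0
      _ = A := by rw [← ENNReal.rpow_mul, one_div_mul_cancel hθ.ne', ENNReal.rpow_one]

/-- Mixed norms are lower semicontinuous along pointwise limits. The hypothesis `h` only asks for
`‖u‖ ≤ liminf ‖u_N‖`, so nothing is required where `u` vanishes. -/
lemma mixed_fatou {θ c : ℝ} (h0 : 0 ≤ θ) {A : ℝ≥0∞} (uN : ℕ → ℝ × Sp n → ℂ)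
    (mu : ∀ N, Measurable (uN N)) (hA : ∀ N, mixN θ (fun t => Lsq c fun x => uN N (t, x)) ≤ A)
    (u : ℝ → Sp n → ℂ)
    (h : ∀ t x a, 0 < a → a < ‖u t x‖ → ∀ᶠ N in atTop, a < ‖uN N (t, x)‖) :
    mixN θ (fun t => Lsq c (u t)) ≤ A := by
  refine mixN_fatou h0 (fun N t => Lsq c fun x => uN N (t, x))
    (fun N => measurable_Lsq (u := fun t x => uN N (t, x)) (mu N) c) hA _ fun t => ?_
  exact Lsq_fatou c (u t) (fun N x => uN N (t, x)) (fun N => (mu N).comp measurable_prodMk_left) (h t)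

/-- The time cut-off `1_{0 < s ≤ t} - 1_{t < s ≤ 0}` that turns `∫ s` into `∫ s in 0..t`. -/
def chi0 (s t : ℝ) : ℝ := (if 0 < s ∧ s ≤ t then 1 else 0) - (if t < s ∧ s ≤ 0 then 1 else 0)

lemma isCut_chi0 : IsCut chi0 := by
  constructor
  · refine Measurable.sub ?_ ?_
    · exact Measurable.ite ((measurableSet_lt measurable_const measurable_fst).inter
        (measurableSet_le measurable_fst measurable_snd)) measurable_const measurable_const
    · exact Measurable.ite ((measurableSet_lt measurable_snd measurable_fst).inter
        (measurableSet_le measurable_fst measurable_const)) measurable_const measurable_const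
  · intro s t
    unfold chi0
    split_ifs with h1 h2 h2
    · linarith [h1.1, h2.2]
    all_goals simp

lemma integral_chi0 (t : ℝ) (f : ℝ → ℂ) : ∫ s, (chi0 s t : ℂ) * f s = ∫ s in (0 : ℝ)..t, f s := by
  rcases le_total 0 t with h | h
  · rw [intervalIntegral.integral_of_le h, ← integral_indicator measurableSet_Ioc]
    refine integral_congr_ae (Eventually.of_forall fun s => ?_)
    by_cases hs : s ∈ Ioc 0 t
    · have : ¬ (t < s ∧ s ≤ 0) := fun h' => by linarith [hs.2, h'.1]
      simp only [indicator_of_mem hs, chi0, if_neg this, if_pos (show 0 < s ∧ s ≤ t from hs)]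
      simp
    · have : ¬ (t < s ∧ s ≤ 0) := fun h' => by linarith [h'.1, h'.2]
      simp only [indicator_of_notMem hs, chi0, if_neg this, if_neg (show ¬(0 < s ∧ s ≤ t) from hs)]
      simp
  · rw [intervalIntegral.integral_of_ge h, ← integral_indicator measurableSet_Ioc, ← integral_neg]
    refine integral_congr_ae (Eventually.of_forall fun s => ?_)
    by_cases hs : s ∈ Ioc t 0
    · have : ¬ (0 < s ∧ s ≤ t) := fun h' => by linarith [hs.2, h'.1]
      simp only [indicator_of_mem hs, chi0, if_neg this, if_pos (show t < s ∧ s ≤ 0 from hs)]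
      simp
    · have : ¬ (0 < s ∧ s ≤ t) := fun h' => by linarith [h'.1, h'.2]
      simp only [indicator_of_notMem hs, chi0, if_neg this, if_neg (show ¬(t < s ∧ s ≤ 0) from hs)]
      simp

/-- A normalisation: the modulated Fourier transform is the pairing with `osc`. -/
lemma fourier_osc (f : Sp n → ℂ) (s : ℝ) (ξ : Sp n) :
    ∫ y, osc ξ (s, y) * f y = Complex.exp ((s * ‖ξ‖ ^ 2 : ℝ) * Complex.I) * 𝓕 f ξ := by
  rw [Real.fourier_eq', ← integral_const_mul]
  refine integral_congr_ae (Eventually.of_forall fun y => ?_)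
  simp only [osc, smul_eq_mul]
  rw [← mul_assoc, ← Complex.exp_add]
  congr 2
  push_cast
  ring

/-- The free flow as an oscillatory integral, for arbitrary `f`: both sides involve the same
integrals, convergent or not. -/
lemma schrod_osc (f : Sp n → ℂ) (s t : ℝ) (x : Sp n) :
    schrod (t - s) f x = ∫ ξ, conj (osc ξ (t, x)) * ∫ y, osc ξ (s, y) * f y := by
  unfold schrod
  rw [Real.fourierInv_eq']
  refine integral_congr_ae (Eventually.of_forall fun ξ => ?_)
  simp only [fourier_osc, smul_eq_mul]
  simp only [osc, ← Complex.exp_conj]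
  rw [← mul_assoc, ← mul_assoc, ← Complex.exp_add, ← Complex.exp_add]
  congr 2
  simp only [map_mul, Complex.conj_I, Complex.conj_ofReal]
  rw [real_inner_comm]
  push_cast
  ring

end

end Strich

namespace Strich

noncomputable section

open Set Filter Topology
open scoped ComplexConjugate

set_option linter.unusedSectionVars false

variable {n : ℕ}

/-! ### Truncation of the source term -/

/-- The Fourier transform of `F s`, carried back to time zero: `e^{is|ξ|²} 𝓕(F s)(ξ)`. -/
def Pr (F : ℝ → Sp n → ℂ) (s : ℝ) (ξ : Sp n) : ℂ := ∫ y, osc ξ (s, y) * F s y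

/-- The times at most `N` in absolute value at which both `F` and its Fourier transform have `L¹`
norm at most `N`. -/
def good (F : ℝ → Sp n → ℂ) (N : ℕ) : Set ℝ :=
  {s | |s| ≤ N ∧ ∫⁻ y, ‖F s y‖ₑ ≤ N ∧ ∫⁻ ξ, ‖Pr F s ξ‖ₑ ≤ N}

/-- The restriction of `F` to the times in `good F N`. -/
def trunc (F : ℝ → Sp n → ℂ) (N : ℕ) : ℝ × Sp n → ℂ :=
  (Prod.fst ⁻¹' good F N).indicator (Function.uncurry F)

section

variable {F : ℝ → Sp n → ℂ} {N : ℕ}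

lemma measurable_Pr (hF : Measurable (Function.uncurry F)) :
    Measurable (Function.uncurry (Pr F)) := by
  refine measurable_integral_left (μ := volume)
    (Ψ := fun (z : ℝ × Sp n) y => osc z.2 (z.1, y) * F z.1 y) ?_
  exact (measurable_osc.comp (measurable_fst.snd.prodMk
    (measurable_fst.fst.prodMk measurable_snd))).mul
    (hF.comp (measurable_fst.fst.prodMk measurable_snd))

lemma measurable_F_slice (hF : Measurable (Function.uncurry F)) (s : ℝ) : Measurable (F s) :=
  hF.comp measurable_prodMk_left

lemma measurable_Pr_slice (hF : Measurable (Function.uncurry F)) (s : ℝ) : Measurable (Pr F s) :=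
  (measurable_Pr hF).of_uncurry_left

lemma measurableSet_good (hF : Measurable (Function.uncurry F)) : MeasurableSet (good F N) := by
  have e : good F N = {s | |s| ≤ (N : ℝ)} ∩
      ({s | ∫⁻ y, ‖F s y‖ₑ ≤ N} ∩ {s | ∫⁻ ξ, ‖Pr F s ξ‖ₑ ≤ N}) := rfl
  rw [e]
  refine (measurableSet_le continuous_abs.measurable measurable_const).inter
    ((measurableSet_le ?_ measurable_const).inter (measurableSet_le ?_ measurable_const))
  · exact Measurable.lintegral_prod_right' (f := fun z : ℝ × Sp n => ‖F z.1 z.2‖ₑ) hF.enorm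
  · exact Measurable.lintegral_prod_right' (f := fun z : ℝ × Sp n => ‖Pr F z.1 z.2‖ₑ)
      (measurable_Pr hF).enorm

lemma measurable_trunc (hF : Measurable (Function.uncurry F)) : Measurable (trunc F N) :=
  hF.indicator (measurable_fst (measurableSet_good hF))

lemma trunc_of_mem {s : ℝ} (hs : s ∈ good F N) (y : Sp n) : trunc F N (s, y) = F s y :=
  indicator_of_mem (show (s, y) ∈ Prod.fst ⁻¹' good F N from hs) _

lemma trunc_of_notMem {s : ℝ} (hs : s ∉ good F N) (y : Sp n) : trunc F N (s, y) = 0 :=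
  indicator_of_notMem (show (s, y) ∉ Prod.fst ⁻¹' good F N from hs) _

lemma integrable_slice (hF : Measurable (Function.uncurry F)) {s : ℝ} (hs : s ∈ good F N) :
    Integrable (F s) :=
  ⟨(measurable_F_slice hF s).aestronglyMeasurable,
    lt_of_le_of_lt hs.2.1 (ENNReal.natCast_lt_top N)⟩

lemma integrable_Pr (hF : Measurable (Function.uncurry F)) {s : ℝ} (hs : s ∈ good F N) :
    Integrable (Pr F s) :=
  ⟨(measurable_Pr_slice hF s).aestronglyMeasurable,
    lt_of_le_of_lt hs.2.2 (ENNReal.natCast_lt_top N)⟩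

lemma integral_norm_Pr_le (hF : Measurable (Function.uncurry F)) {s : ℝ} (hs : s ∈ good F N) :
    ∫ ξ, ‖Pr F s ξ‖ ≤ N := by
  rw [integral_norm_eq_lintegral_enorm (measurable_Pr_slice hF s).aestronglyMeasurable]
  exact ENNReal.toReal_le_of_le_ofReal (by positivity) (by simpa using hs.2.2)

lemma integrable_trunc (hF : Measurable (Function.uncurry F)) : Integrable (trunc F N) := by
  refine ⟨(measurable_trunc hF).aestronglyMeasurable, ?_⟩
  change ∫⁻ p, ‖trunc F N p‖ₑ ∂(volume.prod volume) < ∞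
  rw [lintegral_prod _ (measurable_trunc hF).enorm.aemeasurable]
  calc _ ≤ ∫⁻ s, (Icc (-(N : ℝ)) N).indicator (fun _ => (N : ℝ≥0∞)) s := by
        refine lintegral_mono fun s => ?_
        by_cases hs : s ∈ good F N
        · rw [indicator_of_mem (show s ∈ Icc (-(N : ℝ)) N from abs_le.1 hs.1)]
          simp only [trunc_of_mem hs]
          exact hs.2.1
        · simp [trunc_of_notMem hs]
    _ = N * volume (Icc (-(N : ℝ)) N) := by
        rw [lintegral_indicator measurableSet_Icc, setLIntegral_const]
    _ < ∞ := ENNReal.mul_lt_top (ENNReal.natCast_lt_top N) (by simp)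

/-! ### The regularised Duhamel integral in Fourier variables -/

/-- At a good time the regularised propagator is the Fourier integral of the exact one with a
Gaussian factor inserted. -/
lemma inner_eq {ε : ℝ} (hε : 0 < ε) (hF : Measurable (Function.uncurry F)) {s : ℝ}
    (hs : s ∈ good F N) (c : ℂ) (q : ℝ × Sp n) :
    ∫ y, ker ε (s, y) q * (c * F s y) =
      c * ∫ ξ, (rexp (-ε * ‖ξ‖ ^ 2) : ℂ) * (conj (osc ξ q) * Pr F s ξ) := by
  have := isFiniteMeasure_gw (n := n) hε
  rw [← integral_gw]
  have e := gram_inner (μ := (volume : Measure (Sp n))) (ν := gw n ε)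
    (Ψ := fun ξ y => osc ξ (s, y) * F s y)
    (h := fun y => ‖F s y‖)
    ((measurable_osc.comp (measurable_fst.prodMk (measurable_const.prodMk measurable_snd))).mul
      ((measurable_F_slice hF s).comp measurable_snd))
    (fun ξ y => by rw [norm_mul, norm_osc, one_mul]) (integrable_slice hF hs).norm
    (φ := fun ξ => conj (osc ξ q))
    (Complex.continuous_conj.measurable.comp
      (measurable_osc.comp (measurable_id.prodMk measurable_const))) 1
    (fun ξ => by rw [RCLike.norm_conj, norm_osc])
  calc _ = ∫ y, c * ∫ ξ, osc ξ (s, y) * F s y * conj (osc ξ q) ∂(gw n ε) := by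
        refine integral_congr_ae (Eventually.of_forall fun y => ?_)
        simp only [ker]
        rw [mul_left_comm, ← integral_mul_const]
        congr 2
        funext ξ
        ring
    _ = _ := by
        rw [integral_const_mul, e]
        congr 2
        funext ξ
        rw [mul_comm]
        rfl

/-- The truncated Duhamel integral. -/
def uN (F : ℝ → Sp n → ℂ) (N : ℕ) (q : ℝ × Sp n) : ℂ :=
  ∫ s in (0 : ℝ)..q.1, (good F N).indicator (fun s => schrod (q.1 - s) (F s) q.2) s

lemma tendsto_inner (hF : Measurable (Function.uncurry F)) {s : ℝ}
    (hs : s ∈ good F N) {ε : ℕ → ℝ} (h0 : ∀ k, 0 < ε k) (hε : Tendsto ε atTop (𝓝 0))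
    (t : ℝ) (x : Sp n) :
    Tendsto (fun k => ∫ ξ, (rexp (-ε k * ‖ξ‖ ^ 2) : ℂ) * (conj (osc ξ (t, x)) * Pr F s ξ)) atTop
      (𝓝 (schrod (t - s) (F s) x)) := by
  rw [schrod_osc]
  refine tendsto_integral_of_dominated_convergence (fun ξ => ‖Pr F s ξ‖) (fun k => ?_)
    (integrable_Pr hF hs).norm (fun k => Eventually.of_forall fun ξ => ?_)
    (Eventually.of_forall fun ξ => ?_)
  · refine (Measurable.mul (by fun_prop) (Measurable.mul
      (Complex.continuous_conj.measurable.comp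
      (measurable_osc.comp (measurable_id.prodMk measurable_const)))
      (measurable_Pr_slice hF s))).aestronglyMeasurable
  · rw [norm_mul, norm_mul, RCLike.norm_conj, norm_osc, one_mul, Complex.norm_real]
    refine mul_le_of_le_one_left (norm_nonneg _) ?_
    rw [Real.norm_eq_abs, Real.abs_exp, Real.exp_le_one_iff]
    have := mul_nonneg (h0 k).le (sq_nonneg ‖ξ‖)
    linarith
  · have : Tendsto (fun k => ((rexp (-ε k * ‖ξ‖ ^ 2) : ℝ) : ℂ)) atTop
        (𝓝 ((rexp (-0 * ‖ξ‖ ^ 2) : ℝ) : ℂ)) :=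
      ((Complex.continuous_ofReal.comp (by fun_prop : Continuous fun e : ℝ =>
        rexp (-e * ‖ξ‖ ^ 2))).tendsto 0).comp hε
    have := this.mul_const (conj (osc ξ (t, x)) * Pr F s ξ)
    simpa [Pr] using this

lemma norm_inner_le {ε : ℝ} (hε : 0 < ε) (hF : Measurable (Function.uncurry F)) {s : ℝ}
    (hs : s ∈ good F N) (q : ℝ × Sp n) :
    ‖∫ ξ, (rexp (-ε * ‖ξ‖ ^ 2) : ℂ) * (conj (osc ξ q) * Pr F s ξ)‖ ≤ N := by
  refine le_trans (norm_integral_le_of_norm_le (integrable_Pr hF hs).norm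
    (Eventually.of_forall fun ξ => ?_)) (integral_norm_Pr_le hF hs)
  rw [norm_mul, norm_mul, RCLike.norm_conj, norm_osc, one_mul, Complex.norm_real]
  refine mul_le_of_le_one_left (norm_nonneg _) ?_
  rw [Real.norm_eq_abs, Real.abs_exp, Real.exp_le_one_iff]
  have := mul_nonneg hε.le (sq_nonneg ‖ξ‖)
  linarith

/-- For the truncated source, the regularised Duhamel integral converges pointwise to the exact
one as `ε → 0`. -/
lemma tendsto_U (hF : Measurable (Function.uncurry F)) {ε : ℕ → ℝ} (h0 : ∀ k, 0 < ε k)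
    (hε : Tendsto ε atTop (𝓝 0)) (q : ℝ × Sp n) :
    Tendsto (fun k => U (ε k) chi0 (trunc F N) q) atTop (𝓝 (uN F N q)) := by
  obtain ⟨t, x⟩ := q
  have mT := measurable_trunc (N := N) hF
  have iT := integrable_trunc (N := N) hF
  have e : ∀ k, U (ε k) chi0 (trunc F N) (t, x) =
      ∫ s, ∫ y, ker (ε k) (s, y) (t, x) * ((chi0 s t : ℂ) * trunc F N (s, y)) := fun k =>
    integral_prod _ (int_U_integrand (h0 k) isCut_chi0 mT iT (t, x))
  simp_rw [e]
  unfold uN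
  rw [← integral_chi0]
  refine tendsto_integral_of_dominated_convergence
    ((Icc (-(N : ℝ)) N).indicator fun _ => (N : ℝ)) (fun k => ?_)
    ((integrable_indicator_iff measurableSet_Icc).2 (integrableOn_const (by simp)))
    (fun k => Eventually.of_forall fun s => ?_) (Eventually.of_forall fun s => ?_)
  · exact (int_U_integrand (h0 k) isCut_chi0 mT iT (t, x)).integral_prod_left.aestronglyMeasurable
  · by_cases hs : s ∈ good F N
    · simp only [trunc_of_mem hs]
      rw [inner_eq (h0 k) hF hs, indicator_of_mem (show s ∈ Icc (-(N : ℝ)) N from abs_le.1 hs.1),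
        norm_mul, Complex.norm_real]
      exact (mul_le_of_le_one_left (norm_nonneg _) (isCut_chi0.le_one _ _)).trans
        (norm_inner_le (h0 k) hF hs _)
    · simp only [trunc_of_notMem hs, mul_zero, integral_zero, norm_zero]
      exact indicator_nonneg (fun _ _ => by positivity) _
  · by_cases hs : s ∈ good F N
    · simp only [trunc_of_mem hs]
      rw [indicator_of_mem hs]
      simp_rw [fun k => inner_eq (h0 k) hF hs (chi0 s t : ℂ) (t, x)]
      exact (tendsto_inner hF hs h0 hε t x).const_mul _
    · simp [trunc_of_notMem hs, indicator_of_notMem hs]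

/-! ### Removal of the truncation -/

/-- A time lies in no good set only if `F s` or its Fourier transform is not integrable. Then one of
the integrals defining the propagator is zero by convention. -/
lemma schrod_eq_zero (hF : Measurable (Function.uncurry F)) {s : ℝ} (hs : ∀ N, s ∉ good F N)
    (t : ℝ) (x : Sp n) : schrod (t - s) (F s) x = 0 := by
  rw [schrod_osc]
  have mP := measurable_Pr_slice hF s
  by_cases h1 : Integrable (F s)
  · by_cases h2 : Integrable (Pr F s)
    · exfalso
      obtain ⟨N₁, h₁⟩ := exists_nat_ge |s|
      obtain ⟨N₂, h₂⟩ := ENNReal.exists_nat_gt h1.2.ne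
      obtain ⟨N₃, h₃⟩ := ENNReal.exists_nat_gt h2.2.ne
      refine hs (N₁ + N₂ + N₃) ⟨h₁.trans ?_, h₂.le.trans ?_, h₃.le.trans ?_⟩ <;>
      · norm_cast
        omega
    · refine integral_undef fun h => h2 ?_
      refine h.norm.mono' mP.aestronglyMeasurable (Eventually.of_forall fun ξ => le_of_eq ?_)
      rw [norm_mul, RCLike.norm_conj, norm_osc, one_mul]
      rfl
  · have : ∀ ξ, ∫ y, osc ξ (s, y) * F s y = 0 := fun ξ => by
      refine integral_undef fun h => h1 ?_
      refine h.norm.mono' (measurable_F_slice hF s).aestronglyMeasurable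
        (Eventually.of_forall fun y => le_of_eq ?_)
      rw [norm_mul, norm_osc, one_mul]
    simp [this]

lemma good_mono : Monotone (good F) := fun N M h s hs => by
  have h' : (N : ℝ) ≤ M := by exact_mod_cast h
  have h'' : (N : ℝ≥0∞) ≤ M := by exact_mod_cast h
  exact ⟨hs.1.trans h', hs.2.1.trans h'', hs.2.2.trans h''⟩

/-- The truncation is removed by dominated convergence, where the time integral converges. -/
lemma tendsto_uN (hF : Measurable (Function.uncurry F)) (t : ℝ) (x : Sp n)
    (hi : IntervalIntegrable (fun s => schrod (t - s) (F s) x) volume 0 t) :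
    Tendsto (fun N => uN F N (t, x)) atTop
      (𝓝 (∫ s in (0 : ℝ)..t, schrod (t - s) (F s) x)) := by
  refine intervalIntegral.tendsto_integral_filter_of_dominated_convergence
    (fun s => ‖schrod (t - s) (F s) x‖) (Eventually.of_forall fun N => ?_)
    (Eventually.of_forall fun N => Eventually.of_forall fun s _ => ?_) hi.norm
    (Eventually.of_forall fun s _ => ?_)
  · exact (intervalIntegrable_iff.1 hi).aestronglyMeasurable.indicator (measurableSet_good hF)
  · exact norm_indicator_le_norm_self _ _
  · by_cases h : ∃ N, s ∈ good F N
    · obtain ⟨N, hN⟩ := h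
      refine tendsto_const_nhds.congr' ?_
      filter_upwards [eventually_ge_atTop N] with M hM
      rw [indicator_of_mem (good_mono hM hN)]
    · push Not at h
      simp [indicator_of_notMem (h _), schrod_eq_zero hF h t x]

lemma measurable_uN (hF : Measurable (Function.uncurry F)) : Measurable (uN F N) := by
  have h0 : ∀ k : ℕ, (0 : ℝ) < 1 / ((k : ℝ) + 1) := fun k => by positivity
  exact measurable_of_tendsto_metrizable
    (fun k => measurable_U (h0 k) isCut_chi0 (measurable_trunc hF))
    (tendsto_pi_nhds.2 fun q => tendsto_U hF h0 tendsto_one_div_add_atTop_nhds_zero_nat q)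

/-- The retarded estimate in the form of a bound between the mixed functionals `mixN` of the
squared slice norms `Lsq`. -/
lemma retarded_mixed (hn : 3 ≤ n) (hF : Measurable (Function.uncurry F)) {θ θ' : ℝ} (h0 : 0 ≤ θ)
    (h1 : θ ≤ 1) (h0' : 0 ≤ θ') (h1' : θ' ≤ 1) (A : ℝ≥0∞)
    (hA : ∀ N, mixN (2 - θ') (fun t => Lsq (1 - cc n θ') fun x => trunc F N (t, x)) ≤ A) :
    mixN θ (fun t => Lsq (cc n θ) fun x => ∫ s in (0 : ℝ)..t, schrod (t - s) (F s) x) ≤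
      C6 n * A := by
  have hk : ∀ k : ℕ, (0 : ℝ) < 1 / ((k : ℝ) + 1) := fun k => by positivity
  have lt_lim {z : ℕ → ℂ} {w : ℂ} {a : ℝ} (h : Tendsto z atTop (𝓝 w)) (ha : a < ‖w‖) :
      ∀ᶠ N in atTop, a < ‖z N‖ := h.norm.eventually_const_lt ha
  -- the outer limit removes the truncation, the inner one the regularisation
  refine mixed_fatou h0 (uN F) (fun N => measurable_uN hF) (fun N => ?_) _ fun t x a ha hu => ?_
  · refine mixed_fatou h0 (fun k => U (1 / ((k : ℝ) + 1)) chi0 (trunc F N))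
      (fun k => measurable_U (hk k) isCut_chi0 (measurable_trunc hF)) (fun k => ?_)
      (fun t x => uN F N (t, x)) fun t x a _ hu => ?_
    · exact (inhom_mixed hn (hk k) isCut_chi0 (measurable_trunc hF) (integrable_trunc hF)
        h0 h1 h0' h1').trans (mul_le_mul' le_rfl (hA N))
    · exact lt_lim (tendsto_U hF hk tendsto_one_div_add_atTop_nhds_zero_nat (t, x)) hu
  -- where the time integral does not converge it is zero by convention
  · by_cases hi : IntervalIntegrable (fun s => schrod (t - s) (F s) x) volume 0 t
    · exact lt_lim (tendsto_uN hF t x hi) hu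
    · rw [intervalIntegral.integral_undef hi, norm_zero] at hu
      exact absurd hu ha.not_gt

end

end

end Strich

namespace Strich

noncomputable section

open Set Filter Topology
open scoped ComplexConjugate

set_option linter.unusedSectionVars false

variable {n : ℕ}

/-! ### Admissible exponents and Lorentz norms -/

/-- An admissible pair is parametrised by `θ = 2 / q ∈ [0, 1]`, and then `1 / r = 1 / 2 - θ / n`. -/
lemma admissible (hn : 3 ≤ n) {q r : ℝ≥0∞} (hq : 2 ≤ q)
    (hr : 2 ≤ r) (hr2 : r ≤ 2 * n / ((n : ℝ≥0∞) - 2)) (hadm : 2 / q + n / r = (n : ℝ≥0∞) / 2) :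
    ∃ θ : ℝ, 0 ≤ θ ∧ θ ≤ 1 ∧ (1 / q).toReal = θ / 2 ∧ (1 / r).toReal = cc n θ ∧
      1 / r.toReal = cc n θ := by
  have hn' : (3 : ℝ) ≤ n := by exact_mod_cast hn
  have hq0 : q ≠ 0 := (lt_of_lt_of_le (by norm_num) hq).ne'
  have hr0 : r ≠ 0 := (lt_of_lt_of_le (by norm_num) hr).ne'
  have hrt : r ≠ ∞ := by
    refine (lt_of_le_of_lt hr2 (ENNReal.div_lt_top (ENNReal.mul_ne_top (by simp) (by simp)) ?_)).ne
    exact (tsub_pos_of_lt (by exact_mod_cast (by omega : 2 < n))).ne'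
  have e := congrArg ENNReal.toReal hadm
  rw [ENNReal.toReal_add (ENNReal.div_ne_top (by simp) hq0)
    (ENNReal.div_ne_top (by simp) hr0), ENNReal.toReal_div, ENNReal.toReal_div,
    ENNReal.toReal_div] at e
  simp only [ENNReal.toReal_ofNat, ENNReal.toReal_natCast] at e
  have hle : 2 / q ≤ 1 := ENNReal.div_le_of_le_mul (by simpa using hq)
  have hle' : (2 / q).toReal ≤ 1 := ENNReal.toReal_le_of_le_ofReal (by norm_num) (by simpa using hle)
  rw [ENNReal.toReal_div, ENNReal.toReal_ofNat] at hle'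
  have hc : 1 / r.toReal = cc n (2 / q.toReal) := by
    have h : 1 / r.toReal = ((n : ℝ) / 2 - 2 / q.toReal) / n := by
      rw [eq_div_iff (by positivity), ← e]
      ring
    rw [h, cc, c0]
    field_simp
    ring
  refine ⟨2 / q.toReal, by positivity, hle', ?_, ?_, hc⟩
  · rw [ENNReal.toReal_div, ENNReal.toReal_one]
    ring
  · rw [ENNReal.toReal_div, ENNReal.toReal_one, hc]

lemma conj_exponent {q q' : ℝ≥0∞} (hq : 2 ≤ q) (h : 1 / q' = 1 - 1 / q) :
    1 / q'.toReal = 1 - (1 / q).toReal := by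
  have h1 : 1 / q ≤ 1 := ENNReal.div_le_of_le_mul (by
    rw [one_mul]; exact le_trans (by norm_num) hq)
  have e := congrArg ENNReal.toReal h
  rwa [ENNReal.toReal_sub_of_le h1 (by simp), ENNReal.toReal_div, ENNReal.toReal_one] at e

lemma timeLp_le_mixN {q : ℝ≥0∞} (hq : 2 ≤ q) {θ : ℝ} (hθ : (1 / q).toReal = θ / 2)
    {g G : ℝ → ℝ≥0∞} (h : ∀ t, g t ≤ G t ^ (1 / 2 : ℝ)) :
    timeLp q univ g ≤ mixN θ G ^ (1 / 2 : ℝ) := by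
  unfold timeLp mixN
  rw [Measure.restrict_univ]
  by_cases e : q = ∞
  · have hθ0 : θ = 0 := by
      rw [e] at hθ
      simp at hθ
      linarith
    rw [if_pos e, if_pos hθ0]
    refine essSup_le_of_ae_le _ ?_
    filter_upwards [ae_le_essSup (f := G) (μ := volume)] with t ht
    exact (h t).trans (ENNReal.rpow_le_rpow ht (by norm_num))
  · have hq0 : q ≠ 0 := (lt_of_lt_of_le (by norm_num) hq).ne'
    have hp : 0 < q.toReal := ENNReal.toReal_pos hq0 e
    rw [ENNReal.toReal_div, ENNReal.toReal_one] at hθ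
    have hθ' : θ = 2 / q.toReal := by
      rw [eq_comm, div_eq_mul_one_div, hθ]
      ring
    have hθ0 : θ ≠ 0 := by rw [hθ']; positivity
    rw [if_neg e, if_neg hθ0, ← ENNReal.rpow_mul]
    have e2 : θ * (1 / 2) = 1 / q.toReal := by rw [hθ]; ring
    rw [e2]
    refine ENNReal.rpow_le_rpow (lintegral_mono fun t => ?_) (by positivity)
    refine (ENNReal.rpow_le_rpow (h t) hp.le).trans (le_of_eq ?_)
    rw [← ENNReal.rpow_mul]
    congr 1
    rw [hθ']
    field_simp

lemma mixN_le_timeLp {q : ℝ≥0∞} {κ : ℝ} (hκ : 0 < κ) (hq : q ≠ ∞) (hqκ : 1 / q.toReal = κ / 2)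
    {g G : ℝ → ℝ≥0∞} (h : ∀ t, G t ^ (1 / 2 : ℝ) ≤ g t) :
    mixN κ G ≤ timeLp q univ g ^ 2 := by
  have hp : 0 < q.toReal := by
    have : 0 < 1 / q.toReal := by rw [hqκ]; positivity
    exact one_div_pos.1 this
  have hκ' : κ = 2 / q.toReal := by
    rw [eq_comm, div_eq_mul_one_div, hqκ]
    ring
  unfold timeLp mixN
  rw [Measure.restrict_univ, if_neg hq, if_neg hκ.ne', ← ENNReal.rpow_natCast, ← ENNReal.rpow_mul]
  have e2 : 1 / q.toReal * (2 : ℕ) = κ := by rw [hqκ]; push_cast; ring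
  rw [e2]
  refine ENNReal.rpow_le_rpow (lintegral_mono fun t => ?_) hκ.le
  refine le_trans (le_of_eq ?_) (ENNReal.rpow_le_rpow (h t) hp.le)
  rw [← ENNReal.rpow_mul]
  congr 1
  rw [hκ']
  field_simp

/-- At good times the slice is integrable and `Lsq` is the true Lorentz norm; at the others the
truncation vanishes. -/
lemma Lsq_trunc_le {F : ℝ → Sp n → ℂ} (hF : Measurable (Function.uncurry F)) (N : ℕ) (p c : ℝ)
    (hc : 1 / p = c) (t : ℝ) :
    (Lsq c fun x => trunc F N (t, x)) ^ (1 / 2 : ℝ) ≤ lorentz p 2 (F t) := by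
  subst hc
  by_cases ht : t ∈ good F N
  · simp only [trunc_of_mem ht]
    exact le_lorentz p (F t) (integrable_slice hF ht)
  · simp only [trunc_of_notMem ht]
    rw [Lsq_zero, ENNReal.zero_rpow_of_pos (by norm_num)]
    exact zero_le

end

end Strich

/-- Inhomogeneous (retarded) Strichartz estimate in Lorentz spaces (Keel–Tao). -/
theorem strichartz_retarded (n : ℕ) (hn : 3 ≤ n) (q r qt rt : ℝ≥0∞)
    (hq : 2 ≤ q) (hr : 2 ≤ r) (hr2 : r ≤ 2 * n / ((n : ℝ≥0∞) - 2))
    (hadm : 2 / q + n / r = (n : ℝ≥0∞) / 2)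
    (hqt : 2 ≤ qt) (hrt : 2 ≤ rt) (hrt2 : rt ≤ 2 * n / ((n : ℝ≥0∞) - 2))
    (hadmt : 2 / qt + n / rt = (n : ℝ≥0∞) / 2)
    (qt' rt' : ℝ≥0∞) (hq' : 1 / qt' = 1 - 1 / qt) (hr' : 1 / rt' = 1 - 1 / rt) :
    ∃ C > 0, ∀ F : ℝ → EuclideanSpace ℝ (Fin n) → ℂ,
      Measurable (Function.uncurry F) →
      timeLp q Set.univ
          (fun t => lorentz r.toReal 2 (fun x => ∫ τ in (0:ℝ)..t, schrod (t - τ) (F τ) x)) ≤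
        ENNReal.ofReal C * timeLp qt' Set.univ (fun τ => lorentz rt'.toReal 2 (F τ)) := by
  obtain ⟨θ, h0, h1, hθ, -, hrθ⟩ := Strich.admissible hn hq hr hr2 hadm
  obtain ⟨θ', h0', h1', hθ', hrθ', -⟩ := Strich.admissible hn hqt hrt hrt2 hadmt
  have eq' : 1 / qt'.toReal = (2 - θ') / 2 := by
    rw [Strich.conj_exponent hqt hq', hθ']
    ring
  have er' : 1 / rt'.toReal = 1 - Strich.cc n θ' := by
    rw [Strich.conj_exponent hrt hr', hrθ']
  have hqt'_top : qt' ≠ ∞ := by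
    rintro rfl
    simp at eq'
    linarith
  have hC := Strich.C6_ne_top hn
  have hC' : Strich.C6 n ^ (1 / 2 : ℝ) ≠ ∞ := ENNReal.rpow_ne_top_of_nonneg (by norm_num) hC
  refine ⟨(Strich.C6 n ^ (1 / 2 : ℝ)).toReal + 1, by positivity, fun F hF => ?_⟩
  set T := timeLp qt' Set.univ fun τ => lorentz rt'.toReal 2 (F τ)
  have key := Strich.retarded_mixed hn hF h0 h1 h0' h1' (T ^ 2) fun N =>
    Strich.mixN_le_timeLp (by linarith) hqt'_top eq' fun t => Strich.Lsq_trunc_le hF N _ _ er' t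
  calc _ ≤ _ := Strich.timeLp_le_mixN hq hθ fun t => by
        rw [← hrθ]
        exact Strich.lorentz_le _ _
    _ ≤ (Strich.C6 n * T ^ 2) ^ (1 / 2 : ℝ) := ENNReal.rpow_le_rpow key (by norm_num)
    _ = Strich.C6 n ^ (1 / 2 : ℝ) * T := by
        rw [ENNReal.mul_rpow_of_nonneg _ _ (by norm_num), ← ENNReal.rpow_natCast,
          ← ENNReal.rpow_mul]
        norm_num
    _ ≤ _ := by
        refine mul_le_mul' ?_ le_rfl
        refine (ENNReal.ofReal_toReal hC').symm.le.trans (ENNReal.ofReal_le_ofReal ?_)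
        linarith
end

section
/- Upper bound on the admissible nonlinearity power (equation (p3) of the derivation): let n ≥ 3 be an integer and p ≥ 2 a real number. Suppose there exists a real number α satisfying all of: 0 < α < n, (2p−3)α < (p−1)n + 2, (p−2)(2p−1)α < 2p², (p−1)n < (2p−1)α + 2, and (p−1)n < α + 2p. Then p < (5n − 4 + √(9n² − 8n + 16)) / (4(n−2)). -/
/-- Upper bound on the admissible nonlinearity power. -/
theorem power_upper_bound (n : ℕ) (hn : 3 ≤ n) (p : ℝ) (hp : 2 ≤ p)
    (h : ∃ α : ℝ, 0 < α ∧ α < n ∧ (2*p - 3) * α < (p - 1) * n + 2 ∧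
      (p - 2) * (2*p - 1) * α < 2 * p ^ 2 ∧
      (p - 1) * n < (2*p - 1) * α + 2 ∧ (p - 1) * n < α + 2*p) :
    p < (5 * n - 4 + Real.sqrt (9 * n ^ 2 - 8 * n + 16)) / (4 * (n - 2)) := by
  obtain ⟨α, -, -, -, h4, -, h6⟩ := h
  have hn' : (3 : ℝ) ≤ n := by exact_mod_cast hn
  -- Eliminating `α` between its lower bound `(p - 1) n - 2 p` and the bound `h4` leaves a cubic
  -- in `p` with the factor `p - 1 > 0`; the other factor is a quadratic whose larger root is the
  -- claimed bound.
  have hq : 2 * ((n : ℝ) - 2) * p ^ 2 - (5 * n - 4) * p + 2 * n < 0 := by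
    have hc : 0 ≤ (p - 2) * (2 * p - 1) := mul_nonneg (by linarith) (by linarith)
    have hα := mul_le_mul_of_nonneg_left (show (p - 1) * n - 2 * p ≤ α by linarith) hc
    have hcubic : (p - 1) * (2 * ((n : ℝ) - 2) * p ^ 2 - (5 * n - 4) * p + 2 * n) < 0 := by
      linarith
    exact (pos_iff_neg_of_mul_neg hcubic).mp (by linarith)
  rw [lt_div_iff₀ (by linarith)]
  -- Completing the square: `(4 (n - 2) p - (5 n - 4))² < 9 n² - 8 n + 16`.
  have hs : 4 * ((n : ℝ) - 2) * p - (5 * n - 4) < Real.sqrt (9 * n ^ 2 - 8 * n + 16) := by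
    apply Real.lt_sqrt_of_sq_lt
    have := mul_neg_of_pos_of_neg (show 0 < 8 * ((n : ℝ) - 2) by linarith) hq
    linarith
  linarith
end
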